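/- arXiv:1808.04805 — 3 statements merged into one kernel-verified Lean document; each statement's English description precedes it below -/
import Mathlib

section
/- Let k be a field, n ≥ 1 and d ≥ 1 natural numbers, and let I be a proper ideal of the polynomial ring k[x_1,…,x_n] generated by polynomials of total degree at most d. If I is prime up to (2nd)^(n³·2^(6n²)), then I is a prime ideal. -/
/-!
Write `P = k[x₁,…,xₙ]`. For `a ∉ I` of bounded degree, the polynomials `g` with `a * g ∈ I` are
entries of syzygies of `a` and the generators of `I`. By Hermann's method these are generated in
bounded degree, where primality puts the entry `g` into `I`: polynomials of bounded degree are zero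
or non-zero-divisors modulo `I`. For `n ≥ 2` the hypothesis is used only through this fact.

Choose a maximal set of variables independent modulo `I` up to a degree bound that shrinks as the
set grows, and let `R` be the polynomial ring in them. Each variable `xᵢ` satisfies a relation of
low degree over `R`, so a multiple `sᵢ xᵢ` with `sᵢ ∈ R` is a root of a monic polynomial over `R`.
Hence `P / I` is described, up to powers of the `sᵢ`, by vectors over `R` indexed by a box of
monomials. The relations among these monomials are spanned, up to torsion, by those of low degree,
so their maximal minors are non-zero-divisors. Thus `P / I` is torsion-free over `R` and embeds in
its generic fibre `A`, a finite algebra over `K = Frac R`.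

A linear form in the `sᵢ xᵢ` with coefficients of low degree satisfies an equation of low degree
over `R`. The values of its factors have low degree, so an irreducible factor already vanishes. With
enough such linear forms, `A` can have only one maximal ideal. In characteristic zero, irreducible
equations for generators make `A` reduced. In characteristic `p`, the elements with vanishing `p`-th
power are the solutions of a Frobenius-semilinear system; extracting `p`-th roots turns it into a
linear system of low degree, which has enough solutions of low degree, and these are nilpotent only
if they vanish. So `A` is a reduced artinian local ring, that is, a field. Without independent
variables, every element of `P / I` is represented in low degree and the first step suffices.
-/

namespace PrimeBound

open MvPolynomial

/-! ### Minors and Cramer's rule -/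

section Minor

variable {R ι κ m : Type*} [CommRing R] [Fintype m] [DecidableEq m]

/-- The minor of `A` with rows `f` and columns `g` is a *basic minor*: it does not vanish, and
through Cramer's rule its rows and columns determine the whole matrix. -/
structure IsBasicMinor (A : Matrix ι κ R) (f : m → ι) (g : m → κ) : Prop where
  det_ne_zero : (A.submatrix f g).det ≠ 0
  det_smul_eq : (A.submatrix f g).det • A =
    A.submatrix id g * (A.submatrix f g).adjugate * A.submatrix f id

theorem IsBasicMinor.transpose {A : Matrix ι κ R} {f : m → ι} {g : m → κ}
    (h : IsBasicMinor A f g) : IsBasicMinor A.transpose g f where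
  det_ne_zero := by
    rw [← Matrix.transpose_submatrix, Matrix.det_transpose]
    exact h.det_ne_zero
  det_smul_eq := by
    have := congrArg Matrix.transpose h.det_smul_eq
    simpa only [Matrix.transpose_smul, Matrix.transpose_mul, Matrix.transpose_submatrix,
      Matrix.adjugate_transpose, ← Matrix.mul_assoc, ← Matrix.det_transpose (A.submatrix f g)]
      using this

theorem IsBasicMinor.map {R' : Type*} [CommRing R'] {A : Matrix ι κ R} {f : m → ι} {g : m → κ}
    (h : IsBasicMinor A f g) {φ : R →+* R'} (hφ : Function.Injective φ) :
    IsBasicMinor (A.map φ) f g := by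
  have hsub : (A.map φ).submatrix f g = φ.mapMatrix (A.submatrix f g) := rfl
  refine ⟨?_, ?_⟩
  · rw [hsub, ← RingHom.map_det]
    exact (map_ne_zero_iff φ hφ).mpr h.det_ne_zero
  · have hsmul : ((A.submatrix f g).det • A).map φ = φ (A.submatrix f g).det • A.map φ :=
      Matrix.map_smulₛₗ _ φ _ (map_mul φ _) A
    rw [hsub, ← RingHom.map_det, ← RingHom.map_adjugate, ← hsmul, h.det_smul_eq, Matrix.map_mul,
      Matrix.map_mul]
    rfl

theorem injective_of_det_submatrix_ne_zero {A : Matrix ι κ R} {f : m → ι} {g : m → κ}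
    (h : (A.submatrix f g).det ≠ 0) : Function.Injective f := by
  intro a b hab
  by_contra hne
  exact h (Matrix.det_zero_of_row_eq hne (by funext x; simp [hab]))

/-- The null vector of the vanishing bordered minor ends in a nonzero entry, and Cramer's rule
determines its other entries from this one. -/
theorem det_submatrix_mul_eq_of_det_snoc_eq_zero [IsDomain R] {A : Matrix ι κ R} {ρ : ℕ}
    {f : Fin ρ → ι} {g : Fin ρ → κ} (hdet : (A.submatrix f g).det ≠ 0) {i : ι} {j : κ}
    (hsnoc : (A.submatrix (Fin.snoc f i : Fin (ρ + 1) → ι) (Fin.snoc g j)).det = 0) :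
    (A.submatrix f g).det * A i j =
      (fun l ↦ A i (g l)) ⬝ᵥ ((A.submatrix f g).adjugate.mulVec fun l ↦ A (f l) j) := by
  obtain ⟨v, hv, hv0⟩ := Matrix.exists_mulVec_eq_zero_iff.mpr hsnoc
  set B := A.submatrix f g with hB
  set u : Fin ρ → R := fun l ↦ v l.castSucc with hu
  set t := v (Fin.last ρ)
  have hrows : B.mulVec u = -(t • fun l ↦ A (f l) j) := by
    funext l
    have := congrFun hv0 l.castSucc
    simp only [Matrix.mulVec, dotProduct, Fin.sum_univ_castSucc, Matrix.submatrix_apply,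
      Fin.snoc_castSucc, Fin.snoc_last, Pi.zero_apply] at this
    simpa [hB, hu, Matrix.mulVec, dotProduct, mul_comm t] using eq_neg_of_add_eq_zero_left this
  have hlastRow : (fun l ↦ A i (g l)) ⬝ᵥ u + A i j * t = 0 := by
    simpa [Matrix.mulVec, dotProduct, Fin.sum_univ_castSucc] using congrFun hv0 (Fin.last ρ)
  have hcramer : B.det • u = -(t • B.adjugate.mulVec fun l ↦ A (f l) j) := by
    have := congrArg B.adjugate.mulVec hrows
    rwa [Matrix.mulVec_mulVec, Matrix.adjugate_mul, Matrix.smul_mulVec, Matrix.one_mulVec,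
      Matrix.mulVec_neg, Matrix.mulVec_smul] at this
  have ht : t ≠ 0 := by
    intro ht
    rw [ht, zero_smul, neg_zero, smul_eq_zero_iff_right hdet] at hcramer
    exact hv (funext (Fin.lastCases ht (congrFun hcramer)))
  have hdot := congrArg ((fun l ↦ A i (g l)) ⬝ᵥ ·) hcramer
  simp only [dotProduct_smul, dotProduct_neg, smul_eq_mul] at hdot
  exact mul_right_cancel₀ ht (by linear_combination B.det * hlastRow - hdot)

theorem exists_isBasicMinor_of_finite_rows [IsDomain R] [Fintype ι] (A : Matrix ι κ R) :
    ∃ ρ ≤ Fintype.card ι, ∃ (f : Fin ρ → ι) (g : Fin ρ → κ), IsBasicMinor A f g := by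
  classical
  let p : ℕ → Prop := fun ρ ↦ ∃ (f : Fin ρ → ι) (g : Fin ρ → κ), (A.submatrix f g).det ≠ 0
  have hcard : ∀ ρ, p ρ → ρ ≤ Fintype.card ι := fun ρ ⟨_, _, h⟩ ↦ by
    simpa using Fintype.card_le_of_injective _ (injective_of_det_submatrix_ne_zero h)
  obtain ⟨f, g, hfg⟩ : p (Nat.findGreatest p (Fintype.card ι)) :=
    Nat.findGreatest_spec (Nat.zero_le _) ⟨Fin.elim0, Fin.elim0, by simp⟩
  refine ⟨_, hcard _ ⟨f, g, hfg⟩, f, g, hfg, ?_⟩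
  ext i j
  have hsnoc : (A.submatrix (Fin.snoc f i : Fin (_ + 1) → ι) (Fin.snoc g j)).det = 0 := by
    by_contra h
    have hp : p _ := ⟨_, _, h⟩
    exact (Nat.lt_succ_self _).not_ge (Nat.le_findGreatest (hcard _ hp) hp)
  rw [Matrix.mul_assoc]
  exact det_submatrix_mul_eq_of_det_snoc_eq_zero hfg hsnoc

theorem exists_isBasicMinor_of_finite_columns [IsDomain R] [Fintype κ] (A : Matrix ι κ R) :
    ∃ ρ ≤ Fintype.card κ, ∃ (f : Fin ρ → ι) (g : Fin ρ → κ), IsBasicMinor A f g := by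
  obtain ⟨ρ, hρ, g, f, h⟩ := exists_isBasicMinor_of_finite_rows A.transpose
  exact ⟨ρ, hρ, f, g, h.transpose⟩

section Kernel

variable [Fintype κ] [DecidableEq κ] {A : Matrix ι κ R} {f : m → ι} {g : m → κ}

/-- The matrix whose columns are the elements of the kernel of `A` given by Cramer's rule on the
minor with rows `f` and columns `g`. -/
def cramerKernel (A : Matrix ι κ R) (f : m → ι) (g : m → κ) : Matrix κ κ R :=
  (A.submatrix f g).det • 1 -
    (1 : Matrix κ κ R).submatrix id g * (A.submatrix f g).adjugate * A.submatrix f id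

theorem IsBasicMinor.mul_cramerKernel (h : IsBasicMinor A f g) : A * cramerKernel A f g = 0 := by
  have hcol : A * (1 : Matrix κ κ R).submatrix id g = A.submatrix id g := by
    ext i l
    simp [Matrix.mul_apply, Matrix.one_apply]
  rw [cramerKernel, Matrix.mul_sub, Matrix.mul_smul, Matrix.mul_one, ← Matrix.mul_assoc,
    ← Matrix.mul_assoc, hcol, h.det_smul_eq, sub_self]

theorem IsBasicMinor.mulVec_cramerKernel_col (h : IsBasicMinor A f g) (j : κ) :
    A.mulVec ((cramerKernel A f g).col j) = 0 := by
  funext i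
  exact congrFun (congrFun h.mul_cramerKernel i) j

theorem cramerKernel_mulVec (A : Matrix ι κ R) (f : m → ι) (g : m → κ) (v : κ → R) :
    (cramerKernel A f g).mulVec v = (A.submatrix f g).det • v -
      ((1 : Matrix κ κ R).submatrix id g).mulVec
        ((A.submatrix f g).adjugate.mulVec (A.mulVec v ∘ f)) := by
  rw [cramerKernel, Matrix.sub_mulVec, Matrix.smul_mulVec, Matrix.one_mulVec,
    ← Matrix.mulVec_mulVec, ← Matrix.mulVec_mulVec]
  rfl

theorem cramerKernel_mulVec_eq_det_smul {v : κ → R} (hv : A.mulVec v = 0) :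
    (cramerKernel A f g).mulVec v = (A.submatrix f g).det • v := by
  rw [cramerKernel_mulVec, hv, Pi.zero_comp, Matrix.mulVec_zero, Matrix.mulVec_zero, sub_zero]

omit [Fintype κ] in
theorem map_cramerKernel {R' : Type*} [CommRing R'] (φ : R →+* R') (A : Matrix ι κ R)
    (f : m → ι) (g : m → κ) : cramerKernel (A.map φ) f g = (cramerKernel A f g).map φ := by
  have hsub : (A.map φ).submatrix f g = φ.mapMatrix (A.submatrix f g) := rfl
  have hone : (1 : Matrix κ κ R').submatrix id g = ((1 : Matrix κ κ R).submatrix id g).map φ := by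
    rw [← Matrix.submatrix_map, Matrix.map_one φ (map_zero φ) (map_one φ)]
  rw [cramerKernel, cramerKernel, Matrix.map_sub _ (map_sub φ), Matrix.map_mul, Matrix.map_mul,
    Matrix.map_smul' _ _ _ (map_mul φ), Matrix.map_one φ (map_zero φ) (map_one φ), hsub,
    ← RingHom.map_det, ← RingHom.map_adjugate, hone]
  rfl

end Kernel

section Cokernel

variable [Fintype ι] [DecidableEq ι] {A : Matrix ι κ R} {f : m → ι} {g : m → κ}

/-- The matrix whose kernel, when the minor of `A` with rows `f` and columns `g` is basic, is the
saturation of the column space of `A`. -/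
def cramerCokernel (A : Matrix ι κ R) (f : m → ι) (g : m → κ) : Matrix ι ι R :=
  (A.submatrix f g).det • 1 -
    A.submatrix id g * (A.submatrix f g).adjugate * (1 : Matrix ι ι R).submatrix f id

theorem cramerCokernel_mulVec (A : Matrix ι κ R) (f : m → ι) (g : m → κ) (v : ι → R) :
    (cramerCokernel A f g).mulVec v = (A.submatrix f g).det • v -
      ∑ l, (A.submatrix f g).adjugate.mulVec (v ∘ f) l • A.col (g l) := by
  have hrow : ((1 : Matrix ι ι R).submatrix f id).mulVec v = v ∘ f := by
    funext l
    simp [Matrix.mulVec, dotProduct, Matrix.one_apply]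
  rw [cramerCokernel, Matrix.sub_mulVec, Matrix.smul_mulVec, Matrix.one_mulVec,
    ← Matrix.mulVec_mulVec, ← Matrix.mulVec_mulVec, hrow, Matrix.mulVec_eq_sum]
  simp only [op_smul_eq_smul]
  rfl

theorem IsBasicMinor.cramerCokernel_mul (h : IsBasicMinor A f g) :
    cramerCokernel A f g * A = 0 := by
  have hrow : (1 : Matrix ι ι R).submatrix f id * A = A.submatrix f id := by
    ext l j
    simp [Matrix.mul_apply, Matrix.one_apply]
  rw [cramerCokernel, Matrix.sub_mul, Matrix.smul_mul, Matrix.one_mul, Matrix.mul_assoc, hrow,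
    h.det_smul_eq, sub_self]

theorem IsBasicMinor.cramerCokernel_mulVec_eq_zero [IsDomain R] (h : IsBasicMinor A f g)
    {v : ι → R} {t : R} (ht : t ≠ 0) (hv : t • v ∈ Submodule.span R (Set.range A.col)) :
    (cramerCokernel A f g).mulVec v = 0 := by
  have hspan : Submodule.span R (Set.range A.col) ≤
      LinearMap.ker (cramerCokernel A f g).mulVecLin := by
    rw [Submodule.span_le]
    rintro _ ⟨j, rfl⟩
    funext i
    exact congrFun (congrFun h.cramerCokernel_mul i) j
  have := hspan hv
  rwa [LinearMap.mem_ker, map_smul, smul_eq_zero_iff_right ht, Matrix.mulVecLin_apply] at this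

end Cokernel

end Minor

/-! ### Degree estimates -/

/-- The properties shared by the total degree of multivariate polynomials and the `natDegree` of
univariate ones from which the degrees of determinants are estimated. -/
structure IsDegreeLike {R : Type*} [CommRing R] (δ : R → ℕ) : Prop where
  map_zero : δ 0 = 0
  map_one : δ 1 = 0
  map_neg (x : R) : δ (-x) = δ x
  map_add_le (x y : R) : δ (x + y) ≤ max (δ x) (δ y)
  map_mul_le (x y : R) : δ (x * y) ≤ δ x + δ y

theorem isDegreeLike_totalDegree (σ R : Type*) [CommRing R] :
    IsDegreeLike (totalDegree : MvPolynomial σ R → ℕ) where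
  map_zero := totalDegree_zero
  map_one := totalDegree_one
  map_neg := totalDegree_neg
  map_add_le := totalDegree_add
  map_mul_le := totalDegree_mul

theorem isDegreeLike_natDegree (R : Type*) [CommRing R] :
    IsDegreeLike (Polynomial.natDegree : Polynomial R → ℕ) where
  map_zero := Polynomial.natDegree_zero
  map_one := Polynomial.natDegree_one
  map_neg := Polynomial.natDegree_neg
  map_add_le := Polynomial.natDegree_add_le
  map_mul_le _ _ := Polynomial.natDegree_mul_le

namespace IsDegreeLike

variable {R : Type*} [CommRing R] {δ : R → ℕ} (hδ : IsDegreeLike δ) {x y : R} {a b : ℕ}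

include hδ

theorem add_le (hx : δ x ≤ a) (hy : δ y ≤ a) : δ (x + y) ≤ a :=
  (hδ.map_add_le x y).trans (max_le hx hy)

theorem sub_le (hx : δ x ≤ a) (hy : δ y ≤ a) : δ (x - y) ≤ a := by
  rw [sub_eq_add_neg]
  exact hδ.add_le hx ((hδ.map_neg y).trans_le hy)

theorem mul_le (hx : δ x ≤ a) (hy : δ y ≤ b) : δ (x * y) ≤ a + b :=
  (hδ.map_mul_le x y).trans (add_le_add hx hy)

theorem sum_le {ι : Type*} {s : Finset ι} {f : ι → R} (h : ∀ i ∈ s, δ (f i) ≤ a) :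
    δ (∑ i ∈ s, f i) ≤ a :=
  Finset.sum_induction f (δ · ≤ a) (fun _ _ ↦ hδ.add_le) (hδ.map_zero.trans_le a.zero_le) h

theorem prod_le {ι : Type*} {s : Finset ι} {f : ι → R} {a : ι → ℕ} (h : ∀ i ∈ s, δ (f i) ≤ a i) :
    δ (∏ i ∈ s, f i) ≤ ∑ i ∈ s, a i := by
  classical
  induction s using Finset.induction_on with
  | empty => simp [hδ.map_one]
  | insert i s hi ih =>
    rw [Finset.prod_insert hi, Finset.sum_insert hi]
    exact hδ.mul_le (h i (s.mem_insert_self i)) (ih fun j hj ↦ h j (Finset.mem_insert_of_mem hj))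

theorem pow_le (hx : δ x ≤ a) (l : ℕ) : δ (x ^ l) ≤ l * a := by
  simpa using hδ.prod_le (s := Finset.range l) (f := fun _ ↦ x) fun _ _ ↦ hx

theorem one_apply_le {ι : Type*} [DecidableEq ι] (i j : ι) : δ ((1 : Matrix ι ι R) i j) ≤ 0 := by
  rw [Matrix.one_apply]
  split_ifs
  exacts [hδ.map_one.le, hδ.map_zero.le]

theorem matrix_mul_le {l m n : Type*} [Fintype m] {M : Matrix l m R} {N : Matrix m n R}
    (hM : ∀ i j, δ (M i j) ≤ a) (hN : ∀ i j, δ (N i j) ≤ b) (i : l) (j : n) :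
    δ ((M * N) i j) ≤ a + b :=
  hδ.sum_le fun _ _ ↦ hδ.mul_le (hM _ _) (hN _ _)

theorem mulVec_le {l m : Type*} [Fintype m] {M : Matrix l m R} {v : m → R}
    (hM : ∀ i j, δ (M i j) ≤ a) (hv : ∀ j, δ (v j) ≤ b) (i : l) : δ (M.mulVec v i) ≤ a + b :=
  hδ.sum_le fun _ _ ↦ hδ.mul_le (hM _ _) (hv _)

section Det

variable {m : Type*} [Fintype m] [DecidableEq m]

theorem det_le {B : Matrix m m R} (hB : ∀ i j, δ (B i j) ≤ a) :
    δ B.det ≤ Fintype.card m * a := by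
  rw [Matrix.det_apply]
  refine hδ.sum_le fun τ _ ↦ ?_
  have hprod : δ (∏ i, B (τ i) i) ≤ Fintype.card m * a := by
    simpa using hδ.prod_le (s := Finset.univ) fun i _ ↦ hB (τ i) i
  rcases Int.units_eq_one_or (Equiv.Perm.sign τ) with h | h
  · simpa [h] using hprod
  · simpa [h, hδ.map_neg] using hprod

theorem adjugate_le {B : Matrix m m R} (hB : ∀ i j, δ (B i j) ≤ a) (i j : m) :
    δ (B.adjugate i j) ≤ Fintype.card m * a := by
  rw [Matrix.adjugate_apply]
  refine hδ.det_le fun r s ↦ ?_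
  rw [Matrix.updateRow_apply, Pi.single_apply]
  split_ifs
  exacts [hδ.map_one.trans_le a.zero_le, hδ.map_zero.trans_le a.zero_le, hB r s]

variable {ι κ : Type*} {A : Matrix ι κ R}

theorem cramerKernel_le [DecidableEq κ] (hA : ∀ i j, δ (A i j) ≤ a) (f : m → ι) (g : m → κ)
    (i j : κ) : δ (cramerKernel A f g i j) ≤ (Fintype.card m + 1) * a := by
  have hcorr := hδ.matrix_mul_le (hδ.matrix_mul_le
    (M := (1 : Matrix κ κ R).submatrix id g) (fun _ _ ↦ hδ.one_apply_le _ _)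
    (hδ.adjugate_le (B := A.submatrix f g) fun _ _ ↦ hA _ _))
    (N := A.submatrix f id) (fun _ _ ↦ hA _ _) i j
  have hdet := hδ.mul_le (hδ.det_le (B := A.submatrix f g) fun _ _ ↦ hA _ _)
    (hδ.one_apply_le i j)
  rw [add_one_mul]
  exact hδ.sub_le (hdet.trans (by omega)) (hcorr.trans (by omega))

theorem cramerCokernel_le [DecidableEq ι] (hA : ∀ i j, δ (A i j) ≤ a) (f : m → ι) (g : m → κ)
    (i j : ι) : δ (cramerCokernel A f g i j) ≤ (Fintype.card m + 1) * a := by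
  have hcorr := hδ.matrix_mul_le (hδ.matrix_mul_le
    (M := A.submatrix id g) (fun _ _ ↦ hA _ _)
    (hδ.adjugate_le (B := A.submatrix f g) fun _ _ ↦ hA _ _))
    (N := (1 : Matrix ι ι R).submatrix f id) (fun _ _ ↦ hδ.one_apply_le _ _) i j
  have hdet := hδ.mul_le (hδ.det_le (B := A.submatrix f g) fun _ _ ↦ hA _ _)
    (hδ.one_apply_le i j)
  rw [add_one_mul]
  exact hδ.sub_le (hdet.trans (by omega)) (hcorr.trans (by omega))

end Det

end IsDegreeLike

theorem totalDegree_X_pow_le {σ R : Type*} [CommRing R] (i : σ) (l : ℕ) :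
    (X i ^ l : MvPolynomial σ R).totalDegree ≤ l := by
  rw [X_pow_eq_monomial]
  exact (totalDegree_monomial_le _ _).trans (by simp)

theorem totalDegree_algHom_le {σ τ R : Type*} [CommRing R]
    (φ : MvPolynomial σ R →ₐ[R] MvPolynomial τ R) {w : ℕ} (hφ : ∀ i, (φ (X i)).totalDegree ≤ w)
    (p : MvPolynomial σ R) : (φ p).totalDegree ≤ p.totalDegree * w := by
  have hdeg := isDegreeLike_totalDegree τ R
  conv_lhs => rw [p.as_sum, map_sum]
  refine hdeg.sum_le fun v hv ↦ ?_
  rw [monomial_eq, map_mul, Finsupp.prod, map_prod, algHom_C]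
  have hprod : (∏ i ∈ v.support, φ (X i ^ v i)).totalDegree ≤ ∑ i ∈ v.support, v i * w :=
    hdeg.prod_le fun i _ ↦ (congrArg totalDegree (map_pow φ (X i) (v i))).trans_le
      (hdeg.pow_le (hφ i) (v i))
  refine (hdeg.mul_le (totalDegree_C _).le hprod).trans ?_
  rw [zero_add, ← Finset.sum_mul]
  exact Nat.mul_le_mul_right _ (le_totalDegree hv)

/-! ### A shear making a polynomial monic -/

section Shear

theorem injOn_sum_mul_pow (n w : ℕ) :
    Set.InjOn (fun v : Fin n →₀ ℕ ↦ ∑ i, v i * w ^ i.1) {v | ∀ i, v i < w} := by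
  intro u hu v hv h
  have := finFunctionFinEquiv.injective (a₁ := fun i ↦ ⟨u i, hu i⟩) (a₂ := fun i ↦ ⟨v i, hv i⟩)
    (Fin.ext (by simpa only [finFunctionFinEquiv_apply] using h))
  exact Finsupp.ext fun i ↦ congrArg Fin.val (congrFun this i)

theorem exists_leadingCoeff_sum_eq {R ι : Type*} [Semiring R] {s : Finset ι} (hs : s.Nonempty)
    {f : ι → Polynomial R} (h0 : ∀ i ∈ s, f i ≠ 0)
    (hinj : Set.InjOn (fun i ↦ (f i).natDegree) s) :
    ∃ i ∈ s, (∑ i ∈ s, f i).leadingCoeff = (f i).leadingCoeff := by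
  classical
  obtain ⟨i, hi, hmax⟩ := s.exists_max_image (fun i ↦ (f i).natDegree) hs
  refine ⟨i, hi, ?_⟩
  rw [← Finset.sum_erase_add s f hi]
  refine Polynomial.leadingCoeff_add_of_degree_lt ?_
  refine (Polynomial.degree_sum_le _ _).trans_lt ((Finset.sup_lt_iff ?_).mpr fun j hj ↦ ?_)
  · exact Ne.bot_lt fun h ↦ h0 i hi (Polynomial.degree_eq_bot.mp h)
  · have hjs := Finset.mem_of_mem_erase hj
    exact Polynomial.degree_lt_degree ((hmax j hjs).lt_of_ne fun h ↦
      Finset.ne_of_mem_erase hj (hinj hjs hi h))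

variable {R : Type*} [CommRing R] {n : ℕ}

/-- The endomorphism `x₀ ↦ x₀`, `xᵢ ↦ xᵢ + c x₀ ^ (w ^ i)` of `R[x₀,…,xₙ]`. -/
noncomputable def shear (w : ℕ) (c : R) :
    MvPolynomial (Fin (n + 1)) R →ₐ[R] MvPolynomial (Fin (n + 1)) R :=
  aeval (Fin.cons (X 0) fun i ↦ X i.succ + C c * X 0 ^ w ^ (i.1 + 1))

theorem shear_comp_shear_neg (w : ℕ) (c : R) :
    (shear (n := n) w c).comp (shear w (-c)) = AlgHom.id R _ := by
  refine algHom_ext (Fin.cases ?_ fun i ↦ ?_) <;> simp [shear]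

theorem totalDegree_shear_le {w : ℕ} (hw : 1 ≤ w) (c : R) (p : MvPolynomial (Fin (n + 1)) R) :
    (shear w c p).totalDegree ≤ p.totalDegree * w ^ n := by
  have hdeg := isDegreeLike_totalDegree (Fin (n + 1)) R
  have hpos : 1 ≤ w ^ n := Nat.one_le_pow _ _ hw
  refine totalDegree_algHom_le _ (Fin.cases ?_ fun i ↦ ?_) p
  · simpa [shear] using (totalDegree_X_pow_le (R := R) 0 1).trans hpos
  · simp only [shear, aeval_X, Fin.cons_succ]
    refine hdeg.add_le (by simpa using (totalDegree_X_pow_le i.succ 1).trans hpos)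
      ((hdeg.mul_le (totalDegree_C c).le (totalDegree_X_pow_le 0 _)).trans ?_)
    rw [zero_add]
    exact Nat.pow_le_pow_right hw i.2

/-- The shear with `c = 1`, followed by the identification of `R[x₀,…,xₙ]` with the polynomials in
`x₀` over `R[x₁,…,xₙ]`. -/
noncomputable def shearEquiv (R : Type*) [CommRing R] (n w : ℕ) :
    MvPolynomial (Fin (n + 1)) R ≃ₐ[R] Polynomial (MvPolynomial (Fin n) R) :=
  (AlgEquiv.ofAlgHom (shear w 1) (shear w (-1)) (shear_comp_shear_neg w 1)
    (by simpa using shear_comp_shear_neg w (-1 : R))).trans (finSuccEquiv R n)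

theorem shearEquiv_apply (w : ℕ) (p : MvPolynomial (Fin (n + 1)) R) :
    shearEquiv R n w p = finSuccEquiv R n (shear w 1 p) := rfl

theorem natDegree_shearEquiv_le {w : ℕ} (hw : 1 ≤ w) (p : MvPolynomial (Fin (n + 1)) R) :
    (shearEquiv R n w p).natDegree ≤ p.totalDegree * w ^ n := by
  rw [shearEquiv_apply, natDegree_finSuccEquiv]
  exact (degreeOf_le_totalDegree _ _).trans (totalDegree_shear_le hw 1 p)

theorem totalDegree_coeff_shearEquiv_le {w : ℕ} (hw : 1 ≤ w) (p : MvPolynomial (Fin (n + 1)) R)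
    (m : ℕ) : ((shearEquiv R n w p).coeff m).totalDegree ≤ p.totalDegree * w ^ n := by
  rw [shearEquiv_apply]
  by_cases h0 : (finSuccEquiv R n (shear w 1 p)).coeff m = 0
  · simp [h0]
  · have := totalDegree_coeff_finSuccEquiv_add_le _ m h0
    exact (by omega : _ ≤ (shear w 1 p).totalDegree).trans (totalDegree_shear_le hw 1 p)

theorem finSuccEquiv_rename_succ (p : MvPolynomial (Fin n) R) :
    finSuccEquiv R n (rename Fin.succ p) = Polynomial.C p := by
  induction p using MvPolynomial.induction_on with
  | C a => simp [finSuccEquiv_apply]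
  | add p q hp hq => simp [hp, hq]
  | mul_X p i hp => rw [map_mul, map_mul, hp, rename_X, finSuccEquiv_X_succ, map_mul]

theorem totalDegree_finSuccEquiv_symm_le {P : Polynomial (MvPolynomial (Fin n) R)} {D L : ℕ}
    (hL : P.natDegree ≤ L) (hD : ∀ a, (P.coeff a).totalDegree ≤ D) :
    ((finSuccEquiv R n).symm P).totalDegree ≤ D + L := by
  have hdeg := isDegreeLike_totalDegree (Fin (n + 1)) R
  have hC (p) : (finSuccEquiv R n).symm (Polynomial.C p) = rename Fin.succ p := by
    rw [AlgEquiv.symm_apply_eq, finSuccEquiv_rename_succ]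
  have hsymmX : (finSuccEquiv R n).symm Polynomial.X = X 0 := by
    rw [AlgEquiv.symm_apply_eq, finSuccEquiv_X_zero]
  rw [P.as_sum_range_C_mul_X_pow, map_sum]
  refine hdeg.sum_le fun a ha ↦ ?_
  rw [map_mul, map_pow, hC, hsymmX]
  refine hdeg.mul_le ((totalDegree_rename_le _ _).trans (hD a))
    ((totalDegree_X_pow_le 0 a).trans ?_)
  exact (Nat.lt_succ_iff.mp (Finset.mem_range.mp ha)).trans hL

theorem totalDegree_shearEquiv_symm_le {w : ℕ} (hw : 1 ≤ w)
    {P : Polynomial (MvPolynomial (Fin n) R)} {D L : ℕ} (hL : P.natDegree ≤ L)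
    (hD : ∀ a, (P.coeff a).totalDegree ≤ D) :
    ((shearEquiv R n w).symm P).totalDegree ≤ (D + L) * w ^ n :=
  (totalDegree_shear_le hw (-1) _).trans
    (Nat.mul_le_mul_right _ (totalDegree_finSuccEquiv_symm_le hL hD))

theorem shearEquiv_X [Nontrivial R] {w : ℕ} (hw : 1 ≤ w) (i : Fin (n + 1)) :
    (shearEquiv R n w (X i)).Monic ∧ (shearEquiv R n w (X i)).natDegree = w ^ i.1 := by
  rw [shearEquiv_apply]
  cases i using Fin.cases with
  | zero => simp [shear, finSuccEquiv_X_zero]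
  | succ i =>
    have hpos : w ^ (i.1 + 1) ≠ 0 := by positivity
    simp only [shear, aeval_X, Fin.cons_succ, C_1, one_mul, map_add, map_pow,
      finSuccEquiv_X_zero, finSuccEquiv_X_succ, add_comm (Polynomial.C _), Fin.val_succ]
    exact ⟨Polynomial.monic_X_pow_add_C _ hpos, Polynomial.natDegree_X_pow_add_C⟩

theorem shearEquiv_monomial [Nontrivial R] {w : ℕ} (hw : 1 ≤ w) (v : Fin (n + 1) →₀ ℕ) {a : R}
    (ha : a ≠ 0) :
    (shearEquiv R n w (monomial v a)).leadingCoeff = C a ∧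
      (shearEquiv R n w (monomial v a)).natDegree = ∑ i, v i * w ^ i.1 := by
  have hmonic : ∀ i ∈ Finset.univ, (shearEquiv R n w (X i) ^ v i).Monic := fun i _ ↦
    (shearEquiv_X hw i).1.pow _
  have hprod := Polynomial.monic_prod_of_monic _ _ hmonic
  have heq : shearEquiv R n w (monomial v a) =
      Polynomial.C (C a) * ∏ i, shearEquiv R n w (X i) ^ v i := by
    rw [monomial_eq, Finsupp.prod_fintype _ _ fun i ↦ pow_zero _, map_mul, map_prod]
    simp only [map_pow]
    congr 1
    exact (shearEquiv R n w).commutes a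
  rw [heq]
  refine ⟨by rw [Polynomial.leadingCoeff_mul_monic hprod, Polynomial.leadingCoeff_C], ?_⟩
  rw [mul_comm, hprod.natDegree_mul' (by simpa using ha), Polynomial.natDegree_C, add_zero,
    Polynomial.natDegree_prod_of_monic _ _ hmonic]
  refine Finset.sum_congr rfl fun i _ ↦ ?_
  rw [(shearEquiv_X hw i).1.natDegree_pow, (shearEquiv_X hw i).2]

/-- Distinct monomials acquire distinct `x₀`-degrees, by uniqueness of base-`w` expansions. -/
theorem exists_leadingCoeff_shearEquiv {w : ℕ} {p : MvPolynomial (Fin (n + 1)) R} (hp : p ≠ 0)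
    (hw : p.totalDegree < w) :
    ∃ v ∈ p.support, (shearEquiv R n w p).leadingCoeff = C (p.coeff v) := by
  have : Nontrivial R := not_subsingleton_iff_nontrivial.mp fun _ ↦ hp (Subsingleton.elim p 0)
  have hw1 : 1 ≤ w := by omega
  have hmon (v) (hv : v ∈ p.support) := shearEquiv_monomial hw1 v (mem_support_iff.mp hv)
  have hlt : ∀ v ∈ p.support, ∀ i, v i < w := fun v hv i ↦
    ((monomial_le_degreeOf i hv).trans (degreeOf_le_totalDegree p i)).trans_lt hw
  obtain ⟨v, hv, hlead⟩ := exists_leadingCoeff_sum_eq (support_nonempty.mpr hp)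
    (f := fun v ↦ shearEquiv R n w (monomial v (p.coeff v)))
    (fun v hv ↦ by
      rw [← Polynomial.leadingCoeff_ne_zero, (hmon v hv).1]
      simpa using mem_support_iff.mp hv)
    (fun u hu v hv h ↦
      injOn_sum_mul_pow (n + 1) w (hlt u hu) (hlt v hv)
        ((hmon u hu).2.symm.trans (h.trans (hmon v hv).2)))
  refine ⟨v, hv, ?_⟩
  rw [← (hmon v hv).1, ← hlead, ← map_sum, p.support_sum_monomial_coeff]

theorem isUnit_leadingCoeff_shearEquiv {k : Type*} [Field k] {w : ℕ}
    {p : MvPolynomial (Fin (n + 1)) k} (hp : p ≠ 0) (hw : p.totalDegree < w) :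
    IsUnit (shearEquiv k n w p).leadingCoeff := by
  obtain ⟨v, hv, hlead⟩ := exists_leadingCoeff_shearEquiv hp hw
  rw [hlead]
  exact (IsUnit.mk0 _ (mem_support_iff.mp hv)).map C

end Shear

/-! ### Hermann's bound for syzygies -/

section Division

variable {R ι κ m : Type*} [CommRing R]

theorem exists_eq_smul_add_of_isUnit_leadingCoeff {δ : Polynomial R} (hδ : IsUnit δ.leadingCoeff)
    (v : κ → Polynomial R) :
    ∃ q r : κ → Polynomial R, v = δ • q + r ∧ ∀ c, (r c).natDegree ≤ δ.natDegree := by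
  obtain ⟨u, hu⟩ := hδ
  have hmonic : (Polynomial.C (↑u⁻¹ : R) * δ).Monic :=
    Polynomial.monic_C_mul_of_mul_leadingCoeff_eq_one (by rw [← hu, Units.inv_mul])
  refine ⟨fun c ↦ Polynomial.C (↑u⁻¹ : R) * (v c /ₘ (Polynomial.C (↑u⁻¹ : R) * δ)),
    fun c ↦ v c %ₘ (Polynomial.C (↑u⁻¹ : R) * δ), funext fun c ↦ ?_, fun c ↦ ?_⟩
  · conv_lhs => rw [← Polynomial.modByMonic_add_div (v c) (Polynomial.C (↑u⁻¹ : R) * δ)]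
    simp only [Pi.add_apply, Pi.smul_apply, smul_eq_mul]
    ring
  · exact (Polynomial.natDegree_modByMonic_le _ hmonic).trans (Polynomial.natDegree_C_mul_le _ _)

theorem natDegree_add_le_of_isUnit_leadingCoeff {δ p : Polynomial R} (hδ : IsUnit δ.leadingCoeff)
    (hp : p ≠ 0) : δ.natDegree + p.natDegree ≤ (δ * p).natDegree := by
  rw [Polynomial.natDegree_mul']
  exact fun h ↦ hp (Polynomial.leadingCoeff_eq_zero.mp (hδ.mul_right_eq_zero.mp h))

variable [Fintype κ] [DecidableEq κ] [Fintype m] [DecidableEq m]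

/-- The remainder of `v` modulo the minor differs from an element of the kernel by a vector
supported on the columns of the minor, which is as small because the minor times it is. -/
theorem exists_eq_cramerKernel_mulVec_add {A : Matrix ι κ (Polynomial R)} {f : m → ι} {g : m → κ}
    (hminor : IsBasicMinor A f g) (hunit : IsUnit (A.submatrix f g).det.leadingCoeff) {h : ℕ}
    (hA : ∀ i j, (A i j).natDegree ≤ h) {v : κ → Polynomial R} (hv : A.mulVec v = 0) :
    ∃ q v' : κ → Polynomial R, v = (cramerKernel A f g).mulVec q + v' ∧ A.mulVec v' = 0 ∧
      ∀ c, (v' c).natDegree ≤ (Fintype.card m + 1) * h := by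
  have hdeg := isDegreeLike_natDegree R
  set δ := (A.submatrix f g).det
  obtain ⟨q, r, hqr, hr⟩ := exists_eq_smul_add_of_isUnit_leadingCoeff hunit v
  have hδdeg : δ.natDegree ≤ Fintype.card m * h := hdeg.det_le fun _ _ ↦ hA _ _
  set u := (A.submatrix f g).adjugate.mulVec (A.mulVec q ∘ f) with hu
  have hδu : δ • u = (A.submatrix f g).adjugate.mulVec (-(A.mulVec r ∘ f)) := by
    have hAq : δ • A.mulVec q = -A.mulVec r := by
      rw [← Matrix.mulVec_smul, eq_neg_iff_add_eq_zero, ← Matrix.mulVec_add, ← hqr, hv]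
    rw [hu, ← Matrix.mulVec_smul]
    exact congrArg _ (congrArg (· ∘ f) hAq)
  have hudeg (l) : (u l).natDegree ≤ (Fintype.card m + 1) * h := by
    rcases eq_or_ne (u l) 0 with h0 | h0
    · simp [h0]
    have hle : (δ * u l).natDegree ≤ Fintype.card m * h + (h + δ.natDegree) := by
      refine (congrArg Polynomial.natDegree (congrFun hδu l)).trans_le ?_
      refine hdeg.mulVec_le (hdeg.adjugate_le fun _ _ ↦ hA _ _) (fun l ↦ ?_) l
      exact (hdeg.map_neg _).trans_le (hdeg.mulVec_le hA hr (f l))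
    have := natDegree_add_le_of_isUnit_leadingCoeff hunit h0
    rw [add_one_mul]
    omega
  have hsub : v - (cramerKernel A f g).mulVec q =
      r + ((1 : Matrix κ κ (Polynomial R)).submatrix id g).mulVec u := by
    rw [cramerKernel_mulVec, hqr]
    abel
  refine ⟨q, v - (cramerKernel A f g).mulVec q, by abel, ?_, fun c ↦ ?_⟩
  · rw [Matrix.mulVec_sub, hv, Matrix.mulVec_mulVec, hminor.mul_cramerKernel, Matrix.zero_mulVec,
      sub_zero]
  · have hrdeg : (r c).natDegree ≤ (Fintype.card m + 1) * h := by
      have := hr c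
      rw [add_one_mul]
      omega
    have hEu : (((1 : Matrix κ κ (Polynomial R)).submatrix id g).mulVec u c).natDegree ≤
        0 + (Fintype.card m + 1) * h :=
      hdeg.mulVec_le (fun _ _ ↦ hdeg.one_apply_le _ _) hudeg c
    rw [zero_add] at hEu
    rw [hsub]
    exact hdeg.add_le hrdeg hEu

end Division

section CoeffMatrix

variable {R ι κ : Type*} [CommRing R]

/-- The vector of polynomials of degree less than `L` with given coefficients. -/
noncomputable def ofCoeffs (R κ : Type*) [CommRing R] (L : ℕ) :
    (κ × Fin L → R) →ₗ[R] κ → Polynomial R :=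
  LinearMap.pi fun j ↦ ∑ a : Fin L, Polynomial.monomial a.1 ∘ₗ LinearMap.proj (j, a)

theorem ofCoeffs_apply {L : ℕ} (w : κ × Fin L → R) (j : κ) :
    ofCoeffs R κ L w j = ∑ a : Fin L, Polynomial.monomial a.1 (w (j, a)) := by
  simp [ofCoeffs]

theorem ofCoeffs_coeff {L : ℕ} {v : κ → Polynomial R} (hv : ∀ j, (v j).natDegree < L) :
    ofCoeffs R κ L (fun y ↦ (v y.1).coeff y.2) = v := by
  funext j
  rw [ofCoeffs_apply, Fin.sum_univ_eq_sum_range fun a ↦ Polynomial.monomial a ((v j).coeff a)]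
  exact ((v j).as_sum_range' L (hv j)).symm

theorem natDegree_ofCoeffs_le {L : ℕ} (w : κ × Fin L → R) (j : κ) :
    (ofCoeffs R κ L w j).natDegree ≤ L := by
  rw [ofCoeffs_apply]
  exact (isDegreeLike_natDegree R).sum_le fun a _ ↦
    (Polynomial.natDegree_monomial_le _).trans a.2.le

/-- The matrix of the linear map `A` between vectors of polynomials of degree less than `L` and
those of degree less than `M`, in terms of coefficients. -/
noncomputable def coeffMatrix (A : Matrix ι κ (Polynomial R)) (M L : ℕ) :
    Matrix (ι × Fin M) (κ × Fin L) R :=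
  Matrix.of fun x y ↦ (A x.1 y.1 * Polynomial.X ^ y.2.1).coeff x.2.1

variable [Fintype κ] {A : Matrix ι κ (Polynomial R)}

theorem coeff_mulVec_ofCoeffs {L : ℕ} (w : κ × Fin L → R) (i : ι) (e : ℕ) :
    (A.mulVec (ofCoeffs R κ L w) i).coeff e =
      ∑ y : κ × Fin L, (A i y.1 * Polynomial.X ^ y.2.1).coeff e * w y := by
  simp only [Matrix.mulVec, dotProduct, ofCoeffs_apply, Finset.mul_sum, Polynomial.finsetSum_coeff,
    Fintype.sum_prod_type, ← Polynomial.C_mul_X_pow_eq_monomial]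
  refine Finset.sum_congr rfl fun j _ ↦ Finset.sum_congr rfl fun a _ ↦ ?_
  rw [mul_left_comm, Polynomial.coeff_C_mul, mul_comm]

theorem coeffMatrix_mulVec_eq_zero_iff {h L M : ℕ} (hA : ∀ i j, (A i j).natDegree ≤ h)
    (hM : h + L ≤ M) (w : κ × Fin L → R) :
    (coeffMatrix A M L).mulVec w = 0 ↔ A.mulVec (ofCoeffs R κ L w) = 0 := by
  have hcoeff (i : ι) (e : Fin M) : (coeffMatrix A M L).mulVec w (i, e) =
      (A.mulVec (ofCoeffs R κ L w) i).coeff e := (coeff_mulVec_ofCoeffs w i e).symm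
  refine ⟨fun hw ↦ funext fun i ↦ Polynomial.ext fun e ↦ ?_, fun hw ↦ funext fun x ↦ ?_⟩
  · rcases lt_or_ge e M with he | he
    · exact (hcoeff i ⟨e, he⟩).symm.trans (congrFun hw (i, ⟨e, he⟩))
    · rw [coeff_mulVec_ofCoeffs]
      refine Finset.sum_eq_zero fun y _ ↦ ?_
      rw [Polynomial.coeff_mul_X_pow', Polynomial.coeff_eq_zero_of_natDegree_lt, ite_self, zero_mul]
      have := hA i y.1
      omega
  · rw [hcoeff x.1 x.2, hw]
    rfl

end CoeffMatrix

section Hermann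

variable {k ι κ : Type*} [Field k]

/-- The module generated by the syzygies of the columns of `A` of total degree at most `D`. -/
noncomputable def boundedSyzygies {σ R : Type*} [CommRing R] [Fintype κ]
    (A : Matrix ι κ (MvPolynomial σ R)) (D : ℕ) :
    Submodule (MvPolynomial σ R) (κ → MvPolynomial σ R) :=
  Submodule.span _ {w | A.mulVec w = 0 ∧ ∀ j, (w j).totalDegree ≤ D}

theorem boundedSyzygies_mono {σ R : Type*} [CommRing R] [Fintype κ]
    (A : Matrix ι κ (MvPolynomial σ R)) : Monotone (boundedSyzygies A) :=
  fun _ _ hD ↦ Submodule.span_mono fun _ hw ↦ ⟨hw.1, fun j ↦ (hw.2 j).trans hD⟩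

theorem cramerKernel_mulVec_mem_boundedSyzygies {σ R m : Type*} [CommRing R] [Fintype κ]
    [DecidableEq κ] [Fintype m] [DecidableEq m] {A : Matrix ι κ (MvPolynomial σ R)} {f : m → ι}
    {g : m → κ} (hminor : IsBasicMinor A f g) {q : ℕ} (hA : ∀ i j, (A i j).totalDegree ≤ q)
    (v : κ → MvPolynomial σ R) :
    (cramerKernel A f g).mulVec v ∈ boundedSyzygies A ((Fintype.card m + 1) * q) := by
  rw [Matrix.mulVec_eq_sum]
  refine sum_mem fun j _ ↦ ?_
  rw [op_smul_eq_smul]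
  exact Submodule.smul_mem _ _ (Submodule.subset_span ⟨hminor.mulVec_cramerKernel_col j, fun i ↦
    (isDegreeLike_totalDegree σ R).cramerKernel_le hA f g i j⟩)

/-- Exponent in the syzygy bound: over `k[x₁,…,x_r]`, a matrix with at most `q` rows and entries of
degree at most `q` has its kernel generated in degree at most `q ^ hermannExp r`. -/
def hermannExp : ℕ → ℕ
  | 0 => 0
  | r + 1 => (3 * r + 5) * (hermannExp r + 2)

theorem mulVec_map_symm_eq_zero {R S : Type*} [CommRing R] [CommRing S] [Fintype κ] (φ : R ≃+* S)
    {A : Matrix ι κ R} {v : κ → S} (hv : (A.map φ).mulVec v = 0) : A.mulVec (φ.symm ∘ v) = 0 := by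
  funext i
  have := congrArg φ.symm (congrFun hv i)
  simpa [Matrix.mulVec, dotProduct] using this

variable {r q : ℕ}

theorem symm_comp_ofCoeffs_mem_boundedSyzygies {R : Type*} [CommRing R] [Fintype κ] {w : ℕ}
    (hw : 1 ≤ w) {A : Matrix ι κ (MvPolynomial (Fin (r + 1)) R)} {h L M D : ℕ}
    (hA : ∀ i j, (shearEquiv R r w (A i j)).natDegree ≤ h) (hM : h + L ≤ M)
    {v : κ × Fin L → MvPolynomial (Fin r) R}
    (hv : v ∈ boundedSyzygies (coeffMatrix (A.map (shearEquiv R r w)) M L) D) :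
    (shearEquiv R r w).symm ∘ ofCoeffs _ κ L v ∈ boundedSyzygies A ((D + L) * w ^ r) := by
  induction hv using Submodule.span_induction with
  | mem v hv =>
    refine Submodule.subset_span ⟨?_, fun j ↦ ?_⟩
    · exact mulVec_map_symm_eq_zero (shearEquiv R r w).toRingEquiv
        ((coeffMatrix_mulVec_eq_zero_iff hA hM v).mp hv.1)
    · refine totalDegree_shearEquiv_symm_le hw (natDegree_ofCoeffs_le v j) fun a ↦ ?_
      rw [ofCoeffs_apply, Polynomial.finsetSum_coeff]
      refine (isDegreeLike_totalDegree _ R).sum_le fun b _ ↦ ?_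
      rw [Polynomial.coeff_monomial]
      split_ifs
      exacts [hv.2 _, by simp]
  | zero =>
    rw [map_zero]
    convert Submodule.zero_mem (boundedSyzygies A ((D + L) * w ^ r))
    exact funext fun _ ↦ map_zero _
  | add x y _ _ hx hy =>
    rw [map_add]
    convert add_mem hx hy using 1
    funext c
    exact map_add _ _ _
  | smul a x _ hx =>
    rw [map_smul]
    convert Submodule.smul_mem _ ((shearEquiv R r w).symm (Polynomial.C a)) hx using 1
    funext c
    simp [Polynomial.smul_eq_C_mul]

theorem exists_sub_symm_mem_boundedSyzygies [Fintype ι] [Fintype κ]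
    {A : Matrix ι κ (MvPolynomial (Fin (r + 1)) k)} (hcard : Fintype.card ι ≤ q)
    (hA : ∀ i j, (A i j).totalDegree ≤ q) {v : κ → MvPolynomial (Fin (r + 1)) k}
    (hv : A.mulVec v = 0) :
    ∃ v' : κ → Polynomial (MvPolynomial (Fin r) k),
      v - (shearEquiv k r (q ^ 2 + 1)).symm ∘ v' ∈ boundedSyzygies A ((q + 1) * q) ∧
      (A.map (shearEquiv k r (q ^ 2 + 1))).mulVec v' = 0 ∧
      ∀ j, (v' j).natDegree ≤ (q + 1) * (q * (q ^ 2 + 1) ^ r) := by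
  classical
  set Φ := shearEquiv k r (q ^ 2 + 1)
  obtain ⟨ρ, hρ, f, g, hminor⟩ := exists_isBasicMinor_of_finite_rows A
  replace hρ := hρ.trans hcard
  have hdet : (A.submatrix f g).det.totalDegree < q ^ 2 + 1 := by
    have := (isDegreeLike_totalDegree _ k).det_le (B := A.submatrix f g) fun _ _ ↦ hA _ _
    rw [Fintype.card_fin] at this
    nlinarith
  have hminor' : IsBasicMinor (A.map Φ) f g := hminor.map (φ := Φ.toRingHom) Φ.injective
  have hunit : IsUnit ((A.map Φ).submatrix f g).det.leadingCoeff := by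
    have hmap : ((A.map Φ).submatrix f g).det = Φ (A.submatrix f g).det :=
      (Φ.toRingHom.map_det (A.submatrix f g)).symm
    rw [hmap]
    exact isUnit_leadingCoeff_shearEquiv hminor.det_ne_zero hdet
  have hv' : (A.map Φ).mulVec (Φ ∘ v) = 0 := by
    funext i
    have := (Φ.toRingHom.map_mulVec A v i).symm
    rw [hv] at this
    exact this.trans (map_zero Φ)
  obtain ⟨p, v', hsum, hker, hdeg⟩ := exists_eq_cramerKernel_mulVec_add hminor' hunit
    (fun i j ↦ (natDegree_shearEquiv_le (Nat.le_add_left _ _) (A i j)).trans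
      (Nat.mul_le_mul_right _ (hA i j))) hv'
  rw [Fintype.card_fin] at hdeg
  have hle {a : ℕ} : (ρ + 1) * a ≤ (q + 1) * a := Nat.mul_le_mul_right _ (Nat.succ_le_succ hρ)
  refine ⟨v', ?_, hker, fun j ↦ (hdeg j).trans hle⟩
  have hsub : v - Φ.symm ∘ v' = (cramerKernel A f g).mulVec (Φ.symm ∘ p) := by
    funext c
    have hK : cramerKernel (A.map Φ) f g = (cramerKernel A f g).map Φ :=
      map_cramerKernel Φ.toRingHom A f g
    have := congrArg Φ.symm (congrFun hsum c)
    rw [hK] at this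
    simp only [Function.comp_apply, AlgEquiv.symm_apply_apply, Pi.add_apply, map_add] at this
    rw [Pi.sub_apply, this, Function.comp_apply, add_sub_cancel_right]
    simp [Matrix.mulVec, dotProduct]
  rw [hsub]
  refine boundedSyzygies_mono A ?_ (cramerKernel_mulVec_mem_boundedSyzygies hminor hA _)
  exact (congrArg (fun c ↦ (c + 1) * q) (Fintype.card_fin ρ)).trans_le hle

theorem shearBase_pow_le (hq : 2 ≤ q) : (q ^ 2 + 1) ^ r ≤ q ^ (3 * r) := by
  rw [pow_mul]
  exact Nat.pow_le_pow_left (by nlinarith [Nat.mul_le_mul hq hq]) r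

theorem coeffMatrix_size_le (hq : 2 ≤ q) :
    q * (q * (q ^ 2 + 1) ^ r + ((q + 1) * (q * (q ^ 2 + 1) ^ r) + 1)) ≤ q ^ (3 * r + 5) := by
  have hT : 1 ≤ q ^ (3 * r) := Nat.one_le_pow _ _ (by omega)
  have hpoly : q * (q * (q + 2) + 1) ≤ q ^ 5 := by
    nlinarith [Nat.pow_le_pow_left hq 2, Nat.pow_le_pow_left hq 3, Nat.pow_le_pow_left hq 4]
  calc q * (q * (q ^ 2 + 1) ^ r + ((q + 1) * (q * (q ^ 2 + 1) ^ r) + 1))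
      = q * (q * (q + 2) * (q ^ 2 + 1) ^ r + 1) := by ring
    _ ≤ q * (q * (q + 2) * q ^ (3 * r) + q ^ (3 * r)) := by
      gcongr q * (q * (q + 2) * ?_ + ?_)
      exact shearBase_pow_le hq
    _ = q * (q * (q + 2) + 1) * q ^ (3 * r) := by ring
    _ ≤ q ^ 5 * q ^ (3 * r) := Nat.mul_le_mul_right _ hpoly
    _ = q ^ (3 * r + 5) := by ring

theorem add_mul_shearBase_pow_le (hq : 2 ≤ q) {L B : ℕ} (hL : L ≤ q ^ (3 * r + 5)) :
    ((q ^ (3 * r + 5)) ^ B + L) * (q ^ 2 + 1) ^ r ≤ q ^ ((3 * r + 5) * (B + 2)) := by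
  rw [pow_mul _ (3 * r + 5) (B + 2)]
  have hW : 2 * (q ^ 2 + 1) ^ r ≤ q ^ (3 * r + 5) := by
    rw [pow_add, mul_comm]
    exact Nat.mul_le_mul (shearBase_pow_le hq) (hq.trans (Nat.le_self_pow (by omega) q))
  generalize (q ^ 2 + 1) ^ r = W at *
  have hQ : 1 ≤ q ^ (3 * r + 5) := Nat.one_le_pow _ _ (by omega)
  generalize q ^ (3 * r + 5) = Q at *
  calc (Q ^ B + L) * W ≤ (Q ^ (B + 1) + Q ^ (B + 1)) * W :=
        Nat.mul_le_mul_right _ (add_le_add (Nat.pow_le_pow_right hQ (by omega))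
          (hL.trans (Nat.le_self_pow (by omega) Q)))
    _ = Q ^ (B + 1) * (2 * W) := by ring
    _ ≤ Q ^ (B + 1) * Q := Nat.mul_le_mul_left _ hW
    _ = Q ^ (B + 2) := by ring

theorem totalDegree_coeffMatrix_shearEquiv_le {R : Type*} [CommRing R] {w D M L : ℕ} (hw : 1 ≤ w)
    {A : Matrix ι κ (MvPolynomial (Fin (r + 1)) R)} (hA : ∀ i j, (A i j).totalDegree ≤ D)
    (x : ι × Fin M) (y : κ × Fin L) :
    (coeffMatrix (A.map (shearEquiv R r w)) M L x y).totalDegree ≤ D * w ^ r := by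
  rw [coeffMatrix, Matrix.of_apply, Polynomial.coeff_mul_X_pow']
  split_ifs
  · exact (totalDegree_coeff_shearEquiv_le hw _ _).trans (Nat.mul_le_mul_right _ (hA _ _))
  · simp

/-- After a shear a basic minor is monic in the first variable, so a syzygy reduces to one of
bounded degree in that variable; its coefficients solve a larger system in one variable less. -/
theorem mem_boundedSyzygies_hermannExp (r : ℕ) {q : ℕ} (hq : 2 ≤ q) [Fintype ι] [Fintype κ]
    {A : Matrix ι κ (MvPolynomial (Fin r) k)} (hcard : Fintype.card ι ≤ q)
    (hA : ∀ i j, (A i j).totalDegree ≤ q) {v : κ → MvPolynomial (Fin r) k} (hv : A.mulVec v = 0) :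
    v ∈ boundedSyzygies A (q ^ hermannExp r) := by
  induction r generalizing q ι κ with
  | zero =>
    refine Submodule.subset_span ⟨hv, fun j ↦ ?_⟩
    rw [totalDegree_eq_zero_iff_eq_C.mpr (eq_C_of_isEmpty _)]
    exact Nat.zero_le _
  | succ r ih =>
    obtain ⟨v', hsub, hker, hdeg⟩ := exists_sub_symm_mem_boundedSyzygies hcard hA hv
    set h := q * (q ^ 2 + 1) ^ r
    set L := (q + 1) * h + 1
    have hw : 1 ≤ q ^ 2 + 1 := Nat.le_add_left _ _
    have hsize : q * (h + L) ≤ q ^ (3 * r + 5) := coeffMatrix_size_le hq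
    have hsize' : h + L ≤ q ^ (3 * r + 5) := hsize.trans' (Nat.le_mul_of_pos_left _ (by omega))
    have hh : h ≤ q ^ (3 * r + 5) := le_self_add.trans hsize'
    have hnat (i j) : (shearEquiv k r (q ^ 2 + 1) (A i j)).natDegree ≤ h :=
      (natDegree_shearEquiv_le hw _).trans (Nat.mul_le_mul_right _ (hA i j))
    have hcoeffs := ofCoeffs_coeff (L := L) fun j ↦ Nat.lt_succ_of_le (hdeg j)
    have hker' := (coeffMatrix_mulVec_eq_zero_iff hnat (le_refl (h + L)) _).mpr
      (hcoeffs.symm ▸ hker)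
    have hmem := ih (hq.trans (Nat.le_self_pow (by omega) q))
      (by simpa using (Nat.mul_le_mul_right _ hcard).trans hsize)
      (fun x y ↦ (totalDegree_coeffMatrix_shearEquiv_le hw hA x y).trans hh) hker'
    have hroll := symm_comp_ofCoeffs_mem_boundedSyzygies hw hnat le_rfl hmem
    rw [hcoeffs] at hroll
    rw [← sub_add_cancel v ((shearEquiv k r (q ^ 2 + 1)).symm ∘ v')]
    refine add_mem (boundedSyzygies_mono A ?_ hsub) (boundedSyzygies_mono A ?_ hroll)
    · calc (q + 1) * q ≤ q ^ 2 * q := by gcongr; nlinarith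
        _ = q ^ 3 := by ring
        _ ≤ q ^ hermannExp (r + 1) := Nat.pow_le_pow_right (by omega)
          (Nat.mul_le_mul (by omega : 3 ≤ 3 * r + 5) (by omega : 1 ≤ hermannExp r + 2))
    · exact add_mul_shearBase_pow_le hq (by omega)

end Hermann

/-! ### Primality in bounded degree -/

section PrimeUpTo

/-- The ideal `I` is prime up to `b`: the primality condition holds for polynomials of total degree
at most `b`. -/
def PrimeUpTo {σ R : Type*} [CommRing R] (I : Ideal (MvPolynomial σ R)) (b : ℕ) : Prop :=
  ∀ f g : MvPolynomial σ R, f.totalDegree ≤ b → g.totalDegree ≤ b → f * g ∈ I → f ∈ I ∨ g ∈ I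

variable {k : Type*} [Field k] {n G b : ℕ}

/-- The solutions `g` of `a * g ∈ I` are the first entries of syzygies, so they are generated by
those of degree at most `b`. -/
theorem PrimeUpTo.mem_of_mul_mem {S : Set (MvPolynomial (Fin n) k)}
    (hI : PrimeUpTo (Ideal.span S) b) (hG : 2 ≤ G) (hb : G ^ hermannExp n ≤ b) (hGb : G ≤ b)
    (hS : ∀ f ∈ S, f.totalDegree ≤ G) {a g : MvPolynomial (Fin n) k} (ha : a.totalDegree ≤ G)
    (haI : a ∉ Ideal.span S) (hg : a * g ∈ Ideal.span S) : g ∈ Ideal.span S := by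
  obtain ⟨m, c, s, hs⟩ := Submodule.mem_span_set'.mp hg
  set A : Matrix Unit (Fin (m + 1)) (MvPolynomial (Fin n) k) :=
    fun _ ↦ Fin.cons a fun i ↦ (s i : MvPolynomial (Fin n) k) with hA
  have hmulVec (v : Fin (m + 1) → MvPolynomial (Fin n) k) :
      A.mulVec v = fun _ ↦ a * v 0 + ∑ i, (s i : MvPolynomial (Fin n) k) * v i.succ := by
    funext _
    simp [hA, Matrix.mulVec, dotProduct, Fin.sum_univ_succ]
  have hsyz : A.mulVec (Fin.cons g fun i ↦ -c i) = 0 := by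
    rw [hmulVec]
    exact funext fun _ ↦ by simp [← hs, mul_comm]
  have hdeg (i j) : (A i j).totalDegree ≤ G := by
    cases j using Fin.cases with
    | zero => exact ha
    | succ j => exact hS _ (s j).2
  have hmem := mem_boundedSyzygies_hermannExp n hG (by simpa using by omega) hdeg hsyz
  have hle : boundedSyzygies A (G ^ hermannExp n) ≤
      Submodule.comap (LinearMap.proj (φ := fun _ ↦ MvPolynomial (Fin n) k) 0) (Ideal.span S) := by
    refine Submodule.span_le.mpr fun w ⟨hw, hwdeg⟩ ↦ ?_
    have hsum : a * w 0 + ∑ i, (s i : MvPolynomial (Fin n) k) * w i.succ = 0 := by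
      simpa using (congrFun (hmulVec w) ()).symm.trans (congrFun hw ())
    have haw : a * w 0 ∈ Ideal.span S := by
      rw [eq_neg_of_add_eq_zero_left hsum]
      exact neg_mem (sum_mem fun i _ ↦ Ideal.mul_mem_right _ _ (Ideal.subset_span (s i).2))
    exact (hI a (w 0) (ha.trans hGb) ((hwdeg 0).trans hb) haw).resolve_left haI
  exact hle hmem

end PrimeUpTo

/-! ### Normal forms modulo monic one-variable relations -/

section NormalForm

variable {R σ : Type*} [CommRing R] [Fintype σ] {e : ℕ}

variable (e) in
/-- The `R`-linear normal form modulo monic polynomials `q i` of degree `e` in the `i`-th variable: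
a monomial goes to the product of the remainders of its one-variable factors, written in
coordinates indexed by the exponents in the box `[0, e) ^ σ`. -/
noncomputable def nf (q : σ → Polynomial R) : MvPolynomial σ R →ₗ[R] ((σ → Fin e) → R) :=
  (basisMonomials σ R).constr R fun α β ↦
    ∏ i, ((Polynomial.X ^ α i : Polynomial R) %ₘ q i).coeff (β i)

/-- The ideal generated by the `q i`, the `i`-th of them evaluated at the `i`-th variable. -/
noncomputable def relIdeal (q : σ → Polynomial R) : Ideal (MvPolynomial σ R) :=
  Ideal.span (Set.range fun i ↦ Polynomial.aeval (X i : MvPolynomial σ R) (q i))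

theorem monomial_one_eq_prod (α : σ →₀ ℕ) :
    (monomial α 1 : MvPolynomial σ R) = ∏ i, X i ^ α i := by
  rw [monomial_eq, C_1, one_mul, Finsupp.prod_fintype _ _ fun i ↦ pow_zero _]

theorem nf_monomial (q : σ → Polynomial R) (α : σ →₀ ℕ) (c : R) (β : σ → Fin e) :
    nf e q (monomial α c) β =
      c * ∏ i, ((Polynomial.X ^ α i : Polynomial R) %ₘ q i).coeff (β i) := by
  have hbasis := (basisMonomials σ R).constr_basis R (fun α (β : σ → Fin e) ↦
    ∏ i, ((Polynomial.X ^ α i : Polynomial R) %ₘ q i).coeff (β i)) α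
  rw [coe_basisMonomials] at hbasis
  rw [← mul_one c, ← smul_eq_mul, ← smul_monomial, map_smul, Pi.smul_apply, smul_eq_mul,
    smul_eq_mul, mul_one]
  exact congrArg (c * ·) (congrFun hbasis β)

theorem coeff_modByMonic_eq_sum (p q : Polynomial R) (m : ℕ) :
    (p %ₘ q).coeff m = ∑ j ∈ Finset.range (p.natDegree + 1),
      p.coeff j * ((Polynomial.X ^ j : Polynomial R) %ₘ q).coeff m := by
  conv_lhs => rw [p.as_sum_range_C_mul_X_pow]
  simp_rw [← Polynomial.smul_eq_C_mul, ← Polynomial.modByMonicHom_apply, map_sum, map_smul,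
    Polynomial.finsetSum_coeff, Polynomial.coeff_smul, smul_eq_mul]

theorem nf_prod_aeval (q P : σ → Polynomial R) (β : σ → Fin e) :
    nf e q (∏ i, Polynomial.aeval (X i) (P i)) β = ∏ i, (P i %ₘ q i).coeff (β i) := by
  classical
  simp_rw [Polynomial.aeval_eq_sum_range, coeff_modByMonic_eq_sum (P _), Finset.prod_univ_sum,
    map_sum, Finset.sum_apply, Finset.prod_mul_distrib]
  refine Finset.sum_congr rfl fun a _ ↦ ?_
  have hmonomial : ∏ i, (P i).coeff (a i) • (X i : MvPolynomial σ R) ^ a i =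
      monomial (Finsupp.equivFunOnFinite.symm a) (∏ i, (P i).coeff (a i)) := by
    rw [monomial_eq, Finsupp.prod_fintype _ _ fun i ↦ pow_zero _, map_prod,
      ← Finset.prod_mul_distrib]
    simp [smul_eq_C_mul]
  rw [hmonomial, nf_monomial]
  rfl

variable {q : σ → Polynomial R}

theorem nf_mul_aeval (hq : ∀ i, (q i).Monic) (i : σ) (p : MvPolynomial σ R) :
    nf e q (p * Polynomial.aeval (X i : MvPolynomial σ R) (q i)) = 0 := by
  classical
  suffices h : nf e q ∘ₗ LinearMap.mulRight R (Polynomial.aeval (X i : MvPolynomial σ R) (q i)) = 0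
    from LinearMap.congr_fun h p
  refine (basisMonomials σ R).ext fun α ↦ funext fun β ↦ ?_
  have hprod : monomial α 1 * Polynomial.aeval (X i : MvPolynomial σ R) (q i) =
      ∏ j, Polynomial.aeval (X j) (Polynomial.X ^ α j * if j = i then q j else 1) := by
    simp only [map_mul, Finset.prod_mul_distrib, apply_ite (Polynomial.aeval _)]
    simp [monomial_one_eq_prod]
  rw [coe_basisMonomials, LinearMap.comp_apply, LinearMap.mulRight_apply, hprod, nf_prod_aeval]
  refine Finset.prod_eq_zero (Finset.mem_univ i) ?_
  rw [if_pos rfl, (Polynomial.modByMonic_eq_zero_iff_dvd (hq i)).mpr (dvd_mul_left _ _),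
    Polynomial.coeff_zero]

theorem nf_eq_zero (hq : ∀ i, (q i).Monic) {p : MvPolynomial σ R} (hp : p ∈ relIdeal q) :
    nf e q p = 0 := by
  obtain ⟨c, rfl⟩ := Ideal.mem_span_range_iff_exists_fun.mp hp
  rw [map_sum]
  exact Finset.sum_eq_zero fun i _ ↦ nf_mul_aeval hq i (c i)

variable [DecidableEq σ]

/-- The polynomial with prescribed coefficients on the box `[0, e) ^ σ`. -/
noncomputable def boxPoly : ((σ → Fin e) → R) →ₗ[R] MvPolynomial σ R where
  toFun c := ∑ β, C (c β) * ∏ i, X i ^ (β i).1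
  map_add' c c' := by simp [add_mul, Finset.sum_add_distrib]
  map_smul' t c := by simp [Finset.smul_sum, smul_eq_C_mul, mul_assoc]

theorem boxPoly_apply (c : (σ → Fin e) → R) :
    boxPoly c = ∑ β, C (c β) * ∏ i, X i ^ (β i).1 := rfl

theorem boxPoly_prod_coeff {P : σ → Polynomial R} (hP : ∀ i, (P i).degree < e) :
    boxPoly (fun β : σ → Fin e ↦ ∏ i, (P i).coeff (β i)) =
      ∏ i, Polynomial.aeval (X i : MvPolynomial σ R) (P i) := by
  have haeval (i : σ) : Polynomial.aeval (X i : MvPolynomial σ R) (P i) =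
      ∑ j : Fin e, C ((P i).coeff j) * X i ^ j.1 := by
    rw [Polynomial.aeval_def, Polynomial.eval₂_eq_sum]
    exact (Polynomial.sum_fin _ (by simp) (hP i)).symm
  simp_rw [haeval, Finset.prod_univ_sum, Fintype.piFinset_univ, boxPoly_apply, map_prod,
    Finset.prod_mul_distrib]

theorem sub_boxPoly_nf_mem (hq : ∀ i, (q i).Monic) (he : ∀ i, (q i).natDegree = e)
    (p : MvPolynomial σ R) : p - boxPoly (nf e q p) ∈ relIdeal q := by
  nontriviality R
  let π := (Ideal.Quotient.mkₐ R (relIdeal q)).toLinearMap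
  suffices h : π = π ∘ₗ boxPoly ∘ₗ nf e q from Ideal.Quotient.eq.mp (LinearMap.congr_fun h p)
  refine (basisMonomials σ R).ext fun α ↦ Ideal.Quotient.eq.mpr ?_
  have hdeg (i : σ) : ((Polynomial.X ^ α i : Polynomial R) %ₘ q i).degree < e := by
    simpa [Polynomial.degree_eq_natDegree (hq i).ne_zero, he i] using
      Polynomial.degree_modByMonic_lt (Polynomial.X ^ α i : Polynomial R) (hq i)
  have hnf : nf e q (monomial α 1) =
      fun β ↦ ∏ i, ((Polynomial.X ^ α i : Polynomial R) %ₘ q i).coeff (β i) :=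
    funext fun β ↦ by rw [nf_monomial, one_mul]
  rw [coe_basisMonomials, LinearMap.comp_apply, hnf, boxPoly_prod_coeff hdeg]
  beta_reduce
  rw [monomial_one_eq_prod, ← Ideal.Quotient.eq, map_prod, map_prod]
  refine Finset.prod_congr rfl fun i _ ↦ Ideal.Quotient.eq.mpr ?_
  rw [← Polynomial.aeval_X_pow (R := R), ← map_sub, Polynomial.modByMonic_eq_sub_mul_div,
    sub_sub_cancel, map_mul]
  exact Ideal.mul_mem_right _ _ (Ideal.subset_span ⟨i, rfl⟩)

theorem nf_boxPoly (hq : ∀ i, (q i).Monic) (he : ∀ i, (q i).natDegree = e) (c : (σ → Fin e) → R) :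
    nf e q (boxPoly c) = c := by
  nontriviality R
  have hmod (i : σ) (j : Fin e) :
      (Polynomial.X ^ j.1 : Polynomial R) %ₘ q i = Polynomial.X ^ j.1 := by
    rw [Polynomial.modByMonic_eq_self_iff (hq i), Polynomial.degree_X_pow,
      Polynomial.degree_eq_natDegree (hq i).ne_zero, he i]
    exact_mod_cast j.2
  have hnf (β γ : σ → Fin e) : nf e q (∏ i, X i ^ (β i).1) γ = if γ = β then 1 else 0 := by
    have hprod : (∏ i, X i ^ (β i).1 : MvPolynomial σ R) =
        ∏ i, Polynomial.aeval (X i) (Polynomial.X ^ (β i).1 : Polynomial R) := by simp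
    simp_rw [hprod, nf_prod_aeval, hmod, Polynomial.coeff_X_pow, ← Fin.ext_iff,
      Finset.prod_ite_zero, funext_iff]
    simp
  funext γ
  simp [boxPoly_apply, ← smul_eq_C_mul, Finset.sum_apply, hnf]

theorem nf_mul (hq : ∀ i, (q i).Monic) (he : ∀ i, (q i).natDegree = e) (p p' : MvPolynomial σ R) :
    nf e q (p * p') = nf e q (boxPoly (nf e q p) * p') := by
  rw [← sub_eq_zero, ← map_sub, ← sub_mul]
  exact nf_eq_zero hq (Ideal.mul_mem_right _ _ (sub_boxPoly_nf_mem hq he p))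

end NormalForm

section WeightedDegree

variable {R σ : Type*} [CommRing R] {δ : R → ℕ} {h D : ℕ}

theorem IsDegreeLike.coeff_X_pow_modByMonic_le (hδ : IsDegreeLike δ) {q : Polynomial R}
    (hq : q.Monic) (hc : ∀ j, δ (q.coeff j) ≤ h) (a m : ℕ) :
    δ (((Polynomial.X ^ a : Polynomial R) %ₘ q).coeff m) ≤ a * h := by
  obtain hR | hR := subsingleton_or_nontrivial R
  · rw [Subsingleton.elim (Polynomial.coeff _ m) 0, hδ.map_zero]
    exact zero_le
  induction a using Nat.strong_induction_on with
  | _ a ih =>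
    obtain ha | ha := lt_or_ge a q.natDegree
    · rw [(Polynomial.modByMonic_eq_self_iff hq).mpr, Polynomial.coeff_X_pow]
      · split_ifs <;> simp [hδ.map_zero, hδ.map_one]
      · rw [Polynomial.degree_X_pow, Polynomial.degree_eq_natDegree hq.ne_zero]
        exact_mod_cast ha
    · obtain ⟨b, rfl⟩ := Nat.exists_eq_add_of_le' ha
      have hreduce : (Polynomial.X ^ (b + q.natDegree) : Polynomial R) =
          Polynomial.X ^ b * q -
            ∑ j ∈ Finset.range q.natDegree, q.coeff j • (Polynomial.X ^ (b + j)) := by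
        conv_rhs => enter [1]; rw [hq.as_sum]
        simp_rw [mul_add, Finset.mul_sum, Polynomial.smul_eq_C_mul, pow_add, mul_left_comm]
        ring
      rw [hreduce, ← Polynomial.modByMonicHom_apply, map_sub, Polynomial.modByMonicHom_apply,
        (Polynomial.modByMonic_eq_zero_iff_dvd hq).mpr (dvd_mul_left _ _), zero_sub,
        Polynomial.coeff_neg, hδ.map_neg, map_sum, Polynomial.finsetSum_coeff]
      refine hδ.sum_le fun j hj ↦ ?_
      have hj := Finset.mem_range.mp hj
      rw [map_smul, Polynomial.coeff_smul, smul_eq_mul, Polynomial.modByMonicHom_apply]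
      refine (hδ.mul_le (hc j) (ih (b + j) (by omega))).trans ?_
      calc h + (b + j) * h = (b + j + 1) * h := by ring
        _ ≤ (b + q.natDegree) * h := Nat.mul_le_mul_right h (by omega)

/-- The degree for which the coefficients have degree `δ` and each variable has degree `h`. -/
noncomputable def weightedDegree (δ : R → ℕ) (h : ℕ) (p : MvPolynomial σ R) : ℕ :=
  p.support.sup fun α ↦ δ (coeff α p) + α.degree * h

theorem weightedDegree_le_iff {p : MvPolynomial σ R} :
    weightedDegree δ h p ≤ D ↔ ∀ α ∈ p.support, δ (coeff α p) + α.degree * h ≤ D :=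
  Finset.sup_le_iff

theorem weightedDegree_monomial_le (α : σ →₀ ℕ) (c : R) :
    weightedDegree δ h (monomial α c) ≤ δ c + α.degree * h := by
  classical
  refine weightedDegree_le_iff.mpr fun β hβ ↦ ?_
  rw [mem_support_iff, coeff_monomial] at hβ
  obtain rfl : α = β := of_not_not fun hne ↦ hβ (if_neg hne)
  rw [coeff_monomial, if_pos rfl]

theorem isDegreeLike_weightedDegree (hδ : IsDegreeLike δ) (h : ℕ) :
    IsDegreeLike (weightedDegree (σ := σ) δ h) := by
  classical
  have hzero : weightedDegree δ h (0 : MvPolynomial σ R) = 0 := by simp [weightedDegree]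
  have hadd {D : ℕ} {p q : MvPolynomial σ R} (hp : weightedDegree δ h p ≤ D)
      (hq : weightedDegree δ h q ≤ D) : weightedDegree δ h (p + q) ≤ D := by
    rw [weightedDegree_le_iff] at hp hq ⊢
    intro α hα
    have hmap := hδ.map_add_le (coeff α p) (coeff α q)
    rw [mem_support_iff, coeff_add] at hα
    rw [coeff_add]
    by_cases hαp : coeff α p = 0
    · simp only [hαp, zero_add] at hα ⊢
      exact hq α (mem_support_iff.mpr hα)
    by_cases hαq : coeff α q = 0
    · simp only [hαq, add_zero] at hα ⊢
      exact hp α (mem_support_iff.mpr hαp)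
    have hp := hp α (mem_support_iff.mpr hαp)
    have hq := hq α (mem_support_iff.mpr hαq)
    omega
  have hsum {ι : Type _} {s : Finset ι} {D : ℕ} {f : ι → MvPolynomial σ R}
      (hf : ∀ i ∈ s, weightedDegree δ h (f i) ≤ D) : weightedDegree δ h (∑ i ∈ s, f i) ≤ D :=
    Finset.sum_induction f (weightedDegree δ h · ≤ D) (fun _ _ ↦ hadd) (hzero.trans_le D.zero_le) hf
  refine ⟨hzero, ?_, fun p ↦ ?_, fun p q ↦ hadd (le_max_left _ _) (le_max_right _ _), fun p q ↦ ?_⟩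
  · simpa [hδ.map_one] using weightedDegree_monomial_le (δ := δ) (h := h) (0 : σ →₀ ℕ) 1
  · simp [weightedDegree, hδ.map_neg]
  · rw [p.as_sum, q.as_sum, Finset.sum_mul_sum, ← p.as_sum, ← q.as_sum]
    refine hsum fun α hα ↦ hsum fun β hβ ↦ ?_
    rw [monomial_mul]
    refine (weightedDegree_monomial_le _ _).trans ?_
    have hp := weightedDegree_le_iff.mp (le_refl (weightedDegree δ h p)) α hα
    have hq := weightedDegree_le_iff.mp (le_refl (weightedDegree δ h q)) β hβ
    have hmul := hδ.map_mul_le (coeff α p) (coeff β q)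
    rw [map_add, add_mul]
    omega

theorem weightedDegree_C_le (c : R) : weightedDegree δ h (C c : MvPolynomial σ R) ≤ δ c := by
  simpa using weightedDegree_monomial_le (δ := δ) (h := h) (0 : σ →₀ ℕ) c

theorem weightedDegree_X_le (hδ : IsDegreeLike δ) (i : σ) :
    weightedDegree δ h (X i : MvPolynomial σ R) ≤ h := by
  refine (weightedDegree_monomial_le (Finsupp.single i 1) 1).trans ?_
  simp [hδ.map_one]

theorem IsDegreeLike.nf_le (hδ : IsDegreeLike δ) [Fintype σ] {e : ℕ}
    {q : σ → Polynomial R} (hq : ∀ i, (q i).Monic) (hc : ∀ i j, δ ((q i).coeff j) ≤ h)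
    {p : MvPolynomial σ R} (hp : weightedDegree δ h p ≤ D) (β : σ → Fin e) :
    δ (nf e q p β) ≤ D := by
  conv_lhs => rw [p.as_sum]
  rw [map_sum, Finset.sum_apply]
  refine hδ.sum_le fun α hα ↦ ?_
  rw [nf_monomial]
  refine (hδ.mul_le le_rfl (hδ.prod_le fun i _ ↦
    hδ.coeff_X_pow_modByMonic_le (hq i) (hc i) (α i) (β i))).trans ?_
  rw [← Finset.sum_mul, ← Finsupp.degree_eq_sum]
  exact weightedDegree_le_iff.mp hp α hα

end WeightedDegree

/-! ### Bounded Noether normalisation -/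

section ScaleVars

variable {k σ τ : Type*} [CommRing k] (f : τ → σ) (s : σ → MvPolynomial τ k)

/-- The substitution `yᵢ ↦ sᵢ xᵢ` on polynomials whose coefficients are polynomials in some of the
variables `x`, selected by `f`. -/
noncomputable def scaleVars : MvPolynomial σ (MvPolynomial τ k) →+* MvPolynomial σ k :=
  eval₂Hom (rename f : MvPolynomial τ k →ₐ[k] MvPolynomial σ k) fun i ↦ rename f (s i) * X i

@[simp]
theorem scaleVars_C (c : MvPolynomial τ k) : scaleVars f s (C c) = rename f c := by
  simp [scaleVars]

@[simp]
theorem scaleVars_X (i : σ) : scaleVars f s (X i) = rename f (s i) * X i := by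
  simp [scaleVars]

theorem scaleVars_smul (c : MvPolynomial τ k) (p : MvPolynomial σ (MvPolynomial τ k)) :
    scaleVars f s (c • p) = rename f c * scaleVars f s p := by
  rw [smul_eq_C_mul, map_mul, scaleVars_C]

theorem scaleVars_monomial [Fintype σ] (α : σ →₀ ℕ) (c : MvPolynomial τ k) :
    scaleVars f s (monomial α c) =
      rename f c * ((∏ i, rename f (s i) ^ α i) * ∏ i, X i ^ α i) := by
  rw [monomial_eq, Finsupp.prod_fintype _ _ fun i ↦ pow_zero _]
  simp [mul_pow, Finset.prod_mul_distrib]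

variable {f s}

theorem exists_scaleVars_eq [Fintype σ] {e N : ℕ} (hs : ∀ i, (s i).totalDegree ≤ e)
    {p : MvPolynomial σ k} (hp : p.totalDegree ≤ N) (h : ℕ) :
    ∃ p', scaleVars f s p' = rename f (∏ i, s i) ^ N * p ∧
      weightedDegree totalDegree h p' ≤ Fintype.card σ * (N * e) + N * h := by
  have hδ := isDegreeLike_totalDegree τ k
  have hα {α : σ →₀ ℕ} (hα : α ∈ p.support) : α.degree ≤ N := (le_totalDegree hα).trans hp
  refine ⟨∑ α ∈ p.support, monomial α (C (coeff α p) * ∏ i, s i ^ (N - α i)), ?_,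
    (isDegreeLike_weightedDegree hδ h).sum_le fun α h ↦ ?_⟩
  · conv_rhs => rw [p.as_sum, Finset.mul_sum]
    rw [map_sum]
    refine Finset.sum_congr rfl fun α h ↦ ?_
    have hprod : (∏ i, rename f (s i) ^ (N - α i)) * ∏ i, rename f (s i) ^ α i =
        rename f (∏ i, s i) ^ N := by
      rw [← Finset.prod_mul_distrib, map_prod, ← Finset.prod_pow]
      refine Finset.prod_congr rfl fun i _ ↦ ?_
      rw [← pow_add, Nat.sub_add_cancel ((Finsupp.le_degree i α).trans (hα h))]
    rw [scaleVars_monomial, monomial_eq, Finsupp.prod_fintype _ _ fun i ↦ pow_zero _, ← hprod,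
      map_mul, map_prod, rename_C]
    simp only [map_pow]
    ring
  · refine (weightedDegree_monomial_le _ _).trans (add_le_add ?_ (Nat.mul_le_mul_right _ (hα h)))
    refine (hδ.mul_le (totalDegree_C _).le (hδ.prod_le fun i _ ↦
      (hδ.pow_le (hs i) _).trans (Nat.mul_le_mul_right e (N.sub_le (α i))))).trans ?_
    simp

/-- `scaleVars f s` is inverted by `xᵢ ↦ yᵢ / sᵢ` wherever the `sᵢ` are invertible and the variables
`yᵢ` selected by `f` agree with the corresponding coefficients. -/
theorem exists_comp_scaleVars_eq {Λ : Type*} [CommRing Λ] (hs : ∀ j, s (f j) = 1)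
    (π : MvPolynomial σ (MvPolynomial τ k) →+* Λ) (hunit : ∀ i, IsUnit (π (C (s i))))
    (hf : ∀ j, π (X (f j)) = π (C (X j))) :
    ∃ μ : MvPolynomial σ k →+* Λ, μ.comp (scaleVars f s) = π := by
  choose z hz using fun i ↦ (hunit i).exists_right_inv
  let μ : MvPolynomial σ k →+* Λ := eval₂Hom ((π.comp C).comp C) fun i ↦ z i * π (X i)
  have hμ_rename : μ.comp (rename f : MvPolynomial τ k →ₐ[k] _) = π.comp C := by
    refine ringHom_ext (fun a ↦ by simp [μ]) fun j ↦ ?_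
    have hzj : z (f j) = 1 := by simpa [hs] using hz (f j)
    simp [μ, hzj, hf]
  have hμ_rename_apply (c : MvPolynomial τ k) : μ (rename f c) = π (C c) :=
    RingHom.congr_fun hμ_rename c
  refine ⟨μ, ringHom_ext (fun c ↦ by simp [hμ_rename_apply]) fun i ↦ ?_⟩
  have hμX : μ (X i) = z i * π (X i) := by simp [μ]
  rw [RingHom.comp_apply, scaleVars_X, map_mul, hμ_rename_apply, hμX, ← mul_assoc, hz, one_mul]

end ScaleVars

section QuotientAway

variable {T : Type*} [CommRing T]

/-- The canonical map from a ring to its quotient by `J` with `x` inverted. -/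
noncomputable def quotientAway (J : Ideal T) (x : T) :
    T →+* Localization.Away (Ideal.Quotient.mk J x) :=
  (algebraMap (T ⧸ J) _).comp (Ideal.Quotient.mk J)

theorem isUnit_quotientAway (J : Ideal T) (x : T) : IsUnit (quotientAway J x x) :=
  IsLocalization.Away.algebraMap_isUnit (Ideal.Quotient.mk J x)

theorem quotientAway_eq_zero_iff {J : Ideal T} {x p : T} :
    quotientAway J x p = 0 ↔ ∃ M, x ^ M * p ∈ J := by
  rw [quotientAway, RingHom.comp_apply,
    IsLocalization.map_eq_zero_iff (Submonoid.powers (Ideal.Quotient.mk J x)), Subtype.exists]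
  simp only [Submonoid.mem_powers_iff, exists_prop, exists_exists_eq_and, ← map_pow, ← map_mul,
    Ideal.Quotient.eq_zero_iff_mem]

end QuotientAway

/-- An ideal `I` of `k[x₁,…,xₙ]` together with variables `x_{f 0},…,x_{f (r-1)}` that are
independent modulo `I` in low degree, and monic relations of degree `e` over
`k[x_{f 0},…,x_{f (r-1)}]` for the multiples `s i * xᵢ` of all the variables. -/
structure NormData {k : Type*} [Field k] {n : ℕ} (r e d : ℕ)
    (I : Ideal (MvPolynomial (Fin n) k)) where
  gens : Set (MvPolynomial (Fin n) k)
  span_gens : Ideal.span gens = I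
  gens_totalDegree_le : ∀ g ∈ gens, g.totalDegree ≤ d
  f : Fin r → Fin n
  s : Fin n → MvPolynomial (Fin r) k
  q : Fin n → Polynomial (MvPolynomial (Fin r) k)
  one_le_n : 1 ≤ n
  one_le_d : 1 ≤ d
  le_e : 2 * n * d ≤ e
  s_ne_zero : ∀ i, s i ≠ 0
  s_totalDegree_le : ∀ i, (s i).totalDegree ≤ e
  s_f : ∀ j, s (f j) = 1
  q_monic : ∀ i, (q i).Monic
  q_natDegree : ∀ i, (q i).natDegree = e
  q_coeff_totalDegree_le : ∀ i j, ((q i).coeff j).totalDegree ≤ e ^ 2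
  scaleVars_aeval_q_mem : ∀ i, scaleVars f s (Polynomial.aeval (X i) (q i)) ∈ I
  rename_notMem : ∀ c : MvPolynomial (Fin r) k,
    c ≠ 0 → c.totalDegree ≤ e ^ (n + 4) → rename f c ∉ I
  mem_of_mul_mem : ∀ a : MvPolynomial (Fin n) k,
    a.totalDegree ≤ e ^ (4 * n + 8) → a ∉ I → ∀ g, a * g ∈ I → g ∈ I

namespace NormData

variable {k : Type*} [Field k] {n r e d : ℕ} {I : Ideal (MvPolynomial (Fin n) k)}
  (D : NormData r e d I)

include D in
theorem two_mul_le : 2 * n ≤ e :=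
  (Nat.le_mul_of_pos_right _ D.one_le_d).trans D.le_e

include D in
theorem two_le : 2 ≤ e :=
  (Nat.mul_le_mul_left 2 D.one_le_n).trans D.two_mul_le

include D in
theorem pow_le_pow {a b : ℕ} (hab : a ≤ b) : e ^ a ≤ e ^ b :=
  Nat.pow_le_pow_right (one_le_two.trans D.two_le) hab

/-- The substitution `yᵢ ↦ sᵢ xᵢ` of the normalisation. -/
noncomputable abbrev θ : MvPolynomial (Fin n) (MvPolynomial (Fin r) k) →+* MvPolynomial (Fin n) k :=
  scaleVars D.f D.s

theorem θ_mem_of_mem_relIdeal {p : MvPolynomial (Fin n) (MvPolynomial (Fin r) k)}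
    (hp : p ∈ relIdeal D.q) : D.θ p ∈ I := by
  have hle : relIdeal D.q ≤ I.comap D.θ :=
    Ideal.span_le.mpr (Set.range_subset_iff.mpr D.scaleVars_aeval_q_mem)
  exact hle hp

theorem θ_boxPoly_nf_mem_iff (p : MvPolynomial (Fin n) (MvPolynomial (Fin r) k)) :
    D.θ (boxPoly (nf e D.q p)) ∈ I ↔ D.θ p ∈ I := by
  have hmem := D.θ_mem_of_mem_relIdeal (sub_boxPoly_nf_mem D.q_monic D.q_natDegree p)
  rw [map_sub] at hmem
  exact ⟨fun h ↦ by simpa using add_mem hmem h, fun h ↦ by simpa using sub_mem h hmem⟩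

/-- The elements of low weighted degree that `θ` maps into `I`. -/
def lowRel : Set (MvPolynomial (Fin n) (MvPolynomial (Fin r) k)) :=
  {t | D.θ t ∈ I ∧ weightedDegree totalDegree (e ^ 2) t ≤ e ^ 3}

theorem X_sub_C_mem_lowRel (j : Fin r) : X (D.f j) - C (X j) ∈ D.lowRel := by
  have hδ := isDegreeLike_totalDegree (Fin r) k
  have hX : (X j : MvPolynomial (Fin r) k).totalDegree ≤ e ^ 2 := by
    rw [totalDegree_X]
    exact Nat.one_le_pow _ _ (one_le_two.trans D.two_le)
  refine ⟨by simp [D.s_f], ((isDegreeLike_weightedDegree hδ _).sub_le (weightedDegree_X_le hδ _)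
    ((weightedDegree_C_le _).trans hX)).trans (D.pow_le_pow (by omega))⟩

theorem exists_mem_lowRel_of_mem_gens {g : MvPolynomial (Fin n) k} (hg : g ∈ D.gens) :
    ∃ t ∈ D.lowRel, D.θ t = rename D.f (∏ i, D.s i) ^ d * g := by
  have hgI : g ∈ I := D.span_gens ▸ Ideal.subset_span hg
  obtain ⟨t, ht, hdeg⟩ :=
    exists_scaleVars_eq (f := D.f) D.s_totalDegree_le (D.gens_totalDegree_le g hg) (e ^ 2)
  refine ⟨t, ⟨ht ▸ Ideal.mul_mem_left _ _ hgI, hdeg.trans ?_⟩, ht⟩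
  have hnd : 2 * (n * d) ≤ e := by linarith [D.le_e]
  have hd : 2 * d ≤ e := hnd.trans' (by nlinarith [D.one_le_n])
  rw [Fintype.card_fin]
  calc n * (d * e) + d * e ^ 2 = n * d * e + d * e ^ 2 := by ring
    _ ≤ n * d * e ^ 2 + d * e ^ 2 := by gcongr; exact Nat.le_self_pow two_ne_zero e
    _ ≤ e ^ 3 := by nlinarith [Nat.zero_le (e ^ 2)]

/-- The inverse of `θ` is constructed after inverting the `sᵢ` and dividing by the low relations. -/
theorem exists_C_mul_mem_span_lowRel {p : MvPolynomial (Fin n) (MvPolynomial (Fin r) k)}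
    (hp : D.θ p ∈ I) : ∃ M, C ((∏ i, D.s i) ^ M) * p ∈ Ideal.span D.lowRel := by
  let π := quotientAway (Ideal.span D.lowRel) (C (∏ i, D.s i))
  have hπ {t} (ht : t ∈ Ideal.span D.lowRel) : π t = 0 :=
    quotientAway_eq_zero_iff.mpr ⟨0, by simpa using ht⟩
  have hx : IsUnit (π (C (∏ i, D.s i))) := isUnit_quotientAway _ _
  have hunit (i : Fin n) : IsUnit (π (C (D.s i))) :=
    isUnit_of_dvd_unit (map_dvd π (map_dvd C (Finset.dvd_prod_of_mem D.s (Finset.mem_univ i)))) hx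
  obtain ⟨μ, hμ⟩ := exists_comp_scaleVars_eq D.s_f π hunit fun j ↦ sub_eq_zero.mp <| by
    rw [← map_sub]
    exact hπ (Ideal.subset_span (D.X_sub_C_mem_lowRel j))
  have hμθ (t) : μ (D.θ t) = π t := RingHom.congr_fun hμ t
  have hI : I ≤ RingHom.ker μ := by
    refine D.span_gens.ge.trans (Ideal.span_le.mpr fun g hg ↦ ?_)
    obtain ⟨t, ht, hθt⟩ := D.exists_mem_lowRel_of_mem_gens hg
    have hzero := (hμθ t).trans (hπ (Ideal.subset_span ht))
    rw [hθt, map_mul, map_pow, ← scaleVars_C D.f D.s, hμθ] at hzero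
    exact (hx.pow d).mul_right_eq_zero.mp hzero
  obtain ⟨M, hM⟩ := quotientAway_eq_zero_iff.mp ((hμθ p).symm.trans (hI hp))
  exact ⟨M, C_pow (∏ i, D.s i) M ▸ hM⟩

/-- The vectors of low degree on the box whose polynomial lies in the preimage of `I`. -/
def lowVec : Set ((Fin n → Fin e) → MvPolynomial (Fin r) k) :=
  {v | D.θ (boxPoly v) ∈ I ∧ ∀ β, (v β).totalDegree ≤ e ^ 4}

theorem nf_box_mul_mem_lowVec {t : MvPolynomial (Fin n) (MvPolynomial (Fin r) k)}
    (ht : t ∈ D.lowRel) (β : Fin n → Fin e) : nf e D.q ((∏ i, X i ^ (β i).1) * t) ∈ D.lowVec := by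
  have hδ := isDegreeLike_totalDegree (Fin r) k
  have hw := isDegreeLike_weightedDegree (σ := Fin n) hδ (e ^ 2)
  refine ⟨(D.θ_boxPoly_nf_mem_iff _).mpr (map_mul D.θ _ t ▸ Ideal.mul_mem_left _ _ ht.1),
    hδ.nf_le D.q_monic D.q_coeff_totalDegree_le ((hw.mul_le (hw.prod_le fun i _ ↦
      (hw.pow_le (weightedDegree_X_le hδ i) _).trans
        (Nat.mul_le_mul_right (e ^ 2) (β i).2.le)) ht.2).trans ?_)⟩
  calc ∑ _ : Fin n, e * e ^ 2 + e ^ 3 = (n + 1) * e ^ 3 := by simp; ring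
    _ ≤ e * e ^ 3 := by
      have h2n := D.two_mul_le
      have hn := D.one_le_n
      gcongr
      omega
    _ = e ^ 4 := by ring

theorem nf_mem_span_lowVec {p : MvPolynomial (Fin n) (MvPolynomial (Fin r) k)}
    (hp : p ∈ Ideal.span D.lowRel) :
    nf e D.q p ∈ Submodule.span (MvPolynomial (Fin r) k) D.lowVec := by
  obtain ⟨m, a, t, rfl⟩ := Submodule.mem_span_set'.mp hp
  rw [map_sum]
  refine sum_mem fun i _ ↦ ?_
  rw [smul_eq_mul, nf_mul D.q_monic D.q_natDegree, boxPoly_apply, Finset.sum_mul, map_sum]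
  refine sum_mem fun β _ ↦ ?_
  rw [mul_assoc, ← smul_eq_C_mul, map_smul]
  exact Submodule.smul_mem _ _ (Submodule.subset_span (D.nf_box_mul_mem_lowVec (t i).2 β))

theorem mem_of_rename_mul_mem {c : MvPolynomial (Fin r) k} (hc : c ≠ 0)
    (hdeg : c.totalDegree ≤ e ^ (n + 4)) {g : MvPolynomial (Fin n) k}
    (hg : rename D.f c * g ∈ I) : g ∈ I :=
  D.mem_of_mul_mem _ ((totalDegree_rename_le _ _).trans (hdeg.trans (D.pow_le_pow (by omega))))
    (D.rename_notMem c hc hdeg) g hg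

theorem mem_of_prod_s_pow_mul_mem {N : ℕ} {g : MvPolynomial (Fin n) k}
    (hg : rename D.f (∏ i, D.s i) ^ N * g ∈ I) : g ∈ I := by
  have hprod (T : Finset (Fin n)) {g : MvPolynomial (Fin n) k}
      (hg : rename D.f (∏ i ∈ T, D.s i) * g ∈ I) : g ∈ I := by
    induction T using Finset.induction_on with
    | empty => simpa using hg
    | insert i T hi ih =>
      rw [Finset.prod_insert hi, map_mul, mul_assoc] at hg
      exact ih (D.mem_of_rename_mul_mem (D.s_ne_zero i)
        ((D.s_totalDegree_le i).trans (Nat.le_self_pow (by omega) e)) hg)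
  induction N with
  | zero => simpa using hg
  | succ N ih =>
    rw [pow_succ', mul_assoc] at hg
    exact ih (hprod _ hg)

theorem exists_smul_mem_span_lowVec {v : (Fin n → Fin e) → MvPolynomial (Fin r) k}
    {t : MvPolynomial (Fin r) k} (ht : t ≠ 0) (hv : rename D.f t * D.θ (boxPoly v) ∈ I) :
    ∃ t' : MvPolynomial (Fin r) k, t' ≠ 0 ∧
      t' • v ∈ Submodule.span (MvPolynomial (Fin r) k) D.lowVec := by
  rw [← scaleVars_smul, ← map_smul] at hv
  obtain ⟨M, hM⟩ := D.exists_C_mul_mem_span_lowRel hv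
  have hmem := D.nf_mem_span_lowVec hM
  rw [← smul_eq_C_mul, map_smul, nf_boxPoly D.q_monic D.q_natDegree, smul_smul] at hmem
  exact ⟨_, mul_ne_zero
    (pow_ne_zero _ (Finset.prod_ne_zero_iff.mpr fun i _ ↦ D.s_ne_zero i)) ht, hmem⟩

/-- The matrix whose columns are the relations of low degree. -/
def lowMatrix : Matrix (Fin n → Fin e) D.lowVec (MvPolynomial (Fin r) k) :=
  Matrix.of fun β v ↦ v.1 β

theorem range_col_lowMatrix : Set.range D.lowMatrix.col = D.lowVec :=
  Subtype.range_coe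

theorem θ_boxPoly_mem_of_cramerCokernel_mulVec_eq_zero {m : Type*} [Fintype m] [DecidableEq m]
    {f : m → Fin n → Fin e} {g : m → D.lowVec} (hminor : IsBasicMinor D.lowMatrix f g)
    (hm : Fintype.card m ≤ e ^ n) {v : (Fin n → Fin e) → MvPolynomial (Fin r) k}
    (hv : (cramerCokernel D.lowMatrix f g).mulVec v = 0) : D.θ (boxPoly v) ∈ I := by
  have hdeg : (D.lowMatrix.submatrix f g).det.totalDegree ≤ e ^ (n + 4) := by
    refine ((isDegreeLike_totalDegree _ k).det_le fun _ l ↦ (g l).2.2 _).trans ?_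
    rw [pow_add]
    exact Nat.mul_le_mul_right _ hm
  refine D.mem_of_rename_mul_mem hminor.det_ne_zero hdeg ?_
  rw [cramerCokernel_mulVec, sub_eq_zero] at hv
  rw [← scaleVars_smul, ← map_smul, hv, map_sum, map_sum]
  refine sum_mem fun l _ ↦ ?_
  rw [map_smul, scaleVars_smul]
  exact Ideal.mul_mem_left _ _ (g l).2.1

theorem exists_mulVec_eq_zero_iff :
    ∃ Φ : Matrix (Fin n → Fin e) (Fin n → Fin e) (MvPolynomial (Fin r) k),
      (∀ i j, (Φ i j).totalDegree ≤ e ^ (n + 5)) ∧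
        ∀ v, Φ.mulVec v = 0 ↔ D.θ (boxPoly v) ∈ I := by
  obtain ⟨ρ, hρ, f, g, hminor⟩ := exists_isBasicMinor_of_finite_rows D.lowMatrix
  rw [Fintype.card_fun, Fintype.card_fin, Fintype.card_fin] at hρ
  refine ⟨cramerCokernel D.lowMatrix f g, fun i j ↦ ?_, fun v ↦ ⟨fun hv ↦
    D.θ_boxPoly_mem_of_cramerCokernel_mulVec_eq_zero hminor (by simpa using hρ) hv, fun hv ↦ ?_⟩⟩
  · refine ((isDegreeLike_totalDegree _ k).cramerCokernel_le
      (fun _ v ↦ v.2.2 _) f g i j).trans ?_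
    rw [Fintype.card_fin]
    calc (ρ + 1) * e ^ 4 ≤ (e ^ n * e) * e ^ 4 := by
          gcongr
          nlinarith [D.two_le, Nat.one_le_pow n e (one_le_two.trans D.two_le)]
      _ = e ^ (n + 5) := by ring
  · obtain ⟨t, ht, hspan⟩ := D.exists_smul_mem_span_lowVec (t := 1) one_ne_zero (by simpa using hv)
    rw [← range_col_lowMatrix] at hspan
    exact hminor.cramerCokernel_mulVec_eq_zero ht hspan

/-- The relations among the box monomials are the kernel of a matrix over a domain. -/
theorem torsionFree {t : MvPolynomial (Fin r) k} (ht : t ≠ 0) {p : MvPolynomial (Fin n) k}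
    (hp : rename D.f t * p ∈ I) : p ∈ I := by
  obtain ⟨p', hp', -⟩ := exists_scaleVars_eq (f := D.f) D.s_totalDegree_le (le_refl p.totalDegree) 0
  obtain ⟨Φ, -, hΦ⟩ := D.exists_mulVec_eq_zero_iff
  refine D.mem_of_prod_s_pow_mul_mem (N := p.totalDegree) ?_
  rw [← hp', ← θ_boxPoly_nf_mem_iff, ← hΦ]
  have hmul : Φ.mulVec (t • nf e D.q p') = 0 := by
    rw [hΦ, ← map_smul, θ_boxPoly_nf_mem_iff, scaleVars_smul, hp', mul_left_comm]
    exact Ideal.mul_mem_left _ _ hp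
  rw [Matrix.mulVec_smul] at hmul
  exact (smul_eq_zero.mp hmul).resolve_left ht

end NormData

/-! ### Irreducible equations -/

theorem IsDegreeLike.exists_mulVec_eq_zero {R ι κ : Type*} [CommRing R] [IsDomain R] [Fintype ι]
    [Fintype κ] {δ : R → ℕ} (hδ : IsDegreeLike δ) (hcard : Fintype.card ι < Fintype.card κ)
    {A : Matrix ι κ R} {a : ℕ} (hA : ∀ i j, δ (A i j) ≤ a) :
    ∃ v ≠ 0, A.mulVec v = 0 ∧ ∀ j, δ (v j) ≤ (Fintype.card ι + 1) * a := by
  classical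
  obtain ⟨ρ, hρ, f, g, hminor⟩ := exists_isBasicMinor_of_finite_rows A
  obtain ⟨j, hj⟩ : ∃ j, ∀ l, j ≠ g l := by
    by_contra! hsurj
    have hle := Fintype.card_le_of_surjective g fun j ↦ (hsurj j).imp fun _ ↦ Eq.symm
    rw [Fintype.card_fin] at hle
    omega
  refine ⟨(cramerKernel A f g).col j, fun hzero ↦ hminor.det_ne_zero ?_,
    hminor.mulVec_cramerKernel_col j, fun i ↦ (hδ.cramerKernel_le hA f g i j).trans ?_⟩
  · simpa [cramerKernel, Matrix.mul_apply, Matrix.one_apply, hj] using congrFun hzero j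
  · rw [Fintype.card_fin]
    gcongr

/-- The values of the factors of an equation of low degree have low degree as well, hence are
non-zero-divisors or zero modulo `I`. -/
theorem exists_irreducible_map_mem {σ τ k : Type*} [Field k] {I : Ideal (MvPolynomial τ k)}
    (hI : I ≠ ⊤) (φ : MvPolynomial σ k →ₐ[k] MvPolynomial τ k) {B w : ℕ}
    (hφ : ∀ i, (φ (X i)).totalDegree ≤ w)
    (hmul : ∀ a : MvPolynomial τ k, a.totalDegree ≤ B * w → a ∉ I → ∀ g, a * g ∈ I → g ∈ I)
    {χ : MvPolynomial σ k} (hχ_ne : χ ≠ 0) (hχ_deg : χ.totalDegree ≤ B) (hχ : φ χ ∈ I) :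
    ∃ π, Irreducible π ∧ φ π ∈ I := by
  induction χ using WfDvdMonoid.induction_on_irreducible with
  | zero => exact absurd rfl hχ_ne
  | unit a ha => exact absurd (Ideal.eq_top_of_isUnit_mem I hχ (ha.map φ)) hI
  | mul a π ha hπ ih =>
    have hdeg {x} (hx : x ∣ π * a) : x.totalDegree ≤ B :=
      (totalDegree_le_of_dvd_of_isDomain hx hχ_ne).trans hχ_deg
    by_cases hπI : φ π ∈ I
    · exact ⟨π, hπ, hπI⟩
    · refine ih ha (hdeg (dvd_mul_left a π)) (hmul _ ?_ hπI _ (map_mul φ π a ▸ hχ))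
      exact (totalDegree_algHom_le φ hφ π).trans
        (Nat.mul_le_mul_right w (hdeg (dvd_mul_right π a)))

namespace NormData

variable {k : Type*} [Field k] {n r e d : ℕ} {I : Ideal (MvPolynomial (Fin n) k)}
  (D : NormData r e d I)

include D in
theorem one_notMem : 1 ∉ I := by
  simpa using D.rename_notMem 1 one_ne_zero (by simp)

theorem rename_mem_iff {c : MvPolynomial (Fin r) k} : rename D.f c ∈ I ↔ c = 0 := by
  refine ⟨fun hc ↦ ?_, fun hc ↦ by simp [hc]⟩
  by_contra hc_ne
  exact D.one_notMem (D.torsionFree hc_ne (by rwa [mul_one]))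

theorem θ_aeval_sum_monomial_mem_iff {L : ℕ} (c : Fin L → MvPolynomial (Fin r) k)
    (u : MvPolynomial (Fin n) (MvPolynomial (Fin r) k)) :
    D.θ (Polynomial.aeval u (∑ l : Fin L, Polynomial.monomial l.1 (c l))) ∈ I ↔
      D.θ (boxPoly ((Matrix.of fun β (l : Fin L) ↦ nf e D.q (u ^ l.1) β).mulVec c)) ∈ I := by
  have hval : Polynomial.aeval u (∑ l : Fin L, Polynomial.monomial l.1 (c l)) =
      ∑ l, c l • u ^ l.1 := by
    simp [Polynomial.aeval_monomial, Algebra.smul_def]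
  have hnf : nf e D.q (∑ l, c l • u ^ l.1) =
      (Matrix.of fun β (l : Fin L) ↦ nf e D.q (u ^ l.1) β).mulVec c := by
    funext β
    simp [Matrix.mulVec, dotProduct, mul_comm]
  rw [hval, ← D.θ_boxPoly_nf_mem_iff, hnf]

/-- The `e ^ n + 1` first powers of `u` are dependent modulo the `e ^ n` box monomials. -/
theorem exists_θ_aeval_mem {u : MvPolynomial (Fin n) (MvPolynomial (Fin r) k)}
    (hu : weightedDegree totalDegree (e ^ 2) u ≤ e ^ (n + 3)) :
    ∃ χ : Polynomial (MvPolynomial (Fin r) k), χ ≠ 0 ∧ χ.natDegree ≤ e ^ n ∧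
      (∀ a, (χ.coeff a).totalDegree ≤ e ^ (3 * n + 4)) ∧ D.θ (Polynomial.aeval u χ) ∈ I := by
  have hδ := isDegreeLike_totalDegree (Fin r) k
  let M : Matrix (Fin n → Fin e) (Fin (e ^ n + 1)) (MvPolynomial (Fin r) k) :=
    Matrix.of fun β l ↦ nf e D.q (u ^ l.1) β
  have hM (β l) : (M β l).totalDegree ≤ e ^ n * e ^ (n + 3) :=
    hδ.nf_le D.q_monic D.q_coeff_totalDegree_le
      (((isDegreeLike_weightedDegree hδ _).pow_le hu _).trans
        (Nat.mul_le_mul_right _ (Nat.le_of_lt_succ l.2))) β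
  obtain ⟨c, hc_ne, hMc, hc⟩ := hδ.exists_mulVec_eq_zero (by simp) hM
  have hbound : (e ^ n + 1) * (e ^ n * e ^ (n + 3)) ≤ e ^ (3 * n + 4) := by
    calc (e ^ n + 1) * (e ^ n * e ^ (n + 3)) ≤ e ^ n * e * (e ^ n * e ^ (n + 3)) := by
          gcongr
          nlinarith [D.two_le, Nat.one_le_pow n e (one_le_two.trans D.two_le)]
      _ = e ^ (3 * n + 4) := by ring
  rw [Fintype.card_fun, Fintype.card_fin, Fintype.card_fin] at hc
  have hcoeff (a : ℕ) : (∑ l, Polynomial.monomial l.1 (c l)).coeff a =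
      if ha : a < e ^ n + 1 then c ⟨a, ha⟩ else 0 := by
    simp only [Polynomial.finsetSum_coeff, Polynomial.coeff_monomial]
    split_ifs with ha
    · rw [Finset.sum_eq_single_of_mem ⟨a, ha⟩ (Finset.mem_univ _)
        fun l _ hl ↦ if_neg fun h ↦ hl (Fin.ext h), if_pos rfl]
    · exact Finset.sum_eq_zero fun l _ ↦ if_neg (by have := l.2; omega)
  refine ⟨∑ l, Polynomial.monomial l.1 (c l), fun hzero ↦ hc_ne (funext fun l ↦ ?_),
    Polynomial.natDegree_sum_le_of_forall_le _ _ fun l _ ↦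
      (Polynomial.natDegree_monomial_le _).trans (Nat.le_of_lt_succ l.2), fun a ↦ ?_, ?_⟩
  · simpa [hzero, Nat.lt_succ_iff.mp l.2] using (hcoeff l).symm
  · rw [hcoeff]
    split_ifs
    · exact (hc _).trans hbound
    · simp
  · rw [θ_aeval_sum_monomial_mem_iff, show Matrix.mulVec _ c = 0 from hMc]
    simp

theorem exists_irreducible_θ_aeval_mem {u : MvPolynomial (Fin n) (MvPolynomial (Fin r) k)}
    (hu : weightedDegree totalDegree (e ^ 2) u ≤ e ^ (n + 3))
    (hθu : (D.θ u).totalDegree ≤ e ^ (n + 3)) :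
    ∃ π : Polynomial (MvPolynomial (Fin r) k), Irreducible π ∧ D.θ (Polynomial.aeval u π) ∈ I := by
  obtain ⟨χ, hχ_ne, hχ_natDegree, hχ_coeff, hχ⟩ := D.exists_θ_aeval_mem hu
  let ev : Polynomial (MvPolynomial (Fin r) k) →ₐ[k] MvPolynomial (Fin n) k :=
    { D.θ.comp (Polynomial.aeval u : Polynomial (MvPolynomial (Fin r) k) →ₐ[_] _).toRingHom with
      commutes' := fun c ↦ by
        simp [Polynomial.algebraMap_apply, MvPolynomial.algebraMap_eq] }
  let φ := ev.comp (finSuccEquiv k r : MvPolynomial (Fin (r + 1)) k →ₐ[k] _)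
  have hφ (i : Fin (r + 1)) : (φ (X i)).totalDegree ≤ e ^ (n + 3) := by
    cases i using Fin.cases with
    | zero =>
      change (D.θ (Polynomial.aeval u (finSuccEquiv k r (X 0)))).totalDegree ≤ _
      rwa [finSuccEquiv_X_zero, Polynomial.aeval_X]
    | succ j =>
      change (D.θ (Polynomial.aeval u (finSuccEquiv k r (X j.succ)))).totalDegree ≤ _
      rw [finSuccEquiv_X_succ, Polynomial.aeval_C, MvPolynomial.algebraMap_eq, scaleVars_C,
        rename_X, totalDegree_X]
      exact Nat.one_le_pow _ _ (one_le_two.trans D.two_le)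
  have hχ_deg : ((finSuccEquiv k r).symm χ).totalDegree ≤ e ^ (3 * n + 5) := by
    refine (totalDegree_finSuccEquiv_symm_le hχ_natDegree hχ_coeff).trans ?_
    calc e ^ (3 * n + 4) + e ^ n ≤ e ^ (3 * n + 4) * 2 := by
          rw [mul_two]
          exact Nat.add_le_add_left (D.pow_le_pow (by omega)) _
      _ ≤ e ^ (3 * n + 4) * e := Nat.mul_le_mul_left _ D.two_le
  obtain ⟨π, hπ, hπI⟩ := exists_irreducible_map_mem
    ((Ideal.ne_top_iff_one I).mpr D.one_notMem) φ hφ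
    (fun a ha ↦ D.mem_of_mul_mem a (ha.trans_eq (by ring))) (by simpa using hχ_ne) hχ_deg
    (by simpa [φ, ev] using hχ)
  exact ⟨_, (MulEquiv.irreducible_iff (finSuccEquiv k r)).mpr hπ, hπI⟩

theorem exists_irreducible_θ_aeval_sum_mem {b : Fin n → MvPolynomial (Fin r) k}
    (hb : ∀ i, (b i).totalDegree ≤ e ^ (n + 2)) :
    ∃ π : Polynomial (MvPolynomial (Fin r) k),
      Irreducible π ∧ D.θ (Polynomial.aeval (∑ i, C (b i) * X i) π) ∈ I := by
  have hδ := isDegreeLike_totalDegree (Fin r) k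
  have hw := isDegreeLike_weightedDegree (σ := Fin n) hδ (e ^ 2)
  have hdeg := isDegreeLike_totalDegree (Fin n) k
  have hpow : e ^ (n + 2) + e ^ (n + 2) ≤ e ^ (n + 3) := by
    rw [← two_mul, pow_succ' e (n + 2)]
    exact Nat.mul_le_mul_right _ D.two_le
  have he : e ^ 2 ≤ e ^ (n + 2) := D.pow_le_pow (by omega)
  refine D.exists_irreducible_θ_aeval_mem (hw.sum_le fun i _ ↦ ?_) ?_
  · exact (hw.mul_le ((weightedDegree_C_le _).trans (hb i)) (weightedDegree_X_le hδ i)).trans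
      (by omega)
  · rw [map_sum]
    refine hdeg.sum_le fun i _ ↦ ?_
    rw [map_mul, scaleVars_C, scaleVars_X]
    refine (hdeg.mul_le ((totalDegree_rename_le _ _).trans (hb i))
      (hdeg.mul_le ((totalDegree_rename_le _ _).trans (D.s_totalDegree_le i))
        (totalDegree_X i).le)).trans ?_
    nlinarith [D.two_le]

theorem totalDegree_θ_boxPoly_le {v : (Fin n → Fin e) → MvPolynomial (Fin r) k} {B : ℕ}
    (hv : ∀ β, (v β).totalDegree ≤ B) : (D.θ (boxPoly v)).totalDegree ≤ B + e ^ 4 := by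
  have hdeg := isDegreeLike_totalDegree (Fin n) k
  rw [boxPoly_apply, map_sum]
  refine hdeg.sum_le fun β _ ↦ ?_
  have hX (i : Fin n) : (D.θ (X i ^ (β i).1)).totalDegree ≤ e * (e + 1) := by
    rw [map_pow, scaleVars_X]
    exact (hdeg.pow_le (hdeg.mul_le ((totalDegree_rename_le _ _).trans (D.s_totalDegree_le i))
      (totalDegree_X i).le) _).trans (Nat.mul_le_mul_right _ (β i).2.le)
  rw [map_mul, scaleVars_C, map_prod]
  refine hdeg.mul_le ((totalDegree_rename_le _ _).trans (hv β))
    ((hdeg.prod_le fun i _ ↦ hX i).trans ?_)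
  rw [Finset.sum_const, Finset.card_univ, Fintype.card_fin, smul_eq_mul]
  calc n * (e * (e + 1)) ≤ e * (e * (e * e)) := by
        gcongr
        · linarith [D.two_mul_le]
        · nlinarith [D.two_le]
    _ = e ^ 4 := by ring

include D in
/-- Without independent variables every element has low degree modulo `I`. -/
theorem isPrime_of_eq_zero (hr : r = 0) : I.IsPrime := by
  subst hr
  refine ⟨(Ideal.ne_top_iff_one I).mpr D.one_notMem, fun {p g} hpg ↦ ?_⟩
  by_contra! hcon
  obtain ⟨p', hp', -⟩ :=
    exists_scaleVars_eq (f := D.f) D.s_totalDegree_le (le_refl p.totalDegree) 0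
  have hp'I : D.θ (boxPoly (nf e D.q p')) ∉ I := by
    rw [θ_boxPoly_nf_mem_iff, hp']
    exact fun h ↦ hcon.1 (D.mem_of_prod_s_pow_mul_mem h)
  have hdeg : (D.θ (boxPoly (nf e D.q p'))).totalDegree ≤ 0 + e ^ 4 :=
    D.totalDegree_θ_boxPoly_le fun β ↦ by rw [eq_C_of_isEmpty (nf e D.q p' β), totalDegree_C]
  have hdiff := D.θ_mem_of_mem_relIdeal (sub_boxPoly_nf_mem D.q_monic D.q_natDegree p')
  have hmul : D.θ p' * g ∈ I := by
    rw [hp', mul_assoc]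
    exact Ideal.mul_mem_left _ _ hpg
  refine hcon.2 (D.mem_of_mul_mem _ (hdeg.trans ?_) hp'I g ?_)
  · rw [zero_add]
    exact D.pow_le_pow (by omega)
  · rw [map_sub] at hdiff
    simpa [sub_mul] using sub_mem hmul (Ideal.mul_mem_right g _ hdiff)

end NormData

/-! ### Frobenius roots -/

section RootMap

theorem exists_root_functional {k : Type*} [Field k] (p : ℕ) [Fact p.Prime] [CharP k p] {a : k}
    (ha : a ≠ 0) : ∃ φ : k →+ k, (∀ b c, φ (b ^ p * c) = b * φ c) ∧ φ a ≠ 0 := by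
  obtain ⟨l, hl⟩ : ∃ l : Module.Dual (frobenius k p).fieldRange k, l a ≠ 0 := by
    by_contra! h
    exact ha ((Module.forall_dual_apply_eq_zero_iff _ a).mp h)
  let root : k ≃+* (frobenius k p).fieldRange :=
    RingEquiv.ofBijective (frobenius k p).rangeRestrictField
      ⟨RingHom.injective _, fun ⟨_, y, hy⟩ ↦ ⟨y, Subtype.ext hy⟩⟩
  refine ⟨root.symm.toAddMonoidHom.comp l.toAddMonoidHom, fun b c ↦ ?_,
    (map_ne_zero_iff root.symm root.symm.injective).mpr hl⟩
  change root.symm (l (root b • c)) = b * root.symm (l c)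
  rw [map_smul, smul_eq_mul, map_mul, RingEquiv.symm_apply_apply]

theorem smul_le_smul_add_iff {σ : Type*} {p : ℕ} {m : σ →₀ ℕ} (hm : ∀ i, m i < p)
    {δ γ : σ →₀ ℕ} :    p • δ ≤ p • γ + m ↔ δ ≤ γ := by
  refine forall_congr' fun i ↦ ?_
  simp only [Finsupp.add_apply, Finsupp.smul_apply, smul_eq_mul]
  refine ⟨fun h ↦ Nat.lt_succ_iff.mp (Nat.lt_of_mul_lt_mul_left (a := p) ?_), fun h ↦ ?_⟩
  · rw [Nat.mul_succ]
    exact h.trans_lt (Nat.add_lt_add_left (hm i) _)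
  · exact (Nat.mul_le_mul_left p h).trans (Nat.le_add_right _ _)

variable {k σ : Type*} [CommRing k] {p : ℕ} [Fact p.Prime]

variable (p) in
theorem smul_add_injective (m : σ →₀ ℕ) : Function.Injective fun γ : σ →₀ ℕ ↦ p • γ + m :=
  fun _ _ h ↦ smul_right_injective _ (Fact.out : p.Prime).ne_zero (add_right_cancel h)

/-- The map taking the coefficients of `x ^ (p • γ + m)` to their images under `φ`, a substitute
for the `p`-th root, as coefficients of `x ^ γ`. -/
noncomputable def rootMap (p : ℕ) [Fact p.Prime] (φ : k →+ k) (m : σ →₀ ℕ) :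
    MvPolynomial σ k →+ MvPolynomial σ k where
  toFun v := .ofCoeff
    (((AddMonoidAlgebra.coeff v).comapDomain (p • · + m)
      (smul_add_injective p m).injOn).mapRange φ φ.map_zero)
  map_zero' := MvPolynomial.ext _ _ fun _ ↦ φ.map_zero
  map_add' _ _ := MvPolynomial.ext _ _ fun _ ↦ φ.map_add _ _

@[simp]
theorem coeff_rootMap (φ : k →+ k) (m : σ →₀ ℕ) (v : MvPolynomial σ k) (γ : σ →₀ ℕ) :
    coeff γ (rootMap p φ m v) = φ (coeff (p • γ + m) v) :=
  rfl

theorem rootMap_pow_mul [CharP k p] {φ : k →+ k} (hφ : ∀ b c, φ (b ^ p * c) = b * φ c)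
    {m : σ →₀ ℕ} (hm : ∀ i, m i < p) (c v : MvPolynomial σ k) :
    rootMap p φ m (c ^ p * v) = c * rootMap p φ m v := by
  classical
  induction c using MvPolynomial.induction_on' with
  | add a b ha hb => rw [add_pow_char, add_mul, map_add, ha, hb, add_mul]
  | monomial δ a =>
    ext γ
    simp only [coeff_rootMap, monomial_pow, coeff_monomial_mul', smul_le_smul_add_iff hm]
    split_ifs with h
    · obtain ⟨ε, rfl⟩ := exists_add_of_le h
      rw [hφ, smul_add, add_assoc, add_tsub_cancel_left, add_tsub_cancel_left]
    · exact map_zero φ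

theorem totalDegree_rootMap_le (φ : k →+ k) (m : σ →₀ ℕ) {v : MvPolynomial σ k} {B : ℕ}
    (hv : v.totalDegree ≤ p * B) : (rootMap p φ m v).totalDegree ≤ B := by
  refine Finset.sup_le fun γ hγ ↦ ?_
  rw [mem_support_iff, coeff_rootMap] at hγ
  have hmem : p • γ + m ∈ v.support := mem_support_iff.mpr fun h ↦ hγ (by rw [h, map_zero])
  have hdeg : (p • γ + m).degree ≤ p * B := (le_totalDegree hmem).trans hv
  rw [map_add, map_nsmul, smul_eq_mul] at hdeg
  exact Nat.le_of_mul_le_mul_left ((Nat.le_add_right _ _).trans hdeg) (Fact.out : p.Prime).pos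

theorem exists_rootMap_ne_zero {k : Type*} [Field k] [CharP k p] {v : MvPolynomial σ k}
    (hv : v ≠ 0) : ∃ (φ : k →+ k) (m : σ →₀ ℕ), (∀ b c, φ (b ^ p * c) = b * φ c) ∧
      (∀ i, m i < p) ∧ rootMap p φ m v ≠ 0 := by
  obtain ⟨α, hα⟩ := ne_zero_iff.mp hv
  obtain ⟨φ, hφ, hφα⟩ := exists_root_functional p hα
  refine ⟨φ, α.mapRange (· % p) (Nat.zero_mod p), hφ,
    fun i ↦ Nat.mod_lt _ (Fact.out : p.Prime).pos, ne_zero_iff.mpr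
      ⟨α.mapRange (· / p) (Nat.zero_div p), ?_⟩⟩
  rwa [coeff_rootMap, show p • α.mapRange (· / p) (Nat.zero_div p) +
    α.mapRange (· % p) (Nat.zero_mod p) = α by ext i; simp [Nat.div_add_mod]]

end RootMap

/-- Applying all `p`-th root maps to the equations makes a Frobenius-semilinear system linear. -/
theorem exists_mulVec_eq_zero_iff_sum_pow_mul_eq_zero {k ι κ σ : Type*} [Field k] {p : ℕ}
    [Fact p.Prime] [CharP k p] [Fintype κ] {w : Matrix ι κ (MvPolynomial σ k)} {B : ℕ}
    (hw : ∀ i j, (w i j).totalDegree ≤ p * B) :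
    ∃ W : Set (κ → MvPolynomial σ k), (∀ a ∈ W, ∀ j, (a j).totalDegree ≤ B) ∧
      ∀ v, (Matrix.of fun a : W ↦ a.1).mulVec v = 0 ↔ ∀ i, ∑ j, v j ^ p * w i j = 0 := by
  refine ⟨{a | ∃ (φ : k →+ k) (m : σ →₀ ℕ) (i : ι), (∀ b c, φ (b ^ p * c) = b * φ c) ∧
    (∀ l, m l < p) ∧ a = fun j ↦ rootMap p φ m (w i j)}, ?_, fun v ↦ ?_⟩
  · rintro _ ⟨φ, m, i, -, -, rfl⟩ j
    exact totalDegree_rootMap_le φ m (hw i j)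
  have hroot {φ : k →+ k} (hφ : ∀ b c, φ (b ^ p * c) = b * φ c) {m : σ →₀ ℕ}
      (hm : ∀ l, m l < p) (i : ι) :
      (fun j ↦ rootMap p φ m (w i j)) ⬝ᵥ v = rootMap p φ m (∑ j, v j ^ p * w i j) := by
    simp only [dotProduct, map_sum, rootMap_pow_mul hφ hm, mul_comm (v _)]
  rw [_root_.funext_iff, Subtype.forall]
  constructor
  · intro hv i
    by_contra hne
    obtain ⟨φ, m, hφ, hm, hne⟩ := exists_rootMap_ne_zero hne
    exact hne ((hroot hφ hm i).symm.trans (hv _ ⟨φ, m, i, hφ, hm, rfl⟩))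
  · rintro hv _ ⟨φ, m, i, hφ, hm, rfl⟩
    exact (hroot hφ hm i).trans ((congrArg _ (hv i)).trans (map_zero _))

theorem IsDegreeLike.exists_smul_mem_span_of_mulVec_eq_zero {R ι κ : Type*} [CommRing R]
    [IsDomain R] [Fintype κ] {δ : R → ℕ} (hδ : IsDegreeLike δ) {A : Matrix ι κ R} {a : ℕ}
    (hA : ∀ i j, δ (A i j) ≤ a) {v : κ → R} (hv : A.mulVec v = 0) :
    ∃ t : R, t ≠ 0 ∧ t • v ∈ Submodule.span R
      {u | A.mulVec u = 0 ∧ ∀ j, δ (u j) ≤ (Fintype.card κ + 1) * a} := by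
  classical
  obtain ⟨ρ, hρ, f, g, hminor⟩ := exists_isBasicMinor_of_finite_columns A
  refine ⟨_, hminor.det_ne_zero, ?_⟩
  rw [← cramerKernel_mulVec_eq_det_smul hv, Matrix.mulVec_eq_sum]
  refine sum_mem fun j _ ↦ ?_
  rw [op_smul_eq_smul]
  refine Submodule.smul_mem _ _ (Submodule.subset_span
    ⟨hminor.mulVec_cramerKernel_col j, fun i ↦ (hδ.cramerKernel_le hA f g i j).trans ?_⟩)
  rw [Fintype.card_fin]
  gcongr

theorem boxPoly_pow_char {R σ : Type*} [CommRing R] [Fintype σ] [DecidableEq σ] {e : ℕ} (p : ℕ)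
    [Fact p.Prime] [CharP R p] (v : (σ → Fin e) → R) :
    boxPoly v ^ p = ∑ β, v β ^ p • ∏ i, X i ^ (p * (β i).1) := by
  rw [boxPoly_apply, sum_pow_char]
  simp only [mul_pow, ← map_pow, smul_eq_C_mul, ← Finset.prod_pow, ← pow_mul, mul_comm p]

namespace NormData

variable {k : Type*} [Field k] {n r e d : ℕ} {I : Ideal (MvPolynomial (Fin n) k)}
  (D : NormData r e d I)

include D

theorem pow_add_pow_le {a b : ℕ} (hab : a < b) : e ^ a + e ^ a ≤ e ^ b := by
  rw [← two_mul]
  exact (Nat.mul_le_mul_right _ D.two_le).trans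
    ((pow_succ' e a).symm.trans_le (D.pow_le_pow hab))

theorem mem_of_pow_mem_of_totalDegree_le {a : MvPolynomial (Fin n) k}
    (ha : a.totalDegree ≤ e ^ (4 * n + 8)) {m : ℕ} (ham : a ^ m ∈ I) : a ∈ I := by
  by_contra haI
  induction m with
  | zero => exact D.one_notMem (by simpa using ham)
  | succ m ih => exact ih (D.mem_of_mul_mem a ha haI _ (by rwa [← pow_succ']))

theorem θ_boxPoly_mem_of_mem_span
    {V : Set ((Fin n → Fin e) → MvPolynomial (Fin r) k)} (hV : ∀ v ∈ V, D.θ (boxPoly v) ∈ I)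
    {v} (hv : v ∈ Submodule.span (MvPolynomial (Fin r) k) V) : D.θ (boxPoly v) ∈ I := by
  induction hv using Submodule.span_induction with
  | mem v hv => exact hV v hv
  | zero => simp
  | add u v _ _ hu hv => simpa using add_mem hu hv
  | smul c v _ hv =>
    rw [map_smul, scaleVars_smul]
    exact Ideal.mul_mem_left _ _ hv

section Frobenius

variable (p : ℕ) [Fact p.Prime] [CharP k p]

theorem exists_θ_boxPoly_pow_mem_iff_sum :
    ∃ w : Matrix (Fin n → Fin e) (Fin n → Fin e) (MvPolynomial (Fin r) k),
      (∀ γ β, (w γ β).totalDegree ≤ p * e ^ (n + 6)) ∧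
        ∀ v, D.θ (boxPoly v) ^ p ∈ I ↔ ∀ γ, ∑ β, v β ^ p * w γ β = 0 := by
  have hδ := isDegreeLike_totalDegree (Fin r) k
  have hweight := isDegreeLike_weightedDegree (σ := Fin n) hδ (e ^ 2)
  obtain ⟨Φ, hΦ_deg, hΦ⟩ := D.exists_mulVec_eq_zero_iff
  refine ⟨Matrix.of fun γ β ↦ Φ.mulVec (nf e D.q (∏ i, X i ^ (p * (β i).1))) γ,
    fun γ β ↦ ?_, fun v ↦ ?_⟩
  · have hX : weightedDegree totalDegree (e ^ 2)
        (∏ i, X i ^ (p * (β i).1) : MvPolynomial (Fin n) (MvPolynomial (Fin r) k)) ≤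
          ∑ _i : Fin n, p * e * e ^ 2 :=
      hweight.prod_le fun i _ ↦ (hweight.pow_le (weightedDegree_X_le hδ i) _).trans
        (Nat.mul_le_mul_right _ (Nat.mul_le_mul_left _ (β i).2.le))
    have hpow : e ^ (n + 5) + e ^ 4 ≤ e ^ (n + 6) :=
      (Nat.add_le_add_left (D.pow_le_pow (by omega)) _).trans
        (D.pow_add_pow_le (Nat.lt_succ_self _))
    refine (hδ.mulVec_le hΦ_deg
      (hδ.nf_le D.q_monic D.q_coeff_totalDegree_le hX) γ).trans ?_
    rw [Finset.sum_const, Finset.card_univ, Fintype.card_fin, smul_eq_mul]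
    calc e ^ (n + 5) + n * (p * e * e ^ 2) ≤ p * e ^ (n + 5) + e * (p * e * e ^ 2) := by
          gcongr
          · exact Nat.le_mul_of_pos_left _ (Fact.out : p.Prime).pos
          · linarith [D.two_mul_le]
      _ = p * (e ^ (n + 5) + e ^ 4) := by ring
      _ ≤ p * e ^ (n + 6) := Nat.mul_le_mul_left p hpow
  · rw [← map_pow, ← θ_boxPoly_nf_mem_iff, ← hΦ, boxPoly_pow_char, map_sum, funext_iff]
    simp only [map_smul, Matrix.mulVec_sum, Matrix.mulVec_smul, Finset.sum_apply, Pi.smul_apply,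
      smul_eq_mul, Pi.zero_apply, Matrix.of_apply]

/-- The linear system equivalent to `θ (boxPoly v) ^ p ∈ I` has solutions of low degree that span
all solutions up to a factor from the independent variables, and `I` contains `θ (boxPoly v)` for
`v` of low degree. -/
theorem mem_of_pow_char_mem {g : MvPolynomial (Fin n) k} (hg : g ^ p ∈ I) : g ∈ I := by
  obtain ⟨w, hw_deg, hw⟩ := D.exists_θ_boxPoly_pow_mem_iff_sum p
  obtain ⟨W, hW_deg, hW⟩ := exists_mulVec_eq_zero_iff_sum_pow_mul_eq_zero hw_deg
  obtain ⟨g', hg', -⟩ := exists_scaleVars_eq (f := D.f) D.s_totalDegree_le (le_refl g.totalDegree) 0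
  have hθ : D.θ (boxPoly (nf e D.q g')) ^ p ∈ I := by
    have hdiff := D.θ_mem_of_mem_relIdeal (sub_boxPoly_nf_mem D.q_monic D.q_natDegree g')
    rw [map_sub] at hdiff
    have hg'I : D.θ g' ^ p ∈ I := by
      rw [hg', mul_pow]
      exact Ideal.mul_mem_left _ _ hg
    exact (Submodule.sub_mem_iff_right _ hg'I).mp
      (Ideal.mem_of_dvd I (sub_dvd_pow_sub_pow _ _ p) hdiff)
  obtain ⟨t, ht, hspan⟩ := (isDegreeLike_totalDegree _ k).exists_smul_mem_span_of_mulVec_eq_zero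
    (A := Matrix.of fun a : W ↦ a.1) (fun a ↦ hW_deg a a.2) ((hW _).mpr ((hw _).mp hθ))
  refine D.mem_of_prod_s_pow_mul_mem (N := g.totalDegree) ?_
  rw [← hg', ← θ_boxPoly_nf_mem_iff]
  refine D.torsionFree ht ?_
  rw [← scaleVars_smul, ← map_smul]
  refine D.θ_boxPoly_mem_of_mem_span ?_ hspan
  rintro v ⟨hv, hv_deg⟩
  refine D.mem_of_pow_mem_of_totalDegree_le ((D.totalDegree_θ_boxPoly_le hv_deg).trans ?_)
    ((hw v).mpr ((hW v).mp hv))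
  rw [Fintype.card_fun, Fintype.card_fin, Fintype.card_fin]
  calc (e ^ n + 1) * e ^ (n + 6) + e ^ 4 ≤ e ^ n * e * e ^ (n + 6) + e ^ (2 * n + 7) := by
        refine Nat.add_le_add (Nat.mul_le_mul_right _ ?_) (D.pow_le_pow (by omega))
        nlinarith [D.two_le, Nat.one_le_pow n e (one_le_two.trans D.two_le)]
    _ = e ^ (2 * n + 7) + e ^ (2 * n + 7) := by ring
    _ ≤ e ^ (4 * n + 8) := D.pow_add_pow_le (by omega)

include p in
theorem mem_of_pow_mem_of_charP {g : MvPolynomial (Fin n) k} {m : ℕ} (hg : g ^ m ∈ I) :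
    g ∈ I := by
  have hpow (l : ℕ) (hl : g ^ p ^ l ∈ I) : g ∈ I := by
    induction l with
    | zero => simpa using hl
    | succ l ih => exact ih (D.mem_of_pow_char_mem p (by rwa [← pow_mul, ← pow_succ]))
  exact hpow m (I.pow_mem_of_pow_mem hg (Nat.lt_pow_self (Fact.out : p.Prime).one_lt).le)

end Frobenius

end NormData

/-! ### Finite algebras generated by elements with irreducible equations -/

section FiniteAlgebra

variable {K A : Type*} [Field K] [CommRing A] [Algebra K A]

section

variable [Algebra.IsIntegral K A] (Ω : Type*) [Field Ω] [Algebra K Ω] [IsAlgClosed Ω]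

theorem exists_algHom_ker_eq (M : Ideal A) [M.IsMaximal] :
    ∃ φ : A →ₐ[K] Ω, RingHom.ker φ = M := by
  let _ : Field (A ⧸ M) := Ideal.Quotient.field M
  obtain ⟨φ⟩ : Nonempty ((A ⧸ M) →ₐ[K] Ω) := ⟨IsAlgClosed.lift⟩
  exact ⟨φ.comp (Ideal.Quotient.mkₐ K M),
    (RingHom.ker_comp_of_injective _ φ.toRingHom.injective).trans (Ideal.Quotient.mkₐ_ker K M)⟩

variable {Ω}

theorem exists_algHom_ker_eq_and_apply_eq (ψ : A →ₐ[K] Ω) (M : Ideal A) [M.IsMaximal] {u : A}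
    {π : Polynomial K} (hπ : Irreducible π) (hu : Polynomial.aeval u π = 0) :
    ∃ φ : A →ₐ[K] Ω, RingHom.ker φ = M ∧ φ u = ψ u := by
  let _ : Field (A ⧸ M) := Ideal.Quotient.field M
  have hu_quotient : Polynomial.aeval (Ideal.Quotient.mkₐ K M u) π = 0 := by
    rw [Polynomial.aeval_algHom_apply, hu, map_zero]
  have hψu : Polynomial.aeval (ψ u) (minpoly K (Ideal.Quotient.mkₐ K M u)) = 0 := by
    rw [← minpoly.eq_of_irreducible hπ hu_quotient, map_mul, Polynomial.aeval_algHom_apply, hu,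
      map_zero, zero_mul]
  obtain ⟨φ, hφ⟩ := IntermediateField.exists_algHom_of_splits_of_aeval (F := K) (K := Ω)
    (fun s ↦ ⟨Algebra.IsIntegral.isIntegral (R := K) s, IsAlgClosed.splits _⟩) hψu
  exact ⟨φ.comp (Ideal.Quotient.mkₐ K M), (RingHom.ker_comp_of_injective _
    φ.toRingHom.injective).trans (Ideal.Quotient.mkₐ_ker K M), hφ⟩

end

theorem algHom_eq_of_sum_pow_smul {Ω : Type*} [Field Ω] [Algebra K Ω] {n : ℕ} {y : Fin n → A}
    (hy : Algebra.adjoin K (Set.range y) = ⊤) {t : Fin n → K} (ht : Function.Injective t)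
    {φ ψ : A →ₐ[K] Ω}
    (hφψ : ∀ j, φ (∑ i, t j ^ i.1 • y i) = ψ (∑ i, t j ^ i.1 • y i)) : φ = ψ := by
  have hzero : (fun i ↦ φ (y i) - ψ (y i)) = 0 := by
    refine Matrix.eq_zero_of_forall_index_sum_pow_mul_eq_zero (f := algebraMap K Ω ∘ t)
      ((algebraMap K Ω).injective.comp ht) fun j ↦ ?_
    simpa [Algebra.smul_def, mul_sub, Finset.sum_sub_distrib, sub_eq_zero] using hφψ j
  refine AlgHom.ext_of_adjoin_eq_top hy ?_
  rintro _ ⟨i, rfl⟩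
  exact sub_eq_zero.mp (congrFun hzero i)

/-- For `ψ` with kernel `M'`, each linear form has the same value under `ψ` and some homomorphism
with kernel `M`; by the pigeonhole principle a single such homomorphism works for `n` linear forms,
and then it equals `ψ`. -/
theorem eq_of_isMaximal [Module.Finite K A] {n N : ℕ} {y : Fin n → A}
    (hy : Algebra.adjoin K (Set.range y) = ⊤) (hN : Module.finrank K A ≤ N) {t : ℕ → K}
    (ht : Function.Injective t)
    (hu : ∀ j < N * n, ∃ π : Polynomial K, Irreducible π ∧
      Polynomial.aeval (∑ i, t j ^ i.1 • y i) π = 0)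
    (M M' : Ideal A) [M.IsMaximal] [M'.IsMaximal] : M = M' := by
  classical
  let Ω := AlgebraicClosure K
  let H := {φ : A →ₐ[K] Ω // RingHom.ker φ = M}
  obtain ⟨ψ, hψ⟩ := exists_algHom_ker_eq (K := K) Ω M'
  have hφ (j : Fin (N * n)) :
      ∃ φ : H, φ.1 (∑ i, t j ^ i.1 • y i) = ψ (∑ i, t j ^ i.1 • y i) := by
    obtain ⟨π, hπ, hπu⟩ := hu j j.2
    obtain ⟨φ, hφM, hφu⟩ := exists_algHom_ker_eq_and_apply_eq ψ M hπ hπu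
    exact ⟨⟨φ, hφM⟩, hφu⟩
  choose φ hφ using hφ
  have : Nonempty H := nonempty_subtype.mpr (exists_algHom_ker_eq Ω M)
  have := Fintype.ofFinite H
  have hcard : Fintype.card H ≤ N := by
    rw [← Nat.card_eq_fintype_card]
    exact (Nat.card_le_card_of_injective _ Subtype.val_injective).trans
      ((card_algHom_le_finrank K A Ω).trans hN)
  obtain ⟨φ₀, hfiber⟩ := Fintype.exists_le_card_fiber_of_mul_le_card φ (n := n) (by
    rw [Fintype.card_fin]
    exact Nat.mul_le_mul_right n hcard)
  obtain ⟨J⟩ : Nonempty (Fin n ↪ {j // φ j = φ₀}) :=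
    Function.Embedding.nonempty_of_card_le (by simpa [Fintype.card_subtype] using hfiber)
  have heq : φ₀.1 = ψ :=
    algHom_eq_of_sum_pow_smul hy (t := fun l ↦ t (J l).1)
      (ht.comp (Fin.val_injective.comp (Subtype.val_injective.comp J.injective)))
      fun l ↦ by simpa only [(J l).2] using hφ (J l).1
  rw [← hψ, ← heq, φ₀.2]

theorem isReduced_of_adjoin_eq_top [PerfectField K] [Module.Finite K A] {s : Set A}
    (hs : Algebra.adjoin K s = ⊤)
    (hπ : ∀ y ∈ s, ∃ π : Polynomial K, Squarefree π ∧ Polynomial.aeval y π = 0) :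
    IsReduced A := by
  have hcomm (x y : A) : Commute (Algebra.lmul K A x) (Algebra.lmul K A y) :=
    (Commute.all x y).map (Algebra.lmul K A)
  have hsemisimple (x : A) : (Algebra.lmul K A x).IsSemisimple := by
    have hx : x ∈ Algebra.adjoin K s := hs ▸ Algebra.mem_top
    induction hx using Algebra.adjoin_induction with
    | mem y hy =>
      obtain ⟨π, hπ, hπy⟩ := hπ y hy
      refine Module.End.isSemisimple_of_squarefree_aeval_eq_zero hπ ?_
      rw [Polynomial.aeval_algHom_apply, hπy, map_zero]
    | algebraMap c =>
      refine Module.End.isSemisimple_of_squarefree_aeval_eq_zero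
        (Polynomial.irreducible_X_sub_C c).squarefree ?_
      rw [Polynomial.aeval_algHom_apply]
      simp
    | add a b _ _ ha hb =>
      rw [map_add]
      exact ha.add_of_commute (hcomm a b) hb
    | mul a b _ _ ha hb =>
      rw [map_mul]
      exact ha.mul_of_commute (hcomm a b) hb
  refine ⟨fun x hx ↦ ?_⟩
  have hzero := Module.End.eq_zero_of_isNilpotent_isSemisimple (hx.map (Algebra.lmul K A))
    (hsemisimple x)
  simpa using LinearMap.congr_fun hzero 1

end FiniteAlgebra

/-! ### The generic fibre -/

/-- `π` presents `A` as the localisation of `S ⧸ I` at the nonzero elements of `R`, an algebra over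
the fraction field `K` of `R`; no nonzero element of `R` is a zero divisor modulo `I`. -/
structure IsGenericFibre {R S A : Type*} (K : Type*) [CommRing R] [CommRing S] [CommRing A]
    [Field K] [Algebra R K] [Algebra K A] (ι : R →+* S) (I : Ideal S) (π : S →+* A) : Prop where
  apply_eq_zero_iff : ∀ p, π p = 0 ↔ p ∈ I
  apply_algebraMap : ∀ c, π (ι c) = algebraMap K A (algebraMap R K c)
  exists_smul_eq : ∀ a, ∃ c ≠ 0, ∃ p, algebraMap R K c • a = π p

theorem exists_isGenericFibre.{u, v} {R : Type u} {S : Type v} [CommRing R] [IsDomain R]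
    [CommRing S] {ι : R →+* S} {I : Ideal S} (hI : ∀ c ≠ 0, ∀ p, ι c * p ∈ I → p ∈ I) :
    ∃ (A : Type v) (_ : CommRing A) (_ : Algebra (FractionRing R) A) (π : S →+* A),
      IsGenericFibre (FractionRing R) ι I π := by
  let _ : Algebra R (S ⧸ I) := ((Ideal.Quotient.mk I).comp ι).toAlgebra
  let M := Algebra.algebraMapSubmonoid (S ⧸ I) (nonZeroDivisors R)
  let _ : Algebra (FractionRing R) (Localization M) :=
    localizationAlgebra (nonZeroDivisors R) (S ⧸ I)
  have hι (c : R) : algebraMap (S ⧸ I) (Localization M) (algebraMap R (S ⧸ I) c) =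
      algebraMap (FractionRing R) (Localization M) (algebraMap R _ c) :=
    (IsLocalization.map_eq (S := FractionRing R) (Q := Localization M)
      (show _ ≤ M.comap (algebraMap R (S ⧸ I)) from (nonZeroDivisors R).le_comap_map) c).symm
  refine ⟨Localization M, inferInstance, inferInstance,
    (algebraMap (S ⧸ I) (Localization M)).comp (Ideal.Quotient.mk I), fun p ↦ ?_, hι, fun a ↦ ?_⟩
  · rw [RingHom.comp_apply, IsLocalization.map_eq_zero_iff M]
    constructor
    · rintro ⟨⟨_, c, hc, rfl⟩, h⟩
      exact hI c (nonZeroDivisors.ne_zero hc) p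
        (Ideal.Quotient.eq_zero_iff_mem.mp ((map_mul _ _ _).trans h))
    · exact fun hp ↦ ⟨1, by rw [Ideal.Quotient.eq_zero_iff_mem.mpr hp, mul_zero]⟩
  · obtain ⟨⟨p, ⟨_, c, hc, rfl⟩⟩, h⟩ := IsLocalization.surj M a
    obtain ⟨p, rfl⟩ := Ideal.Quotient.mk_surjective p
    refine ⟨c, nonZeroDivisors.ne_zero hc, p, ?_⟩
    rw [Algebra.smul_def, ← hι, mul_comm]
    exact h

namespace IsGenericFibre

variable {R S A K : Type*} [CommRing R] [CommRing S] [CommRing A] [Field K] [Algebra R K]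
  [Algebra K A] {ι : R →+* S} {I : Ideal S} {π : S →+* A} (h : IsGenericFibre K ι I π)

include h

theorem apply_mul (c : R) (p : S) : π (ι c * p) = algebraMap R K c • π p := by
  rw [map_mul, h.apply_algebraMap, Algebra.smul_def]

theorem isPrime [IsDomain A] : I.IsPrime := by
  have hker : RingHom.ker π = I := Ideal.ext fun p ↦ h.apply_eq_zero_iff p
  exact hker ▸ RingHom.ker_isPrime π

theorem nontrivial (hI : 1 ∉ I) : Nontrivial A :=
  ⟨π 1, 0, (h.apply_eq_zero_iff 1).not.mpr hI⟩

theorem exists_irreducible_aeval_eq_zero [IsDomain R] [IsGCDMonoid R] [IsFractionRing R K]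
    (hι : ∀ c ≠ 0, ι c ∉ I) {χ : Polynomial R} (hχ : Irreducible χ) {p : S}
    (hp : χ.eval₂ ι p ∈ I) :
    ∃ χ' : Polynomial K, Irreducible χ' ∧ Polynomial.aeval (π p) χ' = 0 := by
  have hdeg : χ.natDegree ≠ 0 := fun hdeg ↦ by
    rw [Polynomial.eq_C_of_natDegree_eq_zero hdeg] at hp hχ
    rw [Polynomial.eval₂_C] at hp
    exact hι _ (fun hzero ↦ hχ.ne_zero (by rw [hzero, map_zero])) hp
  refine ⟨χ.map (algebraMap R K),
    ((hχ.isPrimitive hdeg).irreducible_iff_irreducible_map_fraction_map).mp hχ, ?_⟩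
  rw [Polynomial.aeval_def, Polynomial.eval₂_map,
    ← RingHom.ext (f := π.comp ι) (g := (algebraMap K A).comp (algebraMap R K))
      h.apply_algebraMap, ← Polynomial.hom_eval₂]
  exact (h.apply_eq_zero_iff _).mpr hp

variable [FaithfulSMul R K]

theorem isReduced (hI : ∀ m p, p ^ m ∈ I → p ∈ I) : IsReduced A := by
  refine ⟨fun a ⟨m, hm⟩ ↦ ?_⟩
  obtain ⟨c, hc, p, hp⟩ := h.exists_smul_eq a
  have hpI : p ∈ I := hI m p <| (h.apply_eq_zero_iff _).mp <| by
    rw [map_pow, ← hp, smul_pow, hm, smul_zero]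
  rw [(h.apply_eq_zero_iff p).mpr hpI] at hp
  exact (smul_eq_zero_iff_right ((FaithfulSMul.algebraMap_eq_zero_iff R K).not.mpr hc)).mp hp

theorem span_range_eq_top [IsDomain R] {κ : Type*} [Fintype κ] {b : κ → S}
    (hb : ∀ p, ∃ c ≠ 0, ∃ v : κ → R, ι c * p - ∑ j, ι (v j) * b j ∈ I) :
    Submodule.span K (Set.range fun j ↦ π (b j)) = ⊤ := by
  rw [eq_top_iff]
  rintro a -
  obtain ⟨c, hc, p, hp⟩ := h.exists_smul_eq a
  obtain ⟨c', hc', v, hv⟩ := hb p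
  have hne : algebraMap R K (c' * c) ≠ 0 :=
    (FaithfulSMul.algebraMap_eq_zero_iff R K).not.mpr (mul_ne_zero hc' hc)
  have ha : algebraMap R K (c' * c) • a = ∑ j, algebraMap R K (v j) • π (b j) := by
    rw [map_mul, mul_smul, hp, ← h.apply_mul, ← sub_eq_zero]
    simpa only [map_sub, map_sum, h.apply_mul] using (h.apply_eq_zero_iff _).mpr hv
  rw [← inv_smul_smul₀ hne a, ha]
  exact Submodule.smul_mem _ _ (sum_mem fun j _ ↦
    Submodule.smul_mem _ _ (Submodule.subset_span ⟨j, rfl⟩))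

end IsGenericFibre

namespace NormData

variable {k : Type*} [Field k] {n r e d : ℕ} {I : Ideal (MvPolynomial (Fin n) k)}
  (D : NormData r e d I) {K A : Type*} [Field K] [CommRing A] [Algebra (MvPolynomial (Fin r) k) K]
  [IsFractionRing (MvPolynomial (Fin r) k) K] [Algebra K A] {π : MvPolynomial (Fin n) k →+* A}
  (hπ : IsGenericFibre K (rename (R := k) D.f : _ →ₐ[k] _).toRingHom I π)

include hπ

theorem span_range_prod_eq_top :
    Submodule.span K (Set.range fun β : Fin n → Fin e ↦ ∏ i, π (D.θ (X i)) ^ (β i).1) = ⊤ := by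
  have hspan := hπ.span_range_eq_top (b := fun β : Fin n → Fin e ↦ D.θ (∏ i, X i ^ (β i).1))
    fun p ↦ ?_
  · simpa only [map_prod, map_pow] using hspan
  obtain ⟨p', hp', -⟩ :=
    exists_scaleVars_eq (f := D.f) D.s_totalDegree_le (le_refl p.totalDegree) 0
  refine ⟨(∏ i, D.s i) ^ p.totalDegree,
    pow_ne_zero _ (Finset.prod_ne_zero_iff.mpr fun i _ ↦ D.s_ne_zero i), nf e D.q p', ?_⟩
  have hmem := D.θ_mem_of_mem_relIdeal (sub_boxPoly_nf_mem D.q_monic D.q_natDegree p')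
  simpa [hp', boxPoly_apply] using hmem

theorem module_finite : Module.Finite K A :=
  .of_fg_top (Submodule.fg_def.mpr
    ⟨_, Set.finite_range _, D.span_range_prod_eq_top hπ⟩)

theorem finrank_le : Module.finrank K A ≤ e ^ n := by
  simpa using finrank_le_of_span_eq_top (D.span_range_prod_eq_top hπ)

theorem adjoin_range_eq_top : Algebra.adjoin K (Set.range fun i ↦ π (D.θ (X i))) = ⊤ := by
  rw [← Algebra.toSubmodule_eq_top, eq_top_iff, ← D.span_range_prod_eq_top hπ,
    Submodule.span_le, Set.range_subset_iff]
  exact fun β ↦ Subalgebra.prod_mem _ fun i _ ↦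
    Subalgebra.pow_mem _ (Algebra.subset_adjoin (Set.mem_range_self i)) _

theorem exists_irreducible_aeval_eq_zero {b : Fin n → MvPolynomial (Fin r) k}
    (hb : ∀ i, (b i).totalDegree ≤ e ^ (n + 2)) :
    ∃ χ : Polynomial K, Irreducible χ ∧
      Polynomial.aeval (∑ i, algebraMap _ K (b i) • π (D.θ (X i))) χ = 0 := by
  obtain ⟨χ, hχ, hχI⟩ := D.exists_irreducible_θ_aeval_sum_mem hb
  have hθC : D.θ.comp C = (rename (R := k) D.f : _ →ₐ[k] _).toRingHom :=
    RingHom.ext fun c ↦ scaleVars_C D.f D.s c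
  obtain ⟨χ', hχ', hzero⟩ := hπ.exists_irreducible_aeval_eq_zero
    (fun c hc ↦ D.rename_mem_iff.not.mpr hc) hχ (p := D.θ (∑ i, C (b i) * X i)) (by
      rw [← hθC, ← Polynomial.hom_eval₂]
      exact hχI)
  have hsum : ∑ i, algebraMap _ K (b i) • π (D.θ (X i)) = π (D.θ (∑ i, C (b i) * X i)) := by
    simp_rw [map_sum, map_mul D.θ, scaleVars_C]
    exact Finset.sum_congr rfl fun i _ ↦ (hπ.apply_mul _ _).symm
  exact ⟨χ', hχ', hsum ▸ hzero⟩

theorem isReduced : IsReduced A := by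
  have := D.module_finite hπ
  rcases CharP.exists' k with _ | ⟨p, _, _⟩
  · have : CharZero K := charZero_of_injective_algebraMap
      (IsFractionRing.injective (MvPolynomial (Fin r) k) K)
    refine isReduced_of_adjoin_eq_top (D.adjoin_range_eq_top hπ) ?_
    rintro _ ⟨i, rfl⟩
    obtain ⟨χ, hχ, hzero⟩ := D.exists_irreducible_aeval_eq_zero hπ (b := Pi.single i 1) fun j ↦ by
      rcases eq_or_ne j i with rfl | h <;> simp [*]
    refine ⟨χ, hχ.squarefree, ?_⟩
    simpa [Pi.single_apply, apply_ite (algebraMap _ K), ite_smul] using hzero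
  · exact hπ.isReduced fun m g hg ↦ D.mem_of_pow_mem_of_charP p hg

theorem isDomain (hr : 0 < r) : IsDomain A := by
  have := D.module_finite hπ
  have := D.isReduced hπ
  have := hπ.nontrivial D.one_notMem
  have : IsArtinianRing A := .of_finite K A
  let x : MvPolynomial (Fin r) k := X ⟨0, hr⟩
  have hx : Function.Injective fun j ↦ algebraMap _ K (x ^ j) :=
    (IsFractionRing.injective (MvPolynomial (Fin r) k) K).comp fun a b hab ↦ by
      simpa [x] using congrArg totalDegree hab
  have heq (M M' : Ideal A) (_ : M.IsMaximal) (_ : M'.IsMaximal) : M = M' := by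
    refine eq_of_isMaximal (D.adjoin_range_eq_top hπ) (D.finrank_le hπ) hx (fun j hj ↦ ?_) M M'
    obtain ⟨χ, hχ, hzero⟩ :=
      D.exists_irreducible_aeval_eq_zero hπ (b := fun i ↦ (x ^ j) ^ i.1) fun i ↦ by
        have hn : n ≤ e := by linarith [D.two_mul_le]
        rw [← pow_mul, totalDegree_X_pow]
        calc j * i.1 ≤ e ^ n * n * n := Nat.mul_le_mul hj.le i.2.le
          _ ≤ e ^ n * e * e := by gcongr
          _ = e ^ (n + 2) := by ring
    exact ⟨χ, hχ, by simpa only [map_pow] using hzero⟩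
  obtain ⟨M, hM⟩ := Ideal.exists_maximal A
  have : IsLocalRing A := .of_unique_max_ideal ⟨M, hM, fun M' hM' ↦ heq M' M hM' hM⟩
  exact (IsArtinianRing.isField_of_isReduced_of_isLocalRing A).isDomain

omit hπ

include D in
theorem isPrime : I.IsPrime := by
  rcases Nat.eq_zero_or_pos r with hr | hr
  · exact D.isPrime_of_eq_zero hr
  · obtain ⟨A, _, _, π, hπ⟩ := exists_isGenericFibre
      (ι := (rename (R := k) D.f : _ →ₐ[k] _).toRingHom) (I := I) fun c hc p ↦ D.torsionFree hc
    have := D.isDomain hπ hr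
    exact hπ.isPrime

end NormData

/-! ### Variables independent in bounded degree -/

section Independent

/-- The variables `x_{f j}` satisfy no nonzero relation of degree at most `N` modulo `I`. -/
def IndependentUpTo {σ τ k : Type*} [CommRing k] (I : Ideal (MvPolynomial σ k)) (f : τ → σ)
    (N : ℕ) : Prop :=
  ∀ c : MvPolynomial τ k, c ≠ 0 → c.totalDegree ≤ N → rename f c ∉ I

theorem eval₂_rename_finSuccEquiv {σ R : Type*} [CommRing R] {r : ℕ} (f : Fin r → σ) (i : σ)
    (p : MvPolynomial (Fin (r + 1)) R) :
    (finSuccEquiv R r p).eval₂ (rename f : MvPolynomial (Fin r) R →ₐ[R] _).toRingHom (X i) =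
      rename (Fin.cons i f : Fin (r + 1) → σ) p := by
  induction p using MvPolynomial.induction_on with
  | C a => simp [finSuccEquiv_apply]
  | add p q hp hq => rw [map_add, Polynomial.eval₂_add, hp, hq, map_add]
  | mul_X p j hp =>
    rw [map_mul, Polynomial.eval₂_mul, hp, map_mul, rename_X]
    cases j using Fin.cases with
    | zero => simp [finSuccEquiv_X_zero]
    | succ j => simp [finSuccEquiv_X_succ]

theorem IsDegreeLike.coeff_integralNormalization_le {R : Type*} [CommRing R] {δ : R → ℕ}
    (hδ : IsDegreeLike δ) {P : Polynomial R} {B : ℕ} (hP : ∀ j, δ (P.coeff j) ≤ B) (j : ℕ) :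
    δ (P.integralNormalization.coeff j) ≤ P.natDegree * B := by
  rw [Polynomial.integralNormalization_coeff]
  split_ifs with hj
  · simp [hδ.map_one]
  by_cases hcoeff : P.coeff j = 0
  · simp [hcoeff, hδ.map_zero]
  have hP0 : P ≠ 0 := fun h ↦ hcoeff (by rw [h, Polynomial.coeff_zero])
  have hlt : j < P.natDegree := (Polynomial.le_natDegree_of_ne_zero hcoeff).lt_of_ne fun h ↦
    hj (by rw [h, Polynomial.degree_eq_natDegree hP0])
  refine (hδ.mul_le (hP j) (hδ.pow_le (hP _) _)).trans ?_
  calc B + (P.natDegree - 1 - j) * B = (P.natDegree - 1 - j + 1) * B := by ring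
    _ ≤ P.natDegree * B := Nat.mul_le_mul_right _ (by omega)

/-- A relation for `y` becomes monic after multiplying `y` by its leading coefficient. -/
theorem IsDegreeLike.exists_monic_eval₂_mem {R S : Type*} [CommRing R] [CommRing S] {δ : R → ℕ}
    (hδ : IsDegreeLike δ) {P : Polynomial R} {B e : ℕ} (hP : ∀ j, δ (P.coeff j) ≤ B)
    (hpos : P.natDegree ≠ 0) (he : P.natDegree ≤ e) {φ : R →+* S} {y : S} {I : Ideal S}
    (hy : P.eval₂ φ y ∈ I) :
    ∃ q : Polynomial R, q.Monic ∧ q.natDegree = e ∧ (∀ j, δ (q.coeff j) ≤ e * B) ∧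
      q.eval₂ φ (φ P.leadingCoeff * y) ∈ I := by
  have hP_ne : P ≠ 0 := fun h ↦ hpos (by simp [h])
  have hmonic := Polynomial.monic_integralNormalization hP_ne
  refine ⟨P.integralNormalization * Polynomial.X ^ (e - P.natDegree),
    hmonic.mul (Polynomial.monic_X_pow _), ?_, fun j ↦ ?_, ?_⟩
  · have := Polynomial.Nontrivial.of_polynomial_ne hP_ne
    rw [hmonic.natDegree_mul (Polynomial.monic_X_pow _), Polynomial.natDegree_X_pow,
      Polynomial.natDegree_integralNormalization, Nat.add_sub_cancel' he]
  · rw [Polynomial.coeff_mul_X_pow']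
    split_ifs
    · exact (hδ.coeff_integralNormalization_le hP _).trans (Nat.mul_le_mul_right _ he)
    · simp [hδ.map_zero]
  · rw [Polynomial.eval₂_mul, Polynomial.integralNormalization_eval₂_leadingCoeff_mul
      (Nat.one_le_iff_ne_zero.mpr hpos)]
    exact Ideal.mul_mem_right _ _ (Ideal.mul_mem_left _ _ hy)

theorem scaleVars_aeval_X {k σ τ : Type*} [CommRing k] (f : τ → σ) (s : σ → MvPolynomial τ k)
    (i : σ) (q : Polynomial (MvPolynomial τ k)) :
    scaleVars f s (Polynomial.aeval (X i) q) =
      q.eval₂ (rename f : MvPolynomial τ k →ₐ[k] _).toRingHom (rename f (s i) * X i) := by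
  rw [Polynomial.aeval_def, Polynomial.hom_eval₂, scaleVars_X]
  congr 1
  exact RingHom.ext fun c ↦ scaleVars_C f s c

variable {k : Type*} [Field k] {n r d e : ℕ} {I : Ideal (MvPolynomial (Fin n) k)}
  {f : Fin r → Fin n}

theorem IndependentUpTo.exists_monic_relation (hf : IndependentUpTo I f e) (i : Fin n)
    (hi : ¬ IndependentUpTo I (Fin.cons i f : Fin (r + 1) → Fin n) e) :
    ∃ (s : MvPolynomial (Fin r) k) (q : Polynomial (MvPolynomial (Fin r) k)),
      s ≠ 0 ∧ s.totalDegree ≤ e ∧ q.Monic ∧ q.natDegree = e ∧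
      (∀ j, (q.coeff j).totalDegree ≤ e ^ 2) ∧
      q.eval₂ (rename f : MvPolynomial (Fin r) k →ₐ[k] _).toRingHom (rename f s * X i) ∈ I := by
  simp only [IndependentUpTo, not_forall, not_not] at hi
  obtain ⟨p, hp, hp_deg, hpI⟩ := hi
  set P := finSuccEquiv k r p with hP
  have hP_ne : P ≠ 0 := by simpa [hP] using hp
  rw [← eval₂_rename_finSuccEquiv, ← hP] at hpI
  have hcoeff (j : ℕ) : (P.coeff j).totalDegree ≤ e := by
    by_cases hj : P.coeff j = 0
    · simp [hj]
    · exact (Nat.le_add_right _ j).trans <|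
        (totalDegree_coeff_finSuccEquiv_add_le p j hj).trans hp_deg
  have hnatDegree : P.natDegree ≤ e := by
    rw [hP, natDegree_finSuccEquiv]
    exact (degreeOf_le_totalDegree p 0).trans hp_deg
  have hpos : P.natDegree ≠ 0 := fun h0 ↦ by
    rw [Polynomial.eq_C_of_natDegree_eq_zero h0] at hP_ne hpI
    rw [Polynomial.eval₂_C] at hpI
    exact hf _ (fun h ↦ hP_ne (by rw [h, map_zero])) (hcoeff 0) hpI
  obtain ⟨q, hmonic, hq, hq_deg, hqI⟩ :=
    (isDegreeLike_totalDegree (Fin r) k).exists_monic_eval₂_mem hcoeff hpos hnatDegree hpI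
  exact ⟨P.leadingCoeff, q, Polynomial.leadingCoeff_ne_zero.mpr hP_ne, hcoeff _, hmonic, hq,
    fun j ↦ (hq_deg j).trans_eq (sq e).symm, hqI⟩

theorem exists_monic_relation_of_mem_range (I : Ideal (MvPolynomial (Fin n) k)) (he : 1 ≤ e)
    (j : Fin r) :
    ∃ q : Polynomial (MvPolynomial (Fin r) k), q.Monic ∧ q.natDegree = e ∧
      (∀ l, (q.coeff l).totalDegree ≤ e ^ 2) ∧
      q.eval₂ (rename f : MvPolynomial (Fin r) k →ₐ[k] _).toRingHom (rename f 1 * X (f j)) ∈ I := by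
  refine ⟨Polynomial.X ^ e - Polynomial.C (X j ^ e), Polynomial.monic_X_pow_sub_C _ (by omega),
    Polynomial.natDegree_X_pow_sub_C, fun l ↦ ?_, ?_⟩
  · rw [Polynomial.coeff_sub, Polynomial.coeff_X_pow, Polynomial.coeff_C]
    refine (isDegreeLike_totalDegree _ k).sub_le ?_ ?_
    · split_ifs <;> simp
    · split_ifs
      · rw [totalDegree_X_pow]
        exact Nat.le_self_pow two_ne_zero e
      · simp
  · rw [Polynomial.eval₂_sub, Polynomial.eval₂_X_pow, Polynomial.eval₂_C]
    simp

theorem exists_normData {S : Set (MvPolynomial (Fin n) k)} (hn : 1 ≤ n) (hd : 1 ≤ d)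
    (he : 2 * n * d ≤ e) (hS : ∀ g ∈ S, g.totalDegree ≤ d)
    (hf : IndependentUpTo (Ideal.span S) f (e ^ (n + 4)))
    (hmax : ∀ i ∉ Set.range f,
      ¬ IndependentUpTo (Ideal.span S) (Fin.cons i f : Fin (r + 1) → Fin n) e)
    (hreg : ∀ a : MvPolynomial (Fin n) k, a.totalDegree ≤ e ^ (4 * n + 8) → a ∉ Ideal.span S →
      ∀ g, a * g ∈ Ideal.span S → g ∈ Ideal.span S) :
    Nonempty (NormData r e d (Ideal.span S)) := by
  have he_one : 1 ≤ e := he.trans' (Nat.mul_pos (by omega) hd)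
  have hrel (i : Fin n) :
      ∃ (s : MvPolynomial (Fin r) k) (q : Polynomial (MvPolynomial (Fin r) k)),
      (s ≠ 0 ∧ s.totalDegree ≤ e ∧ q.Monic ∧ q.natDegree = e ∧
      (∀ j, (q.coeff j).totalDegree ≤ e ^ 2) ∧
      q.eval₂ (rename f : MvPolynomial (Fin r) k →ₐ[k] _).toRingHom (rename f s * X i) ∈
        Ideal.span S) ∧ (i ∈ Set.range f → s = 1) := by
    by_cases hi : i ∈ Set.range f
    · obtain ⟨j, rfl⟩ := hi
      obtain ⟨q, hq⟩ := exists_monic_relation_of_mem_range (f := f) (Ideal.span S) he_one j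
      exact ⟨1, q, ⟨one_ne_zero, by simp, hq⟩, fun _ ↦ rfl⟩
    · obtain ⟨s, q, hsq⟩ := IndependentUpTo.exists_monic_relation
        (fun c hc hdeg ↦ hf c hc (hdeg.trans (Nat.le_self_pow (by omega) e))) i (hmax i hi)
      exact ⟨s, q, hsq, fun h ↦ absurd h hi⟩
  choose s q hsq hs_one using hrel
  choose s_ne_zero s_deg q_monic q_natDegree q_deg q_mem using hsq
  exact ⟨{
    gens := S
    span_gens := rfl
    gens_totalDegree_le := hS
    f := f
    s := s
    q := q
    one_le_n := hn
    one_le_d := hd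
    le_e := he
    s_ne_zero := s_ne_zero
    s_totalDegree_le := s_deg
    s_f := fun j ↦ hs_one _ ⟨j, rfl⟩
    q_monic := q_monic
    q_natDegree := q_natDegree
    q_coeff_totalDegree_le := q_deg
    scaleVars_aeval_q_mem := fun i ↦ (scaleVars_aeval_X f s i (q i)).symm ▸ q_mem i
    rename_notMem := hf
    mem_of_mul_mem := hreg }⟩

theorem IndependentUpTo.span_eq_bot {σ τ R : Type*} [CommRing R] {S : Set (MvPolynomial σ R)}
    {f : τ → σ} (hf : f.Bijective) (hS : ∀ g ∈ S, g.totalDegree ≤ d)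
    (hfree : IndependentUpTo (Ideal.span S) f d) : Ideal.span S = ⊥ := by
  rw [Ideal.span_eq_bot]
  intro g hg
  by_contra hg_ne
  let f' := renameEquiv R (Equiv.ofBijective f hf)
  refine hfree (f'.symm g) (EmbeddingLike.map_ne_zero_iff.mpr hg_ne)
    ((totalDegree_rename_le _ _).trans (hS g hg)) ?_
  rw [show rename f (f'.symm g) = g from f'.apply_symm_apply g]
  exact Ideal.subset_span hg

/-- Descending induction on the number of independent variables: if they are not maximal in degree
`e`, one of the others can be added, and the degree bound loses an exponent `n + 4`. -/
theorem IndependentUpTo.isPrime {S : Set (MvPolynomial (Fin n) k)} (hn : 1 ≤ n) (hd : 1 ≤ d)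
    (hS : ∀ g ∈ S, g.totalDegree ≤ d)
    (hreg : ∀ a : MvPolynomial (Fin n) k,
      a.totalDegree ≤ (2 * n * d) ^ ((n + 4) ^ (n - 1) * (4 * n + 8)) → a ∉ Ideal.span S →
        ∀ g, a * g ∈ Ideal.span S → g ∈ Ideal.span S)
    {m r : ℕ} (hr : r + m = n) {f : Fin r → Fin n} (hf : f.Injective)
    (hfree : IndependentUpTo (Ideal.span S) f ((2 * n * d) ^ (n + 4) ^ m)) :
    (Ideal.span S).IsPrime := by
  have hpos : 0 < 2 * n * d := Nat.mul_pos (by omega) hd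
  induction m generalizing r with
  | zero =>
    obtain rfl : r = n := by omega
    have hdeg : d ≤ (2 * r * d) ^ (r + 4) ^ 0 := by
      simpa using Nat.le_mul_of_pos_left d (show 0 < 2 * r by omega)
    rw [IndependentUpTo.span_eq_bot (Finite.injective_iff_bijective.mp hf) hS
      fun c hc hcd ↦ hfree c hc (hcd.trans hdeg)]
    exact Ideal.isPrime_bot
  | succ m ih =>
    by_cases hmax : ∃ i ∉ Set.range f, IndependentUpTo (Ideal.span S)
        (Fin.cons i f : Fin (r + 1) → Fin n) ((2 * n * d) ^ (n + 4) ^ m)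
    · obtain ⟨i, hi, hfree'⟩ := hmax
      exact ih (by omega) (Fin.cons_injective_iff.mpr ⟨hi, hf⟩) hfree'
    · push Not at hmax
      rw [pow_succ, pow_mul] at hfree
      obtain ⟨D⟩ := exists_normData hn hd (Nat.le_self_pow (by positivity) _) hS hfree hmax
        fun a ha ↦ hreg a <| ha.trans <| by
          rw [← pow_mul]
          have hm : m ≤ n - 1 := by omega
          gcongr
          omega
      exact D.isPrime

theorem isPrime_span {S : Set (MvPolynomial (Fin n) k)} (hn : 1 ≤ n) (hd : 1 ≤ d)
    (hI : Ideal.span S ≠ ⊤) (hS : ∀ g ∈ S, g.totalDegree ≤ d)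
    (hreg : ∀ a : MvPolynomial (Fin n) k,
      a.totalDegree ≤ (2 * n * d) ^ ((n + 4) ^ (n - 1) * (4 * n + 8)) → a ∉ Ideal.span S →
        ∀ g, a * g ∈ Ideal.span S → g ∈ Ideal.span S) :
    (Ideal.span S).IsPrime := by
  refine IndependentUpTo.isPrime hn hd hS hreg (Nat.zero_add n)
    (Function.injective_of_subsingleton Fin.elim0) fun c hc _ hcI ↦ hI ?_
  rw [eq_C_of_isEmpty c] at hc hcI
  rw [rename_C] at hcI
  exact Ideal.eq_top_of_isUnit_mem _ hcI ((Ne.isUnit fun h ↦ hc (by rw [h, C_0])).map C)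

end Independent

/-! ### The exponent, and the case of one variable -/

theorem hermannExp_add_two_le (n : ℕ) : hermannExp n + 2 ≤ 2 ^ (2 * n ^ 2 + n + 1) := by
  induction n with
  | zero => simp [hermannExp]
  | succ n ih =>
    have hfactor : 3 * n + 6 ≤ 2 ^ (4 * n + 3) := by
      have h := Nat.lt_two_pow_self (n := n)
      have h' : 2 ^ n ≤ 2 ^ (4 * n) := Nat.pow_le_pow_right two_pos (by omega)
      rw [pow_add]
      omega
    calc hermannExp (n + 1) + 2 ≤ (3 * n + 6) * (hermannExp n + 2) := by
          rw [hermannExp]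
          nlinarith
      _ ≤ 2 ^ (4 * n + 3) * 2 ^ (2 * n ^ 2 + n + 1) := Nat.mul_le_mul hfactor ih
      _ = 2 ^ (2 * (n + 1) ^ 2 + (n + 1) + 1) := by rw [← pow_add]; congr 1; ring

theorem exponent_le {n : ℕ} (hn : 2 ≤ n) :
    (n + 4) ^ (n - 1) * (4 * n + 8) * (hermannExp n + 2) ≤ n ^ 3 * 2 ^ (6 * n ^ 2) := by
  have hbase : n + 4 ≤ 2 ^ (n + 1) := by
    induction n, hn using Nat.le_induction with
    | base => norm_num
    | succ m _ ih => rw [pow_succ]; omega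
  have hreg : (n + 4) ^ (n - 1) * (4 * n + 8) ≤ 2 ^ (2 + (n + 1) * n) :=
    calc (n + 4) ^ (n - 1) * (4 * n + 8) ≤ (n + 4) ^ (n - 1) * (2 ^ 2 * (n + 4)) :=
          Nat.mul_le_mul_left _ (by omega)
      _ = 2 ^ 2 * (n + 4) ^ n := by
          rw [mul_left_comm, pow_sub_one_mul (by omega)]
      _ ≤ 2 ^ 2 * (2 ^ (n + 1)) ^ n := by gcongr
      _ = 2 ^ (2 + (n + 1) * n) := by rw [pow_add 2 2, pow_mul]
  calc (n + 4) ^ (n - 1) * (4 * n + 8) * (hermannExp n + 2)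
      ≤ 2 ^ (2 + (n + 1) * n) * 2 ^ (2 * n ^ 2 + n + 1) :=
        Nat.mul_le_mul hreg (hermannExp_add_two_le n)
    _ = 2 ^ (2 + (n + 1) * n + (2 * n ^ 2 + n + 1)) := (pow_add ..).symm
    _ ≤ 2 ^ (6 * n ^ 2) := Nat.pow_le_pow_right two_pos (by nlinarith)
    _ ≤ n ^ 3 * 2 ^ (6 * n ^ 2) := Nat.le_mul_of_pos_left _ (by positivity)

section Principal

variable {σ R : Type*} [CommRing R] {b : ℕ}

theorem PrimeUpTo.irreducible [IsDomain R] {p : MvPolynomial σ R}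
    (hp : PrimeUpTo (Ideal.span {p}) b) (hp0 : p ≠ 0) (hunit : ¬IsUnit p)
    (hb : p.totalDegree ≤ b) : Irreducible p := by
  have hdvd {z : MvPolynomial σ R} (hz : z ∣ p) : z.totalDegree ≤ b :=
    (totalDegree_le_of_dvd_of_isDomain hz hp0).trans hb
  have hcancel {x y : MvPolynomial σ R} (hxy : p = x * y) (hx : x ∈ Ideal.span {p}) : IsUnit y := by
    have hx0 : x ≠ 0 := left_ne_zero_of_mul (hxy ▸ hp0)
    have hdvd_one : x * y ∣ x * 1 := by rwa [mul_one, ← hxy, ← Ideal.mem_span_singleton]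
    exact isUnit_of_dvd_one ((mul_dvd_mul_iff_left hx0).mp hdvd_one)
  refine ⟨hunit, fun x y hxy ↦ ?_⟩
  have hyx : p = y * x := hxy.trans (mul_comm x y)
  exact (hp x y (hdvd ⟨y, hxy⟩) (hdvd ⟨x, hyx⟩) (hxy ▸ Ideal.mem_span_singleton_self p)).symm.imp
    (hcancel hyx) (hcancel hxy)

theorem PrimeUpTo.isPrime_of_unique {k : Type*} [Field k] [Unique σ]
    {S : Set (MvPolynomial σ k)} (hI : Ideal.span S ≠ ⊤) (hS : ∀ f ∈ S, f.totalDegree ≤ b)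
    (hprime : PrimeUpTo (Ideal.span S) b) : (Ideal.span S).IsPrime := by
  by_cases hbot : Ideal.span S = ⊥
  · rw [hbot]
    exact Ideal.isPrime_bot
  have : IsPrincipalIdealRing (MvPolynomial σ k) :=
    .of_surjective (uniqueAlgEquiv k σ).symm.toRingHom (uniqueAlgEquiv k σ).symm.surjective
  obtain ⟨s, hs, hs0⟩ : ∃ s ∈ S, s ≠ 0 := by simpa [Ideal.span_eq_bot] using hbot
  obtain ⟨p, hp⟩ : ∃ p, Ideal.span S = Ideal.span {p} :=
    (IsPrincipalIdealRing.principal (Ideal.span S)).principal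
  have hps : p ∣ s := Ideal.mem_span_singleton.mp (hp ▸ Ideal.subset_span hs)
  rw [hp] at hI hbot hprime ⊢
  have hp0 : p ≠ 0 := mt Ideal.span_singleton_eq_bot.mpr hbot
  refine (Ideal.span_singleton_prime hp0).mpr (hprime.irreducible hp0 ?_ ?_).prime
  · exact mt Ideal.span_singleton_eq_top.mpr hI
  · exact (totalDegree_le_of_dvd_of_isDomain hps hs0).trans (hS s hs)

end Principal

end PrimeBound

/-- If a proper ideal of `k[x₁,…,xₙ]` generated in degree at most `d`
is prime up to `(2nd)^(n³·2^(6n²))`, then it is prime. -/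
theorem prime_up_to_simple_bound_implies_prime
    (k : Type*) [Field k] (n d : ℕ) (hn : 1 ≤ n) (hd : 1 ≤ d)
    (I : Ideal (MvPolynomial (Fin n) k)) (hproper : I ≠ ⊤)
    (S : Set (MvPolynomial (Fin n) k)) (hgen : I = Ideal.span S)
    (hdeg : ∀ f ∈ S, f.totalDegree ≤ d)
    (hprime : ∀ f g : MvPolynomial (Fin n) k,
      f.totalDegree ≤ (2 * n * d) ^ (n ^ 3 * 2 ^ (6 * n ^ 2)) →
      g.totalDegree ≤ (2 * n * d) ^ (n ^ 3 * 2 ^ (6 * n ^ 2)) →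
      f * g ∈ I → f ∈ I ∨ g ∈ I) :
    I.IsPrime := by
  have hX : 2 ≤ 2 * n * d := by nlinarith [Nat.mul_le_mul hn hd]
  have hdX : d ≤ 2 * n * d := Nat.le_mul_of_pos_left d (by omega)
  subst hgen
  obtain rfl | hn2 : n = 1 ∨ 2 ≤ n := by omega
  · refine PrimeBound.PrimeUpTo.isPrime_of_unique hproper (fun f hf ↦ ?_) hprime
    exact (hdeg f hf).trans (hdX.trans (Nat.le_self_pow (by positivity) _))
  set G := (2 * n * d) ^ ((n + 4) ^ (n - 1) * (4 * n + 8)) with hG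
  have hXG : 2 * n * d ≤ G := Nat.le_self_pow (by positivity) _
  have hpow : G ^ (PrimeBound.hermannExp n + 2) ≤ (2 * n * d) ^ (n ^ 3 * 2 ^ (6 * n ^ 2)) := by
    rw [hG, ← pow_mul]
    exact Nat.pow_le_pow_right (by omega) (PrimeBound.exponent_le hn2)
  have hG1 : 1 ≤ G := by omega
  refine PrimeBound.isPrime_span hn hd hproper hdeg fun a ha haI g hg ↦
    PrimeBound.PrimeUpTo.mem_of_mul_mem hprime (hX.trans hXG) ?_ ?_
      (fun f hf ↦ (hdeg f hf).trans (hdX.trans hXG)) ha haI hg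
  · exact (Nat.pow_le_pow_right hG1 (Nat.le_add_right _ 2)).trans hpow
  · exact (Nat.le_self_pow (by omega) G).trans hpow
end

section
/- Let k be a field, d ≥ 1 a natural number, and let I be a proper ideal of the univariate polynomial ring k[x] generated by polynomials of degree at most d. If I is prime up to d, then I is a prime ideal. -/
/-!
Division with remainder by a monic `s ∈ I` of degree at most `d` represents every class of
`R[X] ⧸ I` by a polynomial of degree less than `d`, so primality only has to be tested on such
polynomials.
-/

open Polynomial

section CommRing

variable {R : Type*} [CommRing R] {I : Ideal R[X]} {s : R[X]}

theorem modByMonic_mem_iff (hs : s ∈ I) (f : R[X]) : f %ₘ s ∈ I ↔ f ∈ I := by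
  conv_rhs => rw [← modByMonic_add_div f s]
  exact (I.add_mem_iff_left (I.mul_mem_right _ hs)).symm

theorem modByMonic_mul_modByMonic_mem_iff (hs : s ∈ I) (f g : R[X]) :
    (f %ₘ s) * (g %ₘ s) ∈ I ↔ f * g ∈ I := by
  rw [← modByMonic_mem_iff hs, ← mul_modByMonic, modByMonic_mem_iff hs]

theorem isPrime_of_monic_mem (hI : I ≠ ⊤) (hs : s.Monic) (hsI : s ∈ I)
    (hprime : ∀ f g : R[X], f.natDegree < s.natDegree → g.natDegree < s.natDegree →
      f * g ∈ I → f ∈ I ∨ g ∈ I) :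
    I.IsPrime := by
  have hs1 : s ≠ 1 := fun h ↦ I.ne_top_iff_one.mp hI (h ▸ hsI)
  refine ⟨hI, fun {f g} hfg ↦ ?_⟩
  rw [← modByMonic_mem_iff hsI f, ← modByMonic_mem_iff hsI g]
  exact hprime _ _ (natDegree_modByMonic_lt f hs hs1) (natDegree_modByMonic_lt g hs hs1)
    ((modByMonic_mul_modByMonic_mem_iff hsI f g).mpr hfg)

theorem univariate_prime_up_to_d_implies_prime_general {d : ℕ} (hd : 1 ≤ d) (hI : I ≠ ⊤)
    (hmonic : I ≠ ⊥ → ∃ s ∈ I, s.Monic ∧ s.natDegree ≤ d)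
    (hprime : ∀ f g : R[X], f.natDegree < d → g.natDegree < d →
      f * g ∈ I → f ∈ I ∨ g ∈ I) :
    I.IsPrime := by
  rcases eq_or_ne I ⊥ with rfl | hbot
  · have : Nontrivial R := Polynomial.nontrivial_iff.mp
      ((Submodule.nontrivial_iff R[X]).mp ⟨⊥, ⊤, hI⟩)
    have : NoZeroDivisors R := ⟨fun {a b} hab ↦ by
      have hmem : C a * C b ∈ (⊥ : Ideal R[X]) := by rw [← C_mul, hab, C_0]; exact zero_mem _
      simpa only [Ideal.mem_bot, C_eq_zero] using
        hprime _ _ ((natDegree_C a).trans_lt hd) ((natDegree_C b).trans_lt hd) hmem⟩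
    have : IsDomain R := NoZeroDivisors.to_isDomain R
    exact Ideal.isPrime_bot
  · obtain ⟨s, hsI, hs, hsd⟩ := hmonic hbot
    exact isPrime_of_monic_mem hI hs hsI fun f g hf hg ↦
      hprime f g (hf.trans_le hsd) (hg.trans_le hsd)

end CommRing

theorem exists_monic_mem_span_natDegree_le {k : Type*} [Field k] {S : Set k[X]} {d : ℕ}
    (hdeg : ∀ f ∈ S, f.natDegree ≤ d) (hS : Ideal.span S ≠ ⊥) :
    ∃ s ∈ Ideal.span S, s.Monic ∧ s.natDegree ≤ d := by
  obtain ⟨s, hsS, hs0⟩ : ∃ s ∈ S, s ≠ 0 := by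
    contrapose! hS
    exact Ideal.span_eq_bot.mpr hS
  refine ⟨s * C s.leadingCoeff⁻¹, Ideal.mul_mem_right _ _ (Ideal.subset_span hsS),
    monic_mul_leadingCoeff_inv hs0, ?_⟩
  exact (natDegree_mul_leadingCoeff_self_inv s).trans_le (hdeg s hsS)

/-- If a proper ideal of the univariate polynomial ring `k[x]`
generated in degree at most `d` is prime up to `d`, then it is prime. -/
theorem univariate_prime_up_to_d_implies_prime
    (k : Type*) [Field k] (d : ℕ) (hd : 1 ≤ d)
    (I : Ideal (Polynomial k)) (hproper : I ≠ ⊤)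
    (S : Set (Polynomial k)) (hgen : I = Ideal.span S)
    (hdeg : ∀ f ∈ S, f.natDegree ≤ d)
    (hprime : ∀ f g : Polynomial k, f.natDegree ≤ d → g.natDegree ≤ d →
      f * g ∈ I → f ∈ I ∨ g ∈ I) :
    I.IsPrime := by
  subst hgen
  exact univariate_prime_up_to_d_implies_prime_general hd hproper
    (exists_monic_mem_span_natDegree_le hdeg) fun f g hf hg ↦ hprime f g hf.le hg.le
end

section
/- Let k be a field, n ≥ 1 and d ≥ 1 natural numbers, and let I be a proper ideal of the polynomial ring k[x_1,…,x_n] generated by polynomials of total degree at most d. Suppose that for every i with 1 ≤ i ≤ n, the intersection of I with the subring k[x_i] of polynomials in the single variable x_i contains a nonzero element. If I is prime up to n·2·d^(2^n), then I is a prime ideal. -/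
/-!
For a zero-dimensional ideal `I` generated in degree at most `d`, the affine Bézout inequality
`dim k[x] ⧸ I ≤ d ^ n` holds. The images in `k[x] ⧸ I` of the polynomials of degree at most `t`
grow strictly with `t` until they exhaust the quotient, so every residue class has a
representative of degree at most `d ^ n`, and primality only needs to be tested on such
representatives.

The dimension is unchanged by extending scalars, so for the Bézout inequality `k` may be taken
infinite. The univariate elements `pᵢ(xᵢ)` of `I` form a regular sequence, and its entries can be
exchanged one by one for generic linear combinations `g₁, …, gₙ` of the generators. These have
degree at most `d`, so the Hilbert function of `k[x]` at `T + r d` is at least `dim k[x] ⧸ I` times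
the binomial coefficient `(r + n).choose n` for a fixed large `T`; comparing leading coefficients
in `r` gives the bound.
-/

namespace AffineBezout

open MvPolynomial RingTheory.Sequence
open scoped Pointwise TensorProduct

section PrimeUpTo

variable {σ k : Type*} [CommRing k] {I : Ideal (MvPolynomial σ k)}

/-- The ideal `I` is prime up to `b`: it satisfies the defining implication of a prime ideal for
polynomials of total degree at most `b`. Properness is not part of the notion. -/
def IsPrimeUpTo (I : Ideal (MvPolynomial σ k)) (b : ℕ) : Prop :=
  ∀ f g : MvPolynomial σ k, f.totalDegree ≤ b → g.totalDegree ≤ b → f * g ∈ I → f ∈ I ∨ g ∈ I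

lemma IsPrimeUpTo.anti {a b : ℕ} (h : IsPrimeUpTo I b) (hab : a ≤ b) : IsPrimeUpTo I a :=
  fun f g hf hg ↦ h f g (hf.trans hab) (hg.trans hab)

lemma IsPrimeUpTo.isPrime {b : ℕ} (h : IsPrimeUpTo I b) (hI : I ≠ ⊤)
    (hrep : ∀ f, ∃ f', f'.totalDegree ≤ b ∧ Ideal.Quotient.mk I f' = Ideal.Quotient.mk I f) :
    I.IsPrime := by
  refine ⟨hI, fun {f g} hfg ↦ ?_⟩
  obtain ⟨f', hf', hff'⟩ := hrep f
  obtain ⟨g', hg', hgg'⟩ := hrep g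
  simp only [← Ideal.Quotient.eq_zero_iff_mem, map_mul, ← hff', ← hgg'] at hfg ⊢
  rw [← map_mul] at hfg
  simpa only [Ideal.Quotient.eq_zero_iff_mem] using
    h f' g' hf' hg' (Ideal.Quotient.eq_zero_iff_mem.1 hfg)

end PrimeUpTo

section RegularSequence

lemma exists_mem_span_forall_notMem {K V ι : Type*} [Field K] [Infinite K] [AddCommGroup V]
    [Module K V] [Finite ι] (S : Set V) (p : ι → Submodule K V) (hp : ∀ i, ¬ S ⊆ p i) :
    ∃ g ∈ Submodule.span K S, ∀ i, g ∉ p i := by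
  by_contra! hcover
  obtain ⟨i, hi⟩ := Subspace.exists_eq_top_of_iUnion_eq_univ
    (p := fun i ↦ (p i).comap (Submodule.span K S).subtype)
    (Set.eq_univ_of_forall fun w ↦ Set.mem_iUnion.2 (hcover w w.2))
  exact hp i <| Submodule.subset_span.trans (Submodule.comap_subtype_eq_top.1 hi)

/-- A form of prime avoidance: the span of `S` is contained in no associated prime, and a vector
space over an infinite field is not a finite union of proper subspaces. -/
lemma exists_mem_span_forall_isSMulRegular {K R ι : Type*} [Field K] [Infinite K] [CommRing R]
    [Algebra K R] [IsNoetherianRing R] [Finite ι] (S : Set R) (M : ι → Type*)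
    [∀ i, AddCommGroup (M i)] [∀ i, Module R (M i)] [∀ i, Module.Finite R (M i)]
    (h : ∀ i, ∃ a ∈ Ideal.span S, IsSMulRegular (M i) a) :
    ∃ g ∈ Submodule.span K S, ∀ i, IsSMulRegular (M i) g := by
  have regular_iff (i : ι) (r : R) :
      IsSMulRegular (M i) r ↔ ∀ Q ∈ associatedPrimes R (M i), r ∉ Q := by
    have := Set.ext_iff.1 (biUnion_associatedPrimes_eq_compl_regular R (M i)) r
    simpa using (not_congr this).symm
  have (i : ι) : Finite (associatedPrimes R (M i)) := (associatedPrimes.finite R (M i)).to_subtype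
  obtain ⟨g, hgS, hg⟩ := exists_mem_span_forall_notMem (K := K) S
    (fun Q : Σ i, associatedPrimes R (M i) ↦ (Q.2 : Ideal R).restrictScalars K) <| by
      rintro ⟨i, Q, hQ⟩ hSQ
      obtain ⟨a, ha, hreg⟩ := h i
      exact (regular_iff i a).1 hreg Q hQ (Ideal.span_le.2 hSQ ha)
  exact ⟨g, hgS, fun i ↦ (regular_iff i g).2 fun Q hQ ↦ hg ⟨i, Q, hQ⟩⟩

variable {R M : Type*} [CommRing R] [AddCommGroup M] [Module R M]

lemma isSMulRegular_quotient_sup_smul_top_swap {N : Submodule R M} {a g : R}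
    (ha : IsSMulRegular (M ⧸ N) a) (hg : IsSMulRegular (M ⧸ N ⊔ a • ⊤) g) :
    IsSMulRegular (M ⧸ N ⊔ g • ⊤) a := by
  have mem_sup_smul_top {b : R} {x : M} : x ∈ N ⊔ b • ⊤ ↔ ∃ y, x - b • y ∈ N := by
    simp [Submodule.mem_sup, Submodule.mem_smul_pointwise_iff_exists, ← eq_sub_iff_add_eq]
  simp only [isSMulRegular_quotient_iff_mem_of_smul_mem, mem_sup_smul_top] at *
  rintro x ⟨y, hxy⟩
  obtain ⟨z, hyz⟩ := hg y ⟨x, by simpa using N.neg_mem hxy⟩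
  refine ⟨z, ha _ ?_⟩
  convert N.add_mem hxy (N.smul_mem g hyz) using 1
  module

lemma isWeaklyRegular_cons_dropLast {g : R} {rs : List R} (hrs : IsWeaklyRegular M rs)
    (hg : ∀ i < rs.length, IsSMulRegular (M ⧸ (Ideal.ofList (rs.take i) • ⊤ : Submodule R M)) g)
    (hne : rs ≠ []) : IsWeaklyRegular M (g :: rs.dropLast) := by
  refine ⟨fun i hi ↦ ?_⟩
  cases i with
  | zero => exact hg 0 (List.length_pos_of_ne_nil hne)
  | succ i =>
    have hlt : i + 1 < rs.length := by
      rw [List.length_cons, List.length_dropLast] at hi; omega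
    have smul_take_succ : (Ideal.ofList (rs.take (i + 1)) • ⊤ : Submodule R M) =
        Ideal.ofList (rs.take i) • ⊤ ⊔ rs[i] • ⊤ := by
      rw [← List.take_concat_get' _ _ (by omega), Ideal.ofList_append, Ideal.ofList_singleton,
        Submodule.sup_smul, Submodule.ideal_span_singleton_smul]
    have smul_take_cons : (Ideal.ofList ((g :: rs.dropLast).take (i + 1)) • ⊤ : Submodule R M) =
        Ideal.ofList (rs.take i) • ⊤ ⊔ g • ⊤ := by
      rw [List.take_succ_cons, List.dropLast_eq_take, List.take_take, min_eq_left (by omega),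
        Ideal.ofList_cons, Submodule.sup_smul, Submodule.ideal_span_singleton_smul, sup_comm]
    rw [smul_take_cons, List.getElem_cons_succ, List.getElem_dropLast]
    exact isSMulRegular_quotient_sup_smul_top_swap (hrs.regular_mod_prev i (by omega))
      (smul_take_succ ▸ hg (i + 1) hlt)

lemma exists_isWeaklyRegular_mem_span {K : Type*} [Field K] [Infinite K] [Algebra K R]
    [IsNoetherianRing R] [Module.Finite R M] {S : Set R} {rs : List R}
    (hrs : IsWeaklyRegular M rs) (hS : ∀ r ∈ rs, r ∈ Ideal.span S) :
    ∃ gs : List R, gs.length = rs.length ∧ IsWeaklyRegular M gs ∧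
      ∀ g ∈ gs, g ∈ Submodule.span K S := by
  induction hn : rs.length generalizing M rs with
  | zero => exact ⟨[], by simp⟩
  | succ n ih =>
    obtain ⟨g, hgS, hg⟩ := exists_mem_span_forall_isSMulRegular (K := K) S
      (fun i : Fin rs.length ↦ M ⧸ (Ideal.ofList (rs.take i) • ⊤ : Submodule R M))
      fun i ↦ ⟨rs[i], hS _ (List.getElem_mem _), hrs.regular_mod_prev i i.2⟩
    have hcons : IsWeaklyRegular M (g :: rs.dropLast) :=
      isWeaklyRegular_cons_dropLast hrs (fun i hi ↦ hg ⟨i, hi⟩) (by rintro rfl; simp at hn)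
    rw [isWeaklyRegular_cons_iff] at hcons
    obtain ⟨gs, hlen, hgs, hgsS⟩ :=
      ih hcons.2 (fun r hr ↦ hS r (List.mem_of_mem_dropLast hr)) (by simp [hn])
    exact ⟨g :: gs, by simp [hlen], hgs.cons hcons.1, by simpa [hgS] using hgsS⟩

end RegularSequence

section Univariate

variable {R σ : Type*} [CommRing R]

/-- Sending `X i` to a new variable `T` and everything else to its residue class maps `R[x]` to
polynomials in `T` over the quotient; there `p` becomes monic, and `T ↦ X i` recovers the residue
class of a polynomial from its image. -/
lemma isSMulRegular_quotient_aeval_X {i : σ} {T : Set (MvPolynomial σ R)}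
    (hT : T ⊆ supported R {i}ᶜ) {p : Polynomial R} (hp : p.Monic) :
    IsSMulRegular (MvPolynomial σ R ⧸ Ideal.span T)
      (Polynomial.aeval (X i : MvPolynomial σ R) p) := by
  classical
  let π := Ideal.Quotient.mkₐ R (Ideal.span T)
  let φ : MvPolynomial σ R →ₐ[R] Polynomial (MvPolynomial σ R ⧸ Ideal.span T) :=
    aeval fun j ↦ if j = i then Polynomial.X else Polynomial.C (π (X j))
  have φ_X : φ (X i) = Polynomial.X := by simp [φ]
  have eval_φ : ((Polynomial.aeval (π (X i))).restrictScalars R).comp φ = π := by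
    refine algHom_ext fun j ↦ ?_
    by_cases hj : j = i <;> simp [φ, hj]
  have φ_supported : Set.EqOn φ (Polynomial.CAlgHom.comp π) (supported R {i}ᶜ) := by
    refine AlgHom.eqOn_adjoin_iff.2 ?_
    rintro _ ⟨j, hj, rfl⟩
    simp [φ, show j ≠ i from hj]
  have φ_eq_zero : Ideal.span T ≤ RingHom.ker φ := Ideal.span_le.2 fun q hq ↦ by
    have : π q = 0 := Ideal.Quotient.eq_zero_iff_mem.2 (Ideal.subset_span hq)
    simpa [this] using φ_supported (hT hq)
  refine (isSMulRegular_quotient_iff_mem_of_smul_mem _ _).2 fun f hf ↦ ?_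
  have hφf : φ f = 0 := by
    have := φ_eq_zero hf
    rwa [RingHom.mem_ker, smul_eq_mul, map_mul, ← Polynomial.aeval_algHom_apply, φ_X,
      Polynomial.aeval_X_left_eq_map, (hp.map _).mul_right_eq_zero_iff] at this
  have := DFunLike.congr_fun eval_φ f
  refine Ideal.Quotient.eq_zero_iff_mem.1 (this.symm.trans ?_)
  simp [hφf]

lemma isWeaklyRegular_map_aeval_X {p : σ → Polynomial R} (hp : ∀ i, (p i).Monic) {l : List σ}
    (hl : l.Nodup) : IsWeaklyRegular (MvPolynomial σ R)
      (l.map fun i ↦ Polynomial.aeval (X i : MvPolynomial σ R) (p i)) := by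
  refine ⟨fun n hn ↦ ?_⟩
  rw [smul_eq_mul, Ideal.mul_top, List.getElem_map]
  refine isSMulRegular_quotient_aeval_X ?_ (hp _)
  rw [← List.map_take]
  intro q hq
  obtain ⟨j, hj, rfl⟩ := List.mem_map.1 hq
  have hjn : j ≠ l[n]'(by simpa using hn) := by
    rintro rfl
    obtain ⟨m, hm, hmn⟩ := List.mem_take_iff_getElem.1 hj
    have := (hl.getElem_inj_iff).1 hmn
    omega
  have adjoin_le : Algebra.adjoin R {X j} ≤ supported R {l[n]'(by simpa using hn)}ᶜ :=
    Algebra.adjoin_le <| Set.singleton_subset_iff.2 <|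
      Algebra.subset_adjoin (Set.mem_image_of_mem X hjn)
  exact adjoin_le (Polynomial.aeval_mem_adjoin_singleton R (X j))

end Univariate

section DegreeFiltration

variable {R σ : Type*} [CommRing R]

/-- The image in `R[x] ⧸ J` of the polynomials of total degree at most `t`. -/
noncomputable def quotientDegreeLE (J : Ideal (MvPolynomial σ R)) (t : ℕ) :
    Submodule R (MvPolynomial σ R ⧸ J) :=
  (restrictTotalDegree σ R t).map (Ideal.Quotient.mkₐ R J).toLinearMap

instance [Finite σ] (J : Ideal (MvPolynomial σ R)) (t : ℕ) :
    Module.Finite R (quotientDegreeLE J t) := by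
  unfold quotientDegreeLE; infer_instance

lemma mem_quotientDegreeLE {J : Ideal (MvPolynomial σ R)} {t : ℕ} {x : MvPolynomial σ R ⧸ J} :
    x ∈ quotientDegreeLE J t ↔
      ∃ f : MvPolynomial σ R, f.totalDegree ≤ t ∧ Ideal.Quotient.mk J f = x := by
  simp [quotientDegreeLE, mem_restrictTotalDegree]

lemma quotientDegreeLE_mono (J : Ideal (MvPolynomial σ R)) : Monotone (quotientDegreeLE J) := by
  intro s t hst x hx
  obtain ⟨f, hf, rfl⟩ := mem_quotientDegreeLE.1 hx
  exact mem_quotientDegreeLE.2 ⟨f, hf.trans hst, rfl⟩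

lemma quotientDegreeLE_map_factorₐ {J J' : Ideal (MvPolynomial σ R)} (h : J ≤ J') (t : ℕ) :
    (quotientDegreeLE J t).map (Ideal.Quotient.factorₐ R h).toLinearMap =
      quotientDegreeLE J' t := by
  rw [quotientDegreeLE, ← Submodule.map_comp]
  rfl

lemma mul_mem_quotientDegreeLE {J : Ideal (MvPolynomial σ R)} {g : MvPolynomial σ R} {d t : ℕ}
    (hd : g.totalDegree ≤ d) {x : MvPolynomial σ R ⧸ J} (hx : x ∈ quotientDegreeLE J t) :
    Ideal.Quotient.mk J g * x ∈ quotientDegreeLE J (t + d) := by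
  obtain ⟨f, hf, rfl⟩ := mem_quotientDegreeLE.1 hx
  exact mem_quotientDegreeLE.2 ⟨g * f, (totalDegree_mul _ _).trans (by omega), map_mul _ _ _⟩

lemma quotientDegreeLE_eq_top_of_succ_le {J : Ideal (MvPolynomial σ R)} {t : ℕ}
    (h : quotientDegreeLE J (t + 1) ≤ quotientDegreeLE J t) : quotientDegreeLE J t = ⊤ := by
  refine eq_top_iff.2 fun x _ ↦ ?_
  obtain ⟨f, rfl⟩ := Ideal.Quotient.mk_surjective x
  induction f using MvPolynomial.induction_on with
  | C a => exact mem_quotientDegreeLE.2 ⟨C a, by simp, rfl⟩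
  | add p q hp hq => rw [map_add]; exact add_mem (hp trivial) (hq trivial)
  | mul_X p i hp =>
    rw [mul_comm, map_mul]
    exact h (mul_mem_quotientDegreeLE (isHomogeneous_X R i).totalDegree_le (hp trivial))

lemma finrank_restrictTotalDegree [Fintype σ] [Nontrivial R] (t : ℕ) :
    Module.finrank R (restrictTotalDegree σ R t) =
      (t + Fintype.card σ).choose (Fintype.card σ) := by
  classical
  let exponents : Finset (σ →₀ ℕ) :=
    (Finset.range (t + 1)).biUnion fun s ↦ Finset.finsuppAntidiag Finset.univ s
  have coe_exponents : {m : σ →₀ ℕ | (m.sum fun _ e ↦ e) ≤ t} = exponents := by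
    ext m
    simp [exponents, Finsupp.sum_fintype]
  have card_exponents : exponents.card = (t + Fintype.card σ).choose (Fintype.card σ) := by
    rw [Finset.card_biUnion]
    · simp_rw [Finset.card_finsuppAntidiag_nat_eq_multichoose, Finset.card_univ,
        Nat.sum_range_multichoose]
    · refine fun a _ b _ hab ↦ Finset.disjoint_left.2 fun m ha hb ↦ hab ?_
      rw [Finset.mem_finsuppAntidiag] at ha hb
      exact ha.1.symm.trans hb.1
  rw [← card_exponents, restrictTotalDegree, coe_exponents,
    Module.finrank_eq_nat_card_basis (basisRestrictSupport R _)]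
  simp

end DegreeFiltration

section Hilbert

variable {K σ : Type*} [Field K]

/-- The filtration by degree grows strictly until it is exhausted. -/
lemma quotientDegreeLE_finrank_eq_top (J : Ideal (MvPolynomial σ K))
    [Module.Finite K (MvPolynomial σ K ⧸ J)] :
    quotientDegreeLE J (Module.finrank K (MvPolynomial σ K ⧸ J)) = ⊤ := by
  have growth (t : ℕ) :
      quotientDegreeLE J t = ⊤ ∨ t ≤ Module.finrank K (quotientDegreeLE J t) := by
    induction t with
    | zero => exact Or.inr (Nat.zero_le _)
    | succ t ih =>
      have hle := quotientDegreeLE_mono J (Nat.le_add_right t 1)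
      by_cases hstep : quotientDegreeLE J (t + 1) ≤ quotientDegreeLE J t
      · rw [quotientDegreeLE_eq_top_of_succ_le hstep] at hle
        exact Or.inl (top_le_iff.1 hle)
      · refine Or.inr ?_
        have hlt := Submodule.finrank_lt_finrank_of_lt (lt_of_le_not_ge hle hstep)
        rcases ih with htop | hrank
        · simp [htop] at hstep
        · omega
  exact (growth _).elim id fun h ↦
    Submodule.eq_top_of_finrank_eq (le_antisymm (Submodule.finrank_le _) h)

/-- The affine Hilbert function of `K[x] ⧸ J`. -/
noncomputable def affineHilbert (J : Ideal (MvPolynomial σ K)) (t : ℕ) : ℕ :=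
  Module.finrank K (quotientDegreeLE J t)

lemma affineHilbert_mono [Finite σ] (J : Ideal (MvPolynomial σ K)) : Monotone (affineHilbert J) :=
  fun _ _ h ↦ Submodule.finrank_mono (quotientDegreeLE_mono J h)

lemma affineHilbert_anti [Finite σ] {J J' : Ideal (MvPolynomial σ K)} (h : J ≤ J') (t : ℕ) :
    affineHilbert J' t ≤ affineHilbert J t := by
  rw [affineHilbert, ← quotientDegreeLE_map_factorₐ h]
  exact Submodule.finrank_map_le _ _

/-- The kernel of `K[x] ⧸ J → K[x] ⧸ (J + (g))` in degree at most `t + d` contains `g` times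
everything of degree at most `t`, and multiplication by `g` is injective. -/
lemma affineHilbert_sup_span_singleton_add_le [Finite σ] {J : Ideal (MvPolynomial σ K)}
    {g : MvPolynomial σ K} {d : ℕ} (hg : IsSMulRegular (MvPolynomial σ K ⧸ J) g)
    (hd : g.totalDegree ≤ d) (t : ℕ) :
    affineHilbert (J ⊔ Ideal.span {g}) (t + d) + affineHilbert J t ≤ affineHilbert J (t + d) := by
  let A := MvPolynomial σ K ⧸ J
  let π := (Ideal.Quotient.factorₐ K (le_sup_left : J ≤ J ⊔ Ideal.span {g})).toLinearMap
  let μ := LinearMap.mulLeft K (Ideal.Quotient.mk J g)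
  have μ_injective : Function.Injective μ := hg
  have π_μ (x) : π (μ x) = 0 := by
    have : Ideal.Quotient.mk (J ⊔ Ideal.span {g}) g = 0 := Ideal.Quotient.eq_zero_iff_mem.2
      (Ideal.mem_sup_right (Ideal.mem_span_singleton_self g))
    simp [π, μ, this]
  let πt := π.domRestrict (quotientDegreeLE J (t + d))
  have range_πt : LinearMap.range πt = quotientDegreeLE (J ⊔ Ideal.span {g}) (t + d) := by
    rw [LinearMap.range_domRestrict]
    exact quotientDegreeLE_map_factorₐ _ _
  let μt : quotientDegreeLE J t →ₗ[K] quotientDegreeLE J (t + d) :=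
    μ.restrict fun x hx ↦ mul_mem_quotientDegreeLE hd hx
  have le_ker : Module.finrank K (quotientDegreeLE J t) ≤ Module.finrank K (LinearMap.ker πt) :=
    LinearMap.finrank_le_finrank_of_injective
      (f := μt.codRestrict (LinearMap.ker πt) fun x ↦ π_μ x)
      fun x y hxy ↦ Subtype.ext (μ_injective <| congrArg (fun z ↦ (z.1 : A)) hxy)
  have rank_nullity := LinearMap.finrank_range_add_finrank_ker πt
  rw [range_πt] at rank_nullity
  unfold affineHilbert
  omega

/-- Pascal's rule sums up the inequalities obtained from cutting by the entries of `gs`, from the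
last one to the first. -/
lemma affineHilbert_ofList_mul_choose_le [Finite σ] {gs : List (MvPolynomial σ K)} {d : ℕ}
    (hgs : IsWeaklyRegular (MvPolynomial σ K) gs) (hd : ∀ g ∈ gs, g.totalDegree ≤ d) (T : ℕ)
    {i m : ℕ} (hi : i + m = gs.length) (r : ℕ) :
    affineHilbert (Ideal.ofList gs) T * (r + m).choose m ≤
      affineHilbert (Ideal.ofList (gs.take i)) (T + r * d) := by
  induction m generalizing i r with
  | zero =>
    obtain rfl : i = gs.length := hi
    simpa using affineHilbert_mono _ (Nat.le_add_right _ _)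
  | succ m ih =>
    have hlt : i < gs.length := by omega
    have hreg : IsSMulRegular (MvPolynomial σ K ⧸ Ideal.ofList (gs.take i)) gs[i] := by
      have := hgs.regular_mod_prev i hlt
      rwa [smul_eq_mul, Ideal.mul_top] at this
    have hcut := affineHilbert_sup_span_singleton_add_le hreg (hd _ (List.getElem_mem hlt))
    have htake : Ideal.ofList (gs.take (i + 1)) =
        Ideal.ofList (gs.take i) ⊔ Ideal.span {gs[i]} := by
      rw [← List.take_concat_get' _ _ hlt, Ideal.ofList_append, Ideal.ofList_singleton]
    induction r with
    | zero =>
      have : Ideal.ofList (gs.take i) ≤ Ideal.ofList gs :=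
        Ideal.span_mono fun _ ↦ List.mem_of_mem_take
      simpa using affineHilbert_anti this T
    | succ r ihr =>
      have hnext := ih (i := i + 1) (by omega) (r + 1)
      rw [htake] at hnext
      have hpascal : (r + 1 + (m + 1)).choose (m + 1) =
          (r + 1 + m).choose m + (r + (m + 1)).choose (m + 1) := by
        rw [show r + 1 + (m + 1) = (r + 1 + m) + 1 by ring, Nat.choose_succ_succ,
          show r + 1 + m = r + (m + 1) by ring]
      calc _ = affineHilbert (Ideal.ofList gs) T * (r + 1 + m).choose m +
            affineHilbert (Ideal.ofList gs) T * (r + (m + 1)).choose (m + 1) := by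
            rw [hpascal, mul_add]
        _ ≤ affineHilbert (Ideal.ofList (gs.take i) ⊔ Ideal.span {gs[i]}) (T + r * d + d) +
            affineHilbert (Ideal.ofList (gs.take i)) (T + r * d) := by
            rw [add_mul, one_mul, ← add_assoc] at hnext
            exact add_le_add hnext ihr
        _ ≤ _ := by
            rw [add_mul, one_mul, ← add_assoc]
            exact hcut _

lemma affineHilbert_le_choose [Fintype σ] (J : Ideal (MvPolynomial σ K)) (t : ℕ) :
    affineHilbert J t ≤ (t + Fintype.card σ).choose (Fintype.card σ) :=
  (Submodule.finrank_map_le _ _).trans_eq (finrank_restrictTotalDegree t)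

end Hilbert

section GrowthComparison

lemma mul_succ_pow_le_of_mul_choose_le {D m n r : ℕ}
    (h : D * (r + n).choose n ≤ m.choose n) : D * (r + 1) ^ n ≤ m ^ n :=
  calc D * (r + 1) ^ n ≤ D * (r + 1).ascFactorial n := by
        gcongr; exact Nat.pow_succ_le_ascFactorial _ _
    _ = n.factorial * (D * (r + n).choose n) := by
        rw [Nat.ascFactorial_eq_factorial_mul_choose, mul_left_comm]
    _ ≤ n.factorial * m.choose n := by gcongr
    _ = m.descFactorial n := (Nat.descFactorial_eq_factorial_mul_choose _ _).symm
    _ ≤ m ^ n := Nat.descFactorial_le_pow _ _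

lemma le_pow_of_forall_mul_succ_pow_le {D c d n : ℕ}
    (h : ∀ r : ℕ, D * (r + 1) ^ n ≤ (c + r * d) ^ n) : D ≤ d ^ n := by
  have hle (r : ℕ) : (D : ℝ) ≤ (d + c * (1 / ((r : ℝ) + 1))) ^ n := by
    rw [show (d : ℝ) + c * (1 / ((r : ℝ) + 1)) = (c + (r + 1) * d) / (r + 1) by field_simp; ring,
      div_pow, le_div_iff₀ (by positivity)]
    have := (h r).trans (Nat.pow_le_pow_left (m := c + (r + 1) * d) (by gcongr; simp) n)
    exact_mod_cast this
  have hlim : Filter.Tendsto (fun r : ℕ ↦ ((d : ℝ) + c * (1 / ((r : ℝ) + 1))) ^ n)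
      Filter.atTop (nhds (((d : ℝ) + c * 0) ^ n)) :=
    ((tendsto_one_div_add_atTop_nhds_zero_nat.const_mul _).const_add _).pow n
  have := ge_of_tendsto' hlim hle
  rw [mul_zero, add_zero] at this
  exact_mod_cast this

end GrowthComparison

section Finite

variable {k σ : Type*} [Field k]

lemma finite_quotient_of_forall_exists_aeval_X_mem [Finite σ] {I : Ideal (MvPolynomial σ k)}
    (h : ∀ i, ∃ p : Polynomial k, Polynomial.aeval (X i : MvPolynomial σ k) p ∈ I ∧
      Polynomial.aeval (X i : MvPolynomial σ k) p ≠ 0) :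
    Module.Finite k (MvPolynomial σ k ⧸ I) := by
  have isIntegral_X (i : σ) : IsIntegral k (Ideal.Quotient.mkₐ k I (X i)) := by
    obtain ⟨p, hpI, hp⟩ := h i
    refine isAlgebraic_iff_isIntegral.1 ⟨p, by rintro rfl; simp at hp, ?_⟩
    rw [Polynomial.aeval_algHom_apply]
    exact Ideal.Quotient.eq_zero_iff_mem.2 hpI
  have : Algebra.IsIntegral k (MvPolynomial σ k ⧸ I) := by
    refine ⟨fun x ↦ ?_⟩
    obtain ⟨f, rfl⟩ := Ideal.Quotient.mkₐ_surjective k I x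
    induction f using MvPolynomial.induction_on with
    | C a => exact isIntegral_algebraMap
    | add p q hp hq => rw [map_add]; exact hp.add hq
    | mul_X p i hp => rw [map_mul]; exact hp.mul (isIntegral_X i)
  exact Algebra.IsIntegral.finite

end Finite

section BaseChange

variable {k K σ : Type*} [CommRing k] [CommRing K]

lemma totalDegree_map_le (φ : k →+* K) (f : MvPolynomial σ k) :
    (map φ f).totalDegree ≤ f.totalDegree :=
  Finset.sup_mono (support_map_subset _ _)

variable [Algebra k K]

/-- Extension of scalars from `k` to `K` commutes with passing from `k[x]` to `k[x] ⧸ I`. -/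
noncomputable def tensorQuotientAlgEquiv (I : Ideal (MvPolynomial σ k)) :
    K ⊗[k] (MvPolynomial σ k ⧸ I) ≃ₐ[K] MvPolynomial σ K ⧸ I.map (map (algebraMap k K)) :=
  (Algebra.TensorProduct.tensorQuotientEquiv K (MvPolynomial σ k) K I).trans <|
    Ideal.quotientEquivAlg _ _ (algebraTensorAlgEquiv k K) <| by
      rw [← Ideal.map_coe Algebra.TensorProduct.includeRight, Ideal.map_map]
      congr 1
      ext <;> simp

lemma finrank_quotient_map [StrongRankCondition k] [StrongRankCondition K]
    (I : Ideal (MvPolynomial σ k)) [Module.Free k (MvPolynomial σ k ⧸ I)] :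
    Module.finrank K (MvPolynomial σ K ⧸ I.map (map (algebraMap k K))) =
      Module.finrank k (MvPolynomial σ k ⧸ I) := by
  rw [← (tensorQuotientAlgEquiv I).toLinearEquiv.finrank_eq, Module.finrank_baseChange]

end BaseChange

section Bezout

variable {K σ : Type*} [Field K]

lemma exists_isWeaklyRegular_totalDegree_le [Infinite K] [Fintype σ]
    {S : Set (MvPolynomial σ K)} {d : ℕ} (hS : ∀ f ∈ S, f.totalDegree ≤ d)
    [Module.Finite K (MvPolynomial σ K ⧸ Ideal.span S)] :
    ∃ gs : List (MvPolynomial σ K), gs.length = Fintype.card σ ∧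
      IsWeaklyRegular (MvPolynomial σ K) gs ∧
      (∀ g ∈ gs, g.totalDegree ≤ d) ∧ Ideal.ofList gs ≤ Ideal.span S := by
  choose p hp hpS using fun i ↦
    IsIntegral.of_finite K (Ideal.Quotient.mkₐ K (Ideal.span S) (X i))
  have mem_span (i : σ) : Polynomial.aeval (X i : MvPolynomial σ K) (p i) ∈ Ideal.span S := by
    rw [← Ideal.Quotient.eq_zero_iff_mem, ← Ideal.Quotient.mkₐ_eq_mk K,
      ← Polynomial.aeval_algHom_apply]
    exact hpS i
  obtain ⟨gs, hlen, hgs, hgsS⟩ := exists_isWeaklyRegular_mem_span (K := K) (S := S)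
    (isWeaklyRegular_map_aeval_X hp Finset.univ.nodup_toList) (by simpa using mem_span)
  refine ⟨gs, by simpa using hlen, hgs, fun g hg ↦ ?_, Ideal.span_le.2 fun g hg ↦ ?_⟩
  · have hSd : Submodule.span K S ≤ restrictTotalDegree σ K d :=
      Submodule.span_le.2 fun f hf ↦ (mem_restrictTotalDegree _ _ _).2 (hS f hf)
    exact (mem_restrictTotalDegree _ _ _).1 (hSd (hgsS g hg))
  · exact Submodule.span_le_restrictScalars K (MvPolynomial σ K) S (hgsS g hg)

lemma finrank_quotient_span_le_pow_of_infinite [Infinite K] [Fintype σ]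
    {S : Set (MvPolynomial σ K)} {d : ℕ} (hS : ∀ f ∈ S, f.totalDegree ≤ d)
    [Module.Finite K (MvPolynomial σ K ⧸ Ideal.span S)] :
    Module.finrank K (MvPolynomial σ K ⧸ Ideal.span S) ≤ d ^ Fintype.card σ := by
  obtain ⟨gs, hlen, hgs, hgsd, hgsS⟩ := exists_isWeaklyRegular_totalDegree_le hS
  set D := Module.finrank K (MvPolynomial σ K ⧸ Ideal.span S)
  have hDle : D ≤ affineHilbert (Ideal.ofList gs) D := by
    refine le_of_eq_of_le ?_ (affineHilbert_anti hgsS D)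
    rw [affineHilbert, quotientDegreeLE_finrank_eq_top, finrank_top]
  refine le_pow_of_forall_mul_succ_pow_le (c := D + Fintype.card σ) fun r ↦
    mul_succ_pow_le_of_mul_choose_le ?_
  calc D * (r + Fintype.card σ).choose (Fintype.card σ)
      ≤ affineHilbert (Ideal.ofList gs) D * (r + Fintype.card σ).choose (Fintype.card σ) := by
        gcongr
    _ ≤ affineHilbert (Ideal.ofList (gs.take 0)) (D + r * d) :=
        affineHilbert_ofList_mul_choose_le hgs hgsd D (by omega) r
    _ ≤ (D + r * d + Fintype.card σ).choose (Fintype.card σ) := affineHilbert_le_choose _ _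
    _ = (D + Fintype.card σ + r * d).choose (Fintype.card σ) := by rw [add_right_comm]

/-- The affine Bézout bound for zero-dimensional ideals. -/
theorem finrank_quotient_span_le_pow [Fintype σ]
    {S : Set (MvPolynomial σ K)} {d : ℕ} (hS : ∀ f ∈ S, f.totalDegree ≤ d)
    [Module.Finite K (MvPolynomial σ K ⧸ Ideal.span S)] :
    Module.finrank K (MvPolynomial σ K ⧸ Ideal.span S) ≤ d ^ Fintype.card σ := by
  let φ := map (σ := σ) (algebraMap K (AlgebraicClosure K))
  have : Module.Finite (AlgebraicClosure K)
      (MvPolynomial σ (AlgebraicClosure K) ⧸ Ideal.span (φ '' S)) := by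
    rw [← Ideal.map_span]
    exact Module.Finite.equiv (tensorQuotientAlgEquiv _).toLinearEquiv
  rw [← finrank_quotient_map (K := AlgebraicClosure K), Ideal.map_span]
  refine finrank_quotient_span_le_pow_of_infinite ?_
  rintro _ ⟨f, hf, rfl⟩
  exact (totalDegree_map_le _ f).trans (hS f hf)

end Bezout

lemma pow_le_mul_two_mul_pow_two_pow {n d : ℕ} (hn : 1 ≤ n) (hd : 1 ≤ d) :
    d ^ n ≤ n * (2 * d ^ 2 ^ n) :=
  calc d ^ n ≤ d ^ 2 ^ n := Nat.pow_le_pow_right hd Nat.lt_two_pow_self.le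
    _ ≤ n * 2 * d ^ 2 ^ n := Nat.le_mul_of_pos_left _ (by omega)
    _ = n * (2 * d ^ 2 ^ n) := mul_assoc _ _ _

end AffineBezout

open AffineBezout in
theorem zero_dimensional_prime_up_to_bound_implies_prime_general
    {k σ : Type*} [Field k] [Fintype σ] {d : ℕ} {I : Ideal (MvPolynomial σ k)} (hproper : I ≠ ⊤)
    {S : Set (MvPolynomial σ k)} (hgen : I = Ideal.span S) (hdeg : ∀ f ∈ S, f.totalDegree ≤ d)
    (hzero : ∀ i, ∃ p : Polynomial k,
      Polynomial.aeval (MvPolynomial.X i : MvPolynomial σ k) p ∈ I ∧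
      Polynomial.aeval (MvPolynomial.X i : MvPolynomial σ k) p ≠ 0)
    (hprime : IsPrimeUpTo I (d ^ Fintype.card σ)) : I.IsPrime := by
  subst hgen
  have := finite_quotient_of_forall_exists_aeval_X_mem hzero
  refine hprime.isPrime hproper fun f ↦ mem_quotientDegreeLE.1 ?_
  refine quotientDegreeLE_mono _ (finrank_quotient_span_le_pow hdeg) ?_
  rw [quotientDegreeLE_finrank_eq_top]
  trivial

/-- If a proper ideal of `k[x₁,…,xₙ]` generated in degree at most `d`
meets each univariate subring `k[xᵢ]` nontrivially and is prime up to `n·2·d^(2^n)`,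
then it is prime. -/
theorem zero_dimensional_prime_up_to_bound_implies_prime
    (k : Type*) [Field k] (n d : ℕ) (hn : 1 ≤ n) (hd : 1 ≤ d)
    (I : Ideal (MvPolynomial (Fin n) k)) (hproper : I ≠ ⊤)
    (S : Set (MvPolynomial (Fin n) k)) (hgen : I = Ideal.span S)
    (hdeg : ∀ f ∈ S, f.totalDegree ≤ d)
    (hzero : ∀ i : Fin n, ∃ p : Polynomial k,
      Polynomial.aeval (MvPolynomial.X i : MvPolynomial (Fin n) k) p ∈ I ∧
      Polynomial.aeval (MvPolynomial.X i : MvPolynomial (Fin n) k) p ≠ 0)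
    (hprime : ∀ f g : MvPolynomial (Fin n) k,
      f.totalDegree ≤ n * (2 * d ^ 2 ^ n) →
      g.totalDegree ≤ n * (2 * d ^ 2 ^ n) →
      f * g ∈ I → f ∈ I ∨ g ∈ I) :
    I.IsPrime :=
  zero_dimensional_prime_up_to_bound_implies_prime_general hproper hgen hdeg hzero <|
    AffineBezout.IsPrimeUpTo.anti hprime <| by
      simpa using AffineBezout.pow_le_mul_two_mul_pow_two_pow hn hd
end
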